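/- arXiv:0807.3233 — 6 statements merged into one kernel-verified Lean document; each statement's English description precedes it below -/
import Mathlib

section
/- For every real ε > 0 there exists Δ_ε such that the following holds for every integer Δ ≥ Δ_ε. Let H be a finite simple graph with vertex set V and maximum degree at most Δ, in which every edge e with endpoints v and w is assigned a finite list L(e) ⊆ ℤ of colours with |L(e)| = ⌈(3/2 + ε)Δ − (Δ − d(v)) − (Δ − d(w)) − 3Δ^{1/2}⌉. Let J₁ be a graph on the edge set of H with maximum degree at most Δ^{1/2}, and let J₂ be a graph on the edge set of H with maximum degree at most Δ^{1/4}. Suppose that for every set X ⊆ V with |X| odd, ∑_{v∈X}(Δ − d(v)) − e(X, V∖X) ≤ εΔ|X|/10. Then there is a map c assigning to each edge e of H a colour c(e) ∈ L(e) such that any two distinct edges of H sharing an endpoint receive different colours, any two edges joined by an edge of J₁ receive different colours, and any two edges joined by an edge of J₂ receive colours differing by at least Δ^{1/4}. -/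
namespace NB
open Finset
open scoped Classical
set_option linter.unusedSectionVars false

section Prob
variable {ι α : Type} [Fintype ι] [Fintype α]

noncomputable def wt (μ : ι → α → ℝ) (ω : ι → α) : ℝ := ∏ i, μ i (ω i)

noncomputable def Ex (μ : ι → α → ℝ) (f : (ι → α) → ℝ) : ℝ := ∑ ω, wt μ ω * f ω

noncomputable def Av (μ : ι → α → ℝ) (B : Finset ι) (f : (ι → α) → ℝ) (ω : ι → α) : ℝ :=
  Ex μ (fun ω' => f (B.piecewise ω' ω))

noncomputable def Pr (μ : ι → α → ℝ) (A : (ι → α) → Prop) : ℝ :=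
  Ex μ (fun ω => if A ω then 1 else 0)

structure IsP (μ : ι → α → ℝ) : Prop where
  nn : ∀ i a, 0 ≤ μ i a
  one : ∀ i, ∑ a, μ i a = 1

variable {μ : ι → α → ℝ}

lemma wt_nonneg (h : IsP μ) (ω : ι → α) : 0 ≤ wt μ ω :=
  Finset.prod_nonneg fun i _ => h.nn i _

lemma Ex_prod (μ : ι → α → ℝ) (g : ι → α → ℝ) :
    Ex μ (fun ω => ∏ i, g i (ω i)) = ∏ i, ∑ a, μ i a * g i a := by
  rw [Finset.prod_univ_sum]
  simp only [Ex, wt, Fintype.piFinset_univ, Finset.prod_mul_distrib]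

lemma sum_wt (h : IsP μ) : ∑ ω, wt μ ω = 1 := by
  have := Ex_prod μ (fun _ _ => 1)
  simpa [Ex, h.one] using this

lemma Ex_const (h : IsP μ) (c : ℝ) : Ex μ (fun _ => c) = c := by
  simp [Ex, ← Finset.sum_mul, sum_wt h]

lemma Ex_add (f g : (ι → α) → ℝ) : Ex μ (fun ω => f ω + g ω) = Ex μ f + Ex μ g := by
  simp [Ex, mul_add, Finset.sum_add_distrib]

lemma Ex_sub (f g : (ι → α) → ℝ) : Ex μ (fun ω => f ω - g ω) = Ex μ f - Ex μ g := by
  simp [Ex, mul_sub, Finset.sum_sub_distrib]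

lemma Ex_neg (f : (ι → α) → ℝ) : Ex μ (fun ω => - f ω) = - Ex μ f := by
  simp [Ex]

lemma Ex_mul_left (c : ℝ) (f : (ι → α) → ℝ) : Ex μ (fun ω => c * f ω) = c * Ex μ f := by
  simp only [Ex, Finset.mul_sum]
  exact Finset.sum_congr rfl fun _ _ => by ring

lemma Ex_sum {κ : Type*} (s : Finset κ) (f : κ → (ι → α) → ℝ) :
    Ex μ (fun ω => ∑ k ∈ s, f k ω) = ∑ k ∈ s, Ex μ (f k) := by
  simp only [Ex, Finset.mul_sum]
  exact Finset.sum_comm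

lemma Ex_mono (h : IsP μ) {f g : (ι → α) → ℝ} (hfg : ∀ ω, f ω ≤ g ω) : Ex μ f ≤ Ex μ g :=
  Finset.sum_le_sum fun ω _ => mul_le_mul_of_nonneg_left (hfg ω) (wt_nonneg h ω)

lemma Ex_nonneg (h : IsP μ) {f : (ι → α) → ℝ} (hf : ∀ ω, 0 ≤ f ω) : 0 ≤ Ex μ f :=
  Finset.sum_nonneg fun ω _ => mul_nonneg (wt_nonneg h ω) (hf ω)

lemma Pr_nonneg (h : IsP μ) (A : (ι → α) → Prop) : 0 ≤ Pr μ A :=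
  Ex_nonneg h fun ω => by split_ifs <;> norm_num

lemma Pr_mono (h : IsP μ) {A B : (ι → α) → Prop} (hAB : ∀ ω, A ω → B ω) : Pr μ A ≤ Pr μ B :=
  Ex_mono h fun ω => by
    have := hAB ω
    split_ifs <;> simp_all

lemma Pr_or (h : IsP μ) (A B : (ι → α) → Prop) :
    Pr μ (fun ω => A ω ∨ B ω) ≤ Pr μ A + Pr μ B := by
  unfold Pr
  rw [← Ex_add]
  refine Ex_mono h fun ω => ?_
  by_cases h1 : A ω <;> by_cases h2 : B ω <;> simp [h1, h2]

lemma Pr_exists (h : IsP μ) {κ : Type*} (s : Finset κ) (A : κ → (ι → α) → Prop) :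
    Pr μ (fun ω => ∃ k ∈ s, A k ω) ≤ ∑ k ∈ s, Pr μ (A k) := by
  unfold Pr
  rw [← Ex_sum]
  refine Ex_mono h fun ω => ?_
  split_ifs with h1
  · obtain ⟨k, hk, hA⟩ := h1
    have := Finset.single_le_sum (f := fun k => if A k ω then (1:ℝ) else 0)
      (fun i _ => by split_ifs <;> norm_num) hk
    simpa [hA] using this
  · exact Finset.sum_nonneg fun i _ => by split_ifs <;> norm_num

/-- the swapping lemma -/
lemma swap (h : IsP μ) (B : Finset ι) (F : (ι → α) → ℝ) :
    ∑ ω, ∑ ω', wt μ ω * wt μ ω' * F (B.piecewise ω' ω) = Ex μ F := by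
  have h1 : ∀ ω ω' : ι → α, wt μ (B.piecewise ω' ω) * wt μ (B.piecewise ω ω') =
      wt μ ω * wt μ ω' := by
    intro ω ω'
    simp only [wt, ← Finset.prod_mul_distrib]
    refine Finset.prod_congr rfl fun i _ => ?_
    by_cases hi : i ∈ B <;> simp [hi, mul_comm]
  have h2 : ∀ ω ω' : ι → α, B.piecewise (B.piecewise ω ω') (B.piecewise ω' ω) = ω := by
    intro ω ω'
    ext i
    by_cases hi : i ∈ B <;> simp [hi]
  have h3 : Function.Involutive (fun q : (ι → α) × (ι → α) =>
      (B.piecewise q.2 q.1, B.piecewise q.1 q.2)) := by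
    intro q
    simp [h2]
  rw [← Fintype.sum_prod_type' (fun ω ω' => wt μ ω * wt μ ω' * F (B.piecewise ω' ω))]
  rw [← Equiv.sum_comp h3.toPerm]
  simp only [Function.Involutive.coe_toPerm, h1, h2]
  rw [Fintype.sum_prod_type]
  simp only [Ex]
  refine Finset.sum_congr rfl fun ω _ => ?_
  rw [← Finset.sum_mul, ← Finset.mul_sum, sum_wt h, mul_one]

lemma swap' (h : IsP μ) (B : Finset ι) (F : (ι → α) → ℝ) :
    Ex μ (fun ω => Ex μ (fun ω' => F (B.piecewise ω' ω))) = Ex μ F := by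
  rw [← swap h B F]
  simp only [Ex, Finset.mul_sum, mul_assoc]

lemma Ex_Av (h : IsP μ) (B : Finset ι) (f : (ι → α) → ℝ) : Ex μ (Av μ B f) = Ex μ f :=
  swap' h B f

lemma Av_Av (h : IsP μ) (B B' : Finset ι) (f : (ι → α) → ℝ) :
    Av μ B (Av μ B' f) = Av μ (B ∪ B') f := by
  funext ω
  unfold Av
  rw [← swap' h B' (fun ω' => f ((B ∪ B').piecewise ω' ω))]
  congr 1; funext ω1; congr 1; funext ω2; congr 1
  ext i
  by_cases h1 : i ∈ B <;> by_cases h2 : i ∈ B' <;> simp [h1, h2]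

lemma Av_empty (h : IsP μ) (f : (ι → α) → ℝ) : Av μ ∅ f = f := by
  funext ω
  simp [Av, Ex_const h]

lemma Av_univ (f : (ι → α) → ℝ) (ω) : Av μ univ f ω = Ex μ f := by
  simp [Av]

/-- `f` depends only on the coordinates in `S`. -/
def Dep {β : Type*} (f : (ι → α) → β) (S : Finset ι) : Prop :=
  ∀ ω ω' : ι → α, (∀ i ∈ S, ω i = ω' i) → f ω = f ω'

lemma Ex_indep (h : IsP μ) {f g : (ι → α) → ℝ} {S T : Finset ι} (hST : Disjoint S T)
    (hf : Dep f S) (hg : Dep g T) : Ex μ (fun ω => f ω * g ω) = Ex μ f * Ex μ g := by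
  rw [← swap' h T]
  have : ∀ ω ω', f (T.piecewise ω' ω) * g (T.piecewise ω' ω) = f ω * g ω' := by
    intro ω ω'
    congr 1
    · apply hf; intro i hi
      simp [Finset.disjoint_left.mp hST hi]
    · apply hg; intro i hi
      simp [hi]
  simp only [this, Ex_mul_left]
  simp only [mul_comm _ (Ex μ g), Ex_mul_left]

lemma Pr_indep (h : IsP μ) {A B : (ι → α) → Prop} {S T : Finset ι} (hST : Disjoint S T)
    (hA : Dep A S) (hB : Dep B T) : Pr μ (fun ω => A ω ∧ B ω) = Pr μ A * Pr μ B := by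
  unfold Pr
  rw [← Ex_indep h hST (S := S) (T := T)]
  · congr 1; funext ω
    by_cases h1 : A ω <;> by_cases h2 : B ω <;> simp [h1, h2]
  · intro ω ω' hh; simp only [hA ω ω' hh]
  · intro ω ω' hh; simp only [hB ω ω' hh]

lemma Dep.mono {β : Type*} {f : (ι → α) → β} {S T : Finset ι} (hf : Dep f S) (hST : S ⊆ T) :
    Dep f T := fun ω ω' hh => hf ω ω' fun i hi => hh i (hST hi)

lemma Ex_indep_prod (h : IsP μ) {κ : Type} [Fintype κ] (l : ι → κ) (T : Finset κ)
    (g : κ → (ι → α) → ℝ)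
    (hg : ∀ k ∈ T, Dep (g k) (univ.filter fun i => l i = k)) :
    Ex μ (fun ω => ∏ k ∈ T, g k ω) = ∏ k ∈ T, Ex μ (g k) := by
  induction T using Finset.induction_on with
  | empty => simp [Ex_const h]
  | insert k T hk ih =>
    simp only [Finset.prod_insert hk]
    rw [Ex_indep h (S := univ.filter fun i => l i = k) (T := univ.filter fun i => l i ∈ T),
      ih fun k hk' => hg k (Finset.mem_insert_of_mem hk')]
    · rw [Finset.disjoint_left]
      intro i; simp only [mem_filter, mem_univ, true_and]
      rintro rfl; exact hk
    · exact hg k (Finset.mem_insert_self _ _)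
    · intro ω ω' hh
      refine Finset.prod_congr rfl fun k' hk' => hg k' (Finset.mem_insert_of_mem hk') _ _ ?_
      intro i hi
      apply hh
      simp only [mem_filter, mem_univ, true_and] at hi ⊢
      rw [hi]; exact hk'

/-- one block -/
lemma block (h : IsP μ) (B : Finset ι) (g : (ι → α) → ℝ) (Q : (ι → α) → Prop) (a q t : ℝ)
    (ha : 0 ≤ a) (ht : 0 ≤ t) (hta : t * a ≤ 1)
    (h1 : ∀ ω ω' : ι → α, (∀ i ∉ B, ω i = ω' i) → |g ω - g ω'| ≤ a)
    (h2 : ∀ ω ω' : ι → α, (∀ i ∉ B, ω i = ω' i) → Q ω → Q ω' → g ω = g ω')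
    (hQ : Dep Q B) (hq : Pr μ (fun ω => ¬ Q ω) ≤ q) (ω : ι → α) :
    Av μ B (fun ω => Real.exp (t * g ω)) ω ≤ Real.exp (t ^ 2 * (a ^ 2 * q) + t * Av μ B g ω) := by
  set m := Av μ B g ω with hm
  set G : (ι → α) → ℝ := fun ω' => g (B.piecewise ω' ω) with hG
  have hGm : Ex μ G = m := rfl
  have hGG : ∀ ω1 ω2, |G ω1 - G ω2| ≤ a := by
    intro ω1 ω2
    apply h1
    intro i hi
    simp [hi]
  have hY : ∀ ω', |G ω' - m| ≤ a := by
    intro ω'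
    have h3 : G ω' - m = Ex μ (fun ω2 => G ω' - G ω2) := by
      rw [Ex_sub, Ex_const h, hGm]
    rw [h3, abs_le]
    constructor
    · rw [← Ex_const h (-a)]
      exact Ex_mono h fun ω2 => (abs_le.mp (hGG ω' ω2)).1
    · rw [← Ex_const h a]
      exact Ex_mono h fun ω2 => (abs_le.mp (hGG ω' ω2)).2
  have hvar : Ex μ (fun ω' => (G ω' - m) ^ 2) ≤ a ^ 2 * q := by
    by_cases hex : ∃ ω0, Q ω0
    · obtain ⟨ω0, hω0⟩ := hex
      have e1 : Ex μ (fun ω' => (G ω' - m) ^ 2) ≤ Ex μ (fun ω' => (G ω' - G ω0) ^ 2) := by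
        have e2 : Ex μ (fun ω' => (G ω' - G ω0) ^ 2) =
            Ex μ (fun ω' => (G ω' - m) ^ 2) + (m - G ω0) ^ 2 := by
          have : ∀ ω', (G ω' - G ω0) ^ 2 = (G ω' - m) ^ 2 +
              (2 * (m - G ω0) * (G ω' - m) + (m - G ω0) ^ 2) := fun ω' => by ring
          simp only [this]
          rw [Ex_add, Ex_add, Ex_mul_left, Ex_sub, Ex_const h, Ex_const h, hGm]
          ring
        rw [e2]
        nlinarith [sq_nonneg (m - G ω0)]
      refine e1.trans ?_
      have e3 : Ex μ (fun ω' => (G ω' - G ω0) ^ 2) ≤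
          Ex μ (fun ω' => a ^ 2 * (if ¬ Q ω' then 1 else 0)) := by
        refine Ex_mono h fun ω' => ?_
        by_cases hq' : Q ω'
        · have : G ω' = G ω0 := by
            apply h2
            · intro i hi; simp [hi]
            · rwa [hQ _ ω' (fun i hi => by simp [hi])]
            · rwa [hQ _ ω0 (fun i hi => by simp [hi])]
          simp [this, hq']
        · have := hGG ω' ω0
          simp only [hq', not_false_eq_true, if_true, mul_one]
          exact sq_le_sq' (abs_le.mp this).1 (abs_le.mp this).2
      refine e3.trans ?_
      rw [Ex_mul_left]
      refine mul_le_mul_of_nonneg_left (le_trans (le_of_eq ?_) hq) (sq_nonneg a)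
      unfold Pr
      congr 1; funext ω'
      by_cases hh : Q ω' <;> simp [hh]
    · push Not at hex
      have : (1:ℝ) ≤ q := by
        refine le_trans ?_ hq
        simp [Pr, hex, Ex_const h]
      have e3 : Ex μ (fun ω' => (G ω' - m) ^ 2) ≤ Ex μ (fun _ => a ^ 2) :=
        Ex_mono h fun ω' => sq_le_sq' (abs_le.mp (hY ω')).1 (abs_le.mp (hY ω')).2
      rw [Ex_const h] at e3
      nlinarith [sq_nonneg a]
  have hexp : ∀ x : ℝ, |x| ≤ 1 → Real.exp x ≤ 1 + x + x ^ 2 := by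
    intro x hx
    have := (abs_le.mp (Real.abs_exp_sub_one_sub_id_le hx)).2
    linarith
  have main : Ex μ (fun ω' => Real.exp (t * G ω')) ≤
      Ex μ (fun ω' => Real.exp (t * m) * (1 + t * (G ω' - m) + t ^ 2 * (G ω' - m) ^ 2)) := by
    refine Ex_mono h fun ω' => ?_
    have e1 : t * G ω' = t * m + t * (G ω' - m) := by ring
    rw [e1, Real.exp_add]
    refine mul_le_mul_of_nonneg_left ?_ (Real.exp_pos _).le
    have := hexp (t * (G ω' - m)) (by
      rw [abs_mul, abs_of_nonneg ht]
      exact (mul_le_mul_of_nonneg_left (hY ω') ht).trans hta)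
    rw [mul_pow] at this
    exact this
  refine main.trans ?_
  rw [Ex_mul_left, Ex_add, Ex_add, Ex_const h, Ex_mul_left, Ex_mul_left, Ex_sub, Ex_const h, hGm,
    Real.exp_add, mul_comm]
  refine mul_le_mul_of_nonneg_right ?_ (Real.exp_pos _).le
  have := Real.add_one_le_exp (t ^ 2 * (a ^ 2 * q))
  nlinarith [mul_le_mul_of_nonneg_left hvar (sq_nonneg t)]

structure Conc (μ : ι → α → ℝ) {κ : Type} [Fintype κ] (l : ι → κ) (f : (ι → α) → ℝ)
    (Q : κ → (ι → α) → Prop) (a q : κ → ℝ) : Prop where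
  a0 : ∀ k, 0 ≤ a k
  h1 : ∀ k, ∀ ω ω' : ι → α, (∀ i, l i ≠ k → ω i = ω' i) → |f ω - f ω'| ≤ a k
  h2 : ∀ k, ∀ ω ω' : ι → α, (∀ i, l i ≠ k → ω i = ω' i) → Q k ω → Q k ω' → f ω = f ω'
  hQ : ∀ k, Dep (Q k) (univ.filter fun i => l i = k)
  hq : ∀ k, Pr μ (fun ω => ¬ Q k ω) ≤ q k

lemma mgf (h : IsP μ) {κ : Type} [Fintype κ] {l : ι → κ} {f : (ι → α) → ℝ}
    {Q : κ → (ι → α) → Prop} {a q : κ → ℝ} (hc : Conc μ l f Q a q) {t : ℝ} (ht : 0 ≤ t)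
    (hta : ∀ k, t * a k ≤ 1) :
    Ex μ (fun ω => Real.exp (t * f ω)) ≤
      Real.exp (t ^ 2 * (∑ k, a k ^ 2 * q k) + t * Ex μ f) := by
  have key : ∀ S : Finset κ, Ex μ (fun ω => Real.exp (t * f ω)) ≤
      Real.exp (t ^ 2 * (∑ k ∈ S, a k ^ 2 * q k)) *
        Ex μ (fun ω => Real.exp (t * Av μ (univ.filter fun i => l i ∈ S) f ω)) := by
    intro S
    induction S using Finset.induction_on with
    | empty => simp [Av_empty h]
    | insert k S hk ih =>
      refine ih.trans ?_
      set BS := univ.filter fun i => l i ∈ S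
      set Bk := univ.filter fun i => l i = k
      have hU : (univ.filter fun i => l i ∈ insert k S) = Bk ∪ BS := by
        ext i; simp [BS, Bk]
      rw [hU, Finset.sum_insert hk, mul_add, Real.exp_add, mul_comm (Real.exp _) (Real.exp _),
        mul_assoc]
      refine mul_le_mul_of_nonneg_left ?_ (Real.exp_pos _).le
      rw [← Ex_Av h Bk (fun ω => Real.exp (t * Av μ BS f ω)), ← Av_Av h, ← Ex_mul_left]
      refine Ex_mono h fun ω => ?_
      rw [← Real.exp_add]
      have hagree : ∀ ω ω' ω'' : ι → α, (∀ i ∉ Bk, ω i = ω' i) →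
          (∀ i, l i ≠ k → BS.piecewise ω'' ω i = BS.piecewise ω'' ω' i) := by
        intro ω ω' ω'' hh i hi
        by_cases hb : i ∈ BS
        · simp [hb]
        · simp [hb]; exact hh i (by simp [Bk, hi])
      have hQ' : ∀ ω ω'' : ι → α, Q k (BS.piecewise ω'' ω) = Q k ω := by
        intro ω ω''
        apply hc.hQ k
        intro i hi
        have : i ∉ BS := by
          simp only [BS, mem_filter, mem_univ, true_and] at hi ⊢
          rw [hi]; exact hk
        simp [this]
      refine block h Bk (Av μ BS f) (Q k) (a k) (q k) t (hc.a0 k) ht (hta k) ?_ ?_ (hc.hQ k)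
        (hc.hq k) ω
      · intro ω ω' hh
        have e : Av μ BS f ω - Av μ BS f ω' =
            Ex μ (fun ω'' => f (BS.piecewise ω'' ω) - f (BS.piecewise ω'' ω')) := by
          rw [Ex_sub]; rfl
        rw [e, abs_le]
        constructor
        · rw [← Ex_const h (-a k)]
          exact Ex_mono h fun ω2 => (abs_le.mp (hc.h1 k _ _ (hagree ω ω' ω2 hh))).1
        · rw [← Ex_const h (a k)]
          exact Ex_mono h fun ω2 => (abs_le.mp (hc.h1 k _ _ (hagree ω ω' ω2 hh))).2
      · intro ω ω' hh hq1 hq2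
        unfold Av
        congr 1; funext ω2
        exact hc.h2 k _ _ (hagree ω ω' ω2 hh) (by rwa [hQ']) (by rwa [hQ'])
  have := key univ
  simp only [mem_univ, filter_true, Av_univ, Ex_const h] at this
  rwa [← Real.exp_add] at this

lemma tail (h : IsP μ) {κ : Type} [Fintype κ] {l : ι → κ} {f : (ι → α) → ℝ}
    {Q : κ → (ι → α) → Prop} {a q : κ → ℝ} (hc : Conc μ l f Q a q) {t lam K : ℝ} (ht : 0 ≤ t)
    (hta : ∀ k, t * a k ≤ 1) (hK : t ^ 2 * (∑ k, a k ^ 2 * q k) ≤ K) :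
    Pr μ (fun ω => Ex μ f + lam < f ω) ≤ Real.exp (K - t * lam) := by
  have e1 : Pr μ (fun ω => Ex μ f + lam < f ω) ≤
      Ex μ (fun ω => Real.exp (- (t * (Ex μ f + lam))) * Real.exp (t * f ω)) := by
    refine Ex_mono h fun ω => ?_
    rw [← Real.exp_add]
    split_ifs with hh
    · rw [← Real.exp_zero]
      apply Real.exp_le_exp.mpr
      nlinarith
    · exact (Real.exp_pos _).le
  refine e1.trans ?_
  rw [Ex_mul_left]
  refine (mul_le_mul_of_nonneg_left (mgf h hc ht hta) (Real.exp_pos _).le).trans ?_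
  rw [← Real.exp_add]
  apply Real.exp_le_exp.mpr
  linarith

/-- Lovász local lemma -/
lemma lll (h : IsP μ) {I : Type} [Fintype I] (A : I → (ι → α) → Prop) (S : I → Finset ι)
    (hA : ∀ i, Dep (A i) (S i))
    (hs : ∀ i, ∑ j ∈ univ.filter (fun j => j = i ∨ ¬ Disjoint (S i) (S j)), Pr μ (A j) ≤ 1 / 4) :
    ∃ ω, 0 < wt μ ω ∧ ∀ i, ¬ A i ω := by
  set N : Finset I → (ι → α) → Prop := fun T ω => ∀ j ∈ T, ¬ A j ω with hN
  have hsplit : ∀ (T : Finset I) (i : I), Pr μ (N T) = Pr μ (N (insert i T)) +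
      Pr μ (fun ω => A i ω ∧ N T ω) := by
    intro T i
    unfold Pr
    rw [← Ex_add]
    congr 1; funext ω
    by_cases h1 : A i ω <;> by_cases h2 : N T ω <;> simp [h1, hN]
  have hquart : ∀ i, Pr μ (A i) ≤ 1 / 4 := by
    intro i
    refine le_trans ?_ (hs i)
    exact Finset.single_le_sum (f := fun j => Pr μ (A j)) (fun j _ => Pr_nonneg h _) (by simp)
  have key : ∀ n : ℕ, ∀ T : Finset I, T.card ≤ n → ∀ i ∉ T,
      Pr μ (fun ω => A i ω ∧ N T ω) ≤ 2 * Pr μ (A i) * Pr μ (N T) := by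
    intro n
    induction n with
    | zero =>
      intro T hT i hi
      have : T = ∅ := Finset.card_eq_zero.mp (by omega)
      subst this
      have h1 : Pr μ (N ∅) = 1 := by simp [Pr, hN, Ex_const h]
      have h2 : Pr μ (fun ω => A i ω ∧ N ∅ ω) = Pr μ (A i) := by simp [Pr, hN]
      rw [h1, h2]
      linarith [Pr_nonneg h (A i)]
    | succ n ih =>
      intro T hT i hi
      set T1 := T.filter (fun j => ¬ Disjoint (S i) (S j)) with hT1
      set T2 := T.filter (fun j => Disjoint (S i) (S j)) with hT2
      have hind : Pr μ (fun ω => A i ω ∧ N T2 ω) = Pr μ (A i) * Pr μ (N T2) := by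
        apply Pr_indep h (S := S i) (T := T2.biUnion S)
        · rw [Finset.disjoint_biUnion_right]
          intro j hj
          exact (Finset.mem_filter.mp hj).2
        · exact hA i
        · intro ω ω' hh
          simp only [hN, eq_iff_iff]
          refine forall₂_congr fun j hj => ?_
          rw [hA j ω ω' fun i hi => hh i (Finset.mem_biUnion.mpr ⟨j, hj, hi⟩)]
      have hle : Pr μ (fun ω => A i ω ∧ N T ω) ≤ Pr μ (A i) * Pr μ (N T2) := by
        rw [← hind]
        refine Pr_mono h fun ω hω => ⟨hω.1, fun j hj => hω.2 j (Finset.mem_filter.mp hj).1⟩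
      have hlow : Pr μ (N T2) ≤ 2 * Pr μ (N T) := by
        by_cases hemp : T1 = ∅
        · have : T2 = T := by
            rw [hT2, Finset.filter_eq_self]
            intro j hj
            by_contra hcon
            have : j ∈ T1 := Finset.mem_filter.mpr ⟨hj, hcon⟩
            simp [hemp] at this
          rw [this]
          linarith [Pr_nonneg h (N T)]
        · have hcard : T1.card + T2.card = T.card := by
            rw [add_comm]
            exact Finset.card_filter_add_card_filter_not (s := T) (fun j => Disjoint (S i) (S j))
          have hpos : 0 < T1.card := Finset.card_pos.mpr (Finset.nonempty_iff_ne_empty.mpr hemp)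
          have e1 : Pr μ (N T2) ≤ Pr μ (N T) + ∑ j ∈ T1, Pr μ (fun ω => A j ω ∧ N T2 ω) := by
            refine le_trans ?_ (add_le_add le_rfl (Pr_exists h T1 _))
            refine le_trans ?_ (Pr_or h _ _)
            refine Pr_mono h fun ω hω => ?_
            by_cases hh : ∃ k ∈ T1, A k ω
            · right
              obtain ⟨k, hk, hk'⟩ := hh
              exact ⟨k, hk, hk', hω⟩
            · left
              push Not at hh
              intro j hj
              by_cases hd : Disjoint (S i) (S j)
              · exact hω j (Finset.mem_filter.mpr ⟨hj, hd⟩)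
              · exact hh j (Finset.mem_filter.mpr ⟨hj, hd⟩)
          have e2 : ∑ j ∈ T1, Pr μ (fun ω => A j ω ∧ N T2 ω) ≤
              ∑ j ∈ T1, 2 * Pr μ (A j) * Pr μ (N T2) := by
            refine Finset.sum_le_sum fun j hj => ih T2 (by omega) j ?_
            intro hj2
            exact (Finset.mem_filter.mp hj).2 (Finset.mem_filter.mp hj2).2
          have e3 : ∑ j ∈ T1, Pr μ (A j) ≤ 1 / 4 := by
            refine le_trans ?_ (hs i)
            refine Finset.sum_le_sum_of_subset_of_nonneg ?_ fun j _ _ => Pr_nonneg h _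
            intro j hj
            simp [(Finset.mem_filter.mp hj).2]
          rw [← Finset.sum_mul, ← Finset.mul_sum] at e2
          nlinarith [Pr_nonneg h (N T2)]
      have := mul_le_mul_of_nonneg_left hlow (Pr_nonneg h (A i))
      linarith
  have hpos : ∀ T : Finset I, 0 < Pr μ (N T) := by
    intro T
    induction T using Finset.induction_on with
    | empty =>
      have h1 : Pr μ (N ∅) = 1 := by simp [Pr, hN, Ex_const h]
      rw [h1]; norm_num
    | insert i T hi ih =>
      have h1 := hsplit T i
      have h2 := key _ T le_rfl i hi
      have h3 := mul_le_mul_of_nonneg_right (hquart i) ih.le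
      linarith
  by_contra hcon
  push Not at hcon
  have h1 := hpos univ
  have h2 : Pr μ (N univ) ≤ 0 := by
    unfold Pr Ex
    refine Finset.sum_nonpos fun ω _ => ?_
    by_cases hw : 0 < wt μ ω
    · obtain ⟨i, hi⟩ := hcon ω hw
      have : ¬ N univ ω := fun hh => hh i (Finset.mem_univ _) hi
      simp [this]
    · have : wt μ ω = 0 := le_antisymm (not_lt.mp hw) (wt_nonneg h ω)
      simp [this]
  linarith

end Prob
end NB


namespace NB
open Finset
open scoped Classical
set_option linter.unusedSectionVars false
set_option linter.unusedVariables false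

structure Setup (V E C : Type) [Fintype V] [Fintype E] [Fintype C] (h N : ℝ) where
  inc : V → E → Prop
  oth : V → E → V
  J1 : E → E → Prop
  J2 : E → E → Prop
  R : C → C → Prop
  L : E → Finset C
  hh : 1 ≤ h
  inc_ex : ∀ e, ∃ v, inc v e
  inc_oth : ∀ v e, inc v e → inc (oth v e) e
  oth_ne : ∀ v e, inc v e → oth v e ≠ v
  inc_two : ∀ v w e, inc v e → inc w e → w = v ∨ w = oth v e
  inc_lin : ∀ v w e f, v ≠ w → inc v e → inc w e → inc v f → inc w f → e = f
  J1s : ∀ e f, J1 e f → J1 f e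
  J2s : ∀ e f, J2 e f → J2 f e
  J1i : ∀ e, ¬ J1 e e
  J2i : ∀ e, ¬ J2 e e
  Rs : ∀ c d, R c d → R d c
  deg : ∀ v, ((univ.filter (inc v)).card : ℝ) ≤ h ^ 8
  J1d : ∀ e, ((univ.filter (J1 e)).card : ℝ) ≤ h ^ 4
  J2d : ∀ e, ((univ.filter (J2 e)).card : ℝ) ≤ h ^ 2
  Rd : ∀ c, ((univ.filter (R c)).card : ℝ) ≤ 3 * h ^ 2
  Ld : ∀ e, ((L e).card : ℝ) ≤ N * h ^ 8

section
variable {V E C : Type} [Fintype V] [Fintype E] [Fintype C] {h N : ℝ}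

namespace Setup
variable (s : Setup V E C h N)

noncomputable def star (v : V) : Finset E := univ.filter (s.inc v)
def adj (e f : E) : Prop := e ≠ f ∧ ∃ v, s.inc v e ∧ s.inc v f
noncomputable def nb (e : E) : Finset E := univ.filter (s.adj e)
noncomputable def far (v : V) (e : E) : Finset E := univ.filter fun f => f ≠ e ∧ s.inc (s.oth v e) f
noncomputable def near (v : V) (e : E) : Finset E := univ.filter fun f => f ≠ e ∧ s.inc v f
def sp (e : E) (c : C) (f : E) (d : C) : Prop := (s.J1 e f ∧ c = d) ∨ (s.J2 e f ∧ s.R c d)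
def conf (e : E) (c : C) (f : E) (d : C) : Prop := (s.adj e f ∧ c = d) ∨ s.sp e c f d

lemma adj_symm {e f : E} (hh : s.adj e f) : s.adj f e := by
  obtain ⟨h1, v, h2, h3⟩ := hh
  exact ⟨h1.symm, v, h3, h2⟩

lemma sp_symm {e f : E} {c d : C} (hh : s.sp e c f d) : s.sp f d e c := by
  rcases hh with ⟨h1, h2⟩ | ⟨h1, h2⟩
  · exact Or.inl ⟨s.J1s _ _ h1, h2.symm⟩
  · exact Or.inr ⟨s.J2s _ _ h1, s.Rs _ _ h2⟩

lemma conf_symm {e f : E} {c d : C} (hh : s.conf e c f d) : s.conf f d e c := by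
  rcases hh with ⟨h1, h2⟩ | h1
  · exact Or.inl ⟨s.adj_symm h1, h2.symm⟩
  · exact Or.inr (s.sp_symm h1)

lemma sp_ne {e f : E} {c d : C} (hh : s.sp e c f d) : e ≠ f := by
  rintro rfl
  rcases hh with ⟨h1, h2⟩ | ⟨h1, h2⟩
  · exact s.J1i _ h1
  · exact s.J2i _ h1

lemma conf_ne {e f : E} {c d : C} (hh : s.conf e c f d) : e ≠ f := by
  rcases hh with ⟨h1, h2⟩ | h1
  · exact h1.1
  · exact s.sp_ne h1

lemma nb_eq {v : V} {e : E} (hv : s.inc v e) : s.nb e = s.near v e ∪ s.far v e := by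
  ext f
  simp only [nb, adj, near, far, mem_filter, mem_univ, true_and, mem_union]
  constructor
  · rintro ⟨h1, w, h2, h3⟩
    rcases s.inc_two v w e hv h2 with rfl | rfl
    · exact Or.inl ⟨h1.symm, h3⟩
    · exact Or.inr ⟨h1.symm, h3⟩
  · rintro (⟨h1, h2⟩ | ⟨h1, h2⟩)
    · exact ⟨h1.symm, v, hv, h2⟩
    · exact ⟨h1.symm, _, s.inc_oth v e hv, h2⟩

lemma near_far {v : V} {e : E} (hv : s.inc v e) : Disjoint (s.near v e) (s.far v e) := by
  rw [Finset.disjoint_left]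
  intro f
  simp only [near, far, mem_filter, mem_univ, true_and]
  rintro ⟨h1, h2⟩ ⟨_, h3⟩
  exact h1 (s.inc_lin v (s.oth v e) f e (s.oth_ne v e hv).symm h2 h3 hv (s.inc_oth v e hv))

end Setup

structure St (s : Setup V E C h N) (U : Finset E) (x : E → C → ℝ) (r B : ℝ) : Prop where
  nn : ∀ e c, 0 ≤ x e c
  le : ∀ e c, x e c ≤ B / h ^ 8
  sum : ∀ e ∈ U, ∑ c, x e c = 1
  zero : ∀ e ∉ U, ∀ c, x e c = 0
  supp : ∀ e c, x e c ≠ 0 → c ∈ s.L e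
  deg : ∀ v c, ∑ e ∈ s.star v, x e c ≤ r

def Claim (s : Setup V E C h N) (U : Finset E) (x : E → C → ℝ) : Prop :=
  ∃ φ : E → C, (∀ e ∈ U, x e (φ e) ≠ 0) ∧
    ∀ e ∈ U, ∀ f ∈ U, ¬ s.conf e (φ e) f (φ f)

variable {s : Setup V E C h N} {U : Finset E} {x : E → C → ℝ} {r B : ℝ}

lemma St.sum_le (st : St s U x r B) (e : E) : ∑ c, x e c ≤ 1 := by
  by_cases he : e ∈ U
  · exact (st.sum e he).le
  · simp [st.zero e he]

lemma St.le_one (st : St s U x r B) (e : E) (c : C) : x e c ≤ 1 :=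
  (Finset.single_le_sum (fun c _ => st.nn e c) (Finset.mem_univ c)).trans (st.sum_le e)

lemma St.near_le (st : St s U x r B) (v : V) (e : E) (c : C) : ∑ f ∈ s.near v e, x f c ≤ r := by
  refine le_trans (Finset.sum_le_sum_of_subset_of_nonneg ?_ fun f _ _ => st.nn f c) (st.deg v c)
  intro f
  simp only [Setup.near, Setup.star, mem_filter, mem_univ, true_and]
  exact fun h => h.2

lemma St.far_le (st : St s U x r B) (v : V) (e : E) (c : C) : ∑ f ∈ s.far v e, x f c ≤ r :=
  st.near_le (s.oth v e) e c

lemma St.nb_le (st : St s U x r B) (e : E) (c : C) : ∑ f ∈ s.nb e, x f c ≤ 2 * r := by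
  obtain ⟨v, hv⟩ := s.inc_ex e
  rw [s.nb_eq hv, Finset.sum_union (s.near_far hv)]
  linarith [st.near_le v e c, st.far_le v e c]

lemma sp_card (s : Setup V E C h N) (e : E) (c : C) :
    ((univ.filter fun q : E × C => s.sp e c q.1 q.2).card : ℝ) ≤ 4 * h ^ 4 := by
  have hsub : (univ.filter fun q : E × C => s.sp e c q.1 q.2) ⊆
      (univ.filter (s.J1 e)) ×ˢ {c} ∪ (univ.filter (s.J2 e)) ×ˢ (univ.filter (s.R c)) := by
    intro q hq
    have hq := (mem_filter.mp hq).2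
    rw [mem_union, mem_product, mem_product, mem_singleton]
    rcases hq with ⟨h1, h2⟩ | ⟨h1, h2⟩
    · exact Or.inl ⟨by simpa using h1, h2.symm⟩
    · exact Or.inr ⟨by simpa using h1, by simpa using h2⟩
  have h1 := (Finset.card_le_card hsub).trans (Finset.card_union_le _ _)
  rw [Finset.card_product, Finset.card_product, Finset.card_singleton] at h1
  have h2 : ((univ.filter fun q : E × C => s.sp e c q.1 q.2).card : ℝ) ≤
    (univ.filter (s.J1 e)).card * 1 + (univ.filter (s.J2 e)).card * (univ.filter (s.R c)).card := by
    exact_mod_cast h1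
  have h3 := s.J1d e
  have h4 := mul_le_mul (s.J2d e) (s.Rd c) (by positivity) (by positivity)
  nlinarith

lemma St.sp_le (st : St s U x r B) (e : E) (c : C) :
    ∑ q ∈ univ.filter (fun q : E × C => s.sp e c q.1 q.2), x q.1 q.2 ≤ 4 * B / h ^ 4 := by
  have h0 : 0 < h := lt_of_lt_of_le one_pos s.hh
  refine (Finset.sum_le_card_nsmul _ _ (B / h ^ 8) fun q _ => st.le _ _).trans ?_
  rw [nsmul_eq_mul]
  have hB : 0 ≤ B / h ^ 8 := (st.nn e c).trans (st.le e c)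
  refine (mul_le_mul_of_nonneg_right (sp_card s e c) hB).trans (le_of_eq ?_)
  field_simp

lemma St.conf_le (st : St s U x r B) (e : E) (c : C) :
    ∑ q ∈ univ.filter (fun q : E × C => s.conf e c q.1 q.2), x q.1 q.2 ≤ 2 * r + 4 * B / h ^ 4 := by
  have hsub : (univ.filter fun q : E × C => s.conf e c q.1 q.2) ⊆
      (s.nb e) ×ˢ {c} ∪ univ.filter (fun q : E × C => s.sp e c q.1 q.2) := by
    intro q hq
    have hq := (mem_filter.mp hq).2
    rw [mem_union, mem_product, mem_singleton]
    rcases hq with ⟨h1, h2⟩ | h1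
    · exact Or.inl ⟨by simpa [Setup.nb] using h1, h2.symm⟩
    · exact Or.inr (mem_filter.mpr ⟨mem_univ _, h1⟩)
  refine (Finset.sum_le_sum_of_subset_of_nonneg hsub fun q _ _ => st.nn _ _).trans ?_
  refine (le_of_le_of_eq (le_add_of_nonneg_right ?_) (Finset.sum_union_inter)).trans ?_
  · exact Finset.sum_nonneg fun q _ => st.nn _ _
  · refine add_le_add ?_ (st.sp_le e c)
    rw [Finset.sum_product]
    simpa using st.nb_le e c

lemma final [Nonempty C] (st : St s U x r B) (hr : r ≤ 1 / 100) (hB : 4 * B / h ^ 4 ≤ 1 / 100) :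
    Claim s U x := by
  obtain ⟨c0⟩ := (inferInstance : Nonempty C)
  set μ : E → C → ℝ := fun e c => if e ∈ U then x e c else if c = c0 then 1 else 0 with hμ
  have hP : IsP μ := by
    constructor
    · intro e c
      simp only [hμ]
      split_ifs
      · exact st.nn e c
      · norm_num
      · norm_num
    · intro e
      by_cases he : e ∈ U
      · simp [hμ, he, st.sum e he]
      · simp [hμ, he]
  set A : (E × C) × (E × C) → (E → C) → Prop := fun i ω =>
    i.1.1 ∈ U ∧ i.2.1 ∈ U ∧ s.conf i.1.1 i.1.2 i.2.1 i.2.2 ∧ ω i.1.1 = i.1.2 ∧ ω i.2.1 = i.2.2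
    with hA
  set S : (E × C) × (E × C) → Finset E := fun i => {i.1.1, i.2.1} with hS
  set W : (E × C) → (E × C) → ℝ := fun a b =>
    if s.conf a.1 a.2 b.1 b.2 then x a.1 a.2 * x b.1 b.2 else 0 with hW
  have hW0 : ∀ a b, 0 ≤ W a b := by
    intro a b; simp only [hW]; split_ifs
    · exact mul_nonneg (st.nn _ _) (st.nn _ _)
    · exact le_rfl
  have hWs : ∀ a b, W a b = W b a := by
    intro a b
    simp only [hW]
    by_cases h1 : s.conf a.1 a.2 b.1 b.2
    · simp [h1, s.conf_symm h1, mul_comm]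
    · have : ¬ s.conf b.1 b.2 a.1 a.2 := fun h => h1 (s.conf_symm h)
      simp [h1, this]
  have hPr : ∀ i, Pr μ (A i) ≤ W i.1 i.2 := by
    rintro ⟨⟨e, c⟩, ⟨f, d⟩⟩
    by_cases hgood : e ∈ U ∧ f ∈ U ∧ s.conf e c f d
    · obtain ⟨he, hf, hc⟩ := hgood
      have hne := s.conf_ne hc
      have h1 : Pr μ (A ((e, c), (f, d))) =
          Pr μ (fun ω => ω e = c) * Pr μ (fun ω => ω f = d) := by
        rw [← Pr_indep hP (S := {e}) (T := {f})]
        · simp [hA, he, hf, hc]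
        · simpa using hne
        · intro ω ω' hh; simp [hh e (by simp)]
        · intro ω ω' hh; simp [hh f (by simp)]
      have h2 : ∀ e ∈ U, ∀ c, Pr μ (fun ω => ω e = c) = x e c := by
        intro e he c
        have := Ex_prod μ (fun i a => if i = e then (if a = c then 1 else 0) else 1)
        have e2 : ∀ ω : E → C, (∏ i, if i = e then (if ω i = c then (1:ℝ) else 0) else 1) =
            if ω e = c then 1 else 0 := by
          intro ω
          rw [Finset.prod_ite_eq' univ e (fun i => if ω i = c then (1:ℝ) else 0)]
          simp
        simp only [e2] at this
        rw [Pr, this]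
        rw [Finset.prod_eq_single e]
        · simp [hμ, he]
        · intro i _ hi
          simp [hi, hP.one]
        · simp
      rw [h1, h2 e he, h2 f hf]
      simp [hW, hc]
    · have : Pr μ (A ((e, c), (f, d))) = 0 := by
        have : ∀ ω, ¬ A ((e, c), (f, d)) ω := fun ω hω => hgood ⟨hω.1, hω.2.1, hω.2.2.1⟩
        simp [Pr, this, Ex]
      rw [this]; exact hW0 _ _
  have hG : ∀ e0, ∑ i : (E × C) × (E × C), (if i.1.1 = e0 then W i.1 i.2 else 0) ≤ 3 / 100 := by
    intro e0
    rw [Fintype.sum_prod_type, Fintype.sum_prod_type]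
    have : ∀ e c, ∑ b : E × C, (if e = e0 then W (e, c) b else 0) =
        if e = e0 then x e c * ∑ q ∈ univ.filter (fun q : E × C => s.conf e c q.1 q.2), x q.1 q.2
          else 0 := by
      intro e c
      split_ifs
      · rw [Finset.mul_sum, Finset.sum_filter]
      · simp
    simp only [this]
    rw [Finset.sum_comm]
    simp only [Finset.sum_ite_eq', Finset.mem_univ, if_true]
    calc _ ≤ ∑ c, x e0 c * (3 / 100) := by
          refine Finset.sum_le_sum fun c _ => mul_le_mul_of_nonneg_left ?_ (st.nn _ _)
          linarith [st.conf_le e0 c]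
      _ ≤ _ := by
          rw [← Finset.sum_mul]
          linarith [st.sum_le e0]
  have hG' : ∀ e0, ∑ i : (E × C) × (E × C), (if i.2.1 = e0 then W i.1 i.2 else 0) ≤ 3 / 100 := by
    intro e0
    refine le_trans (le_of_eq (Fintype.sum_equiv (Equiv.prodComm _ _) _ _ ?_)) (hG e0)
    rintro ⟨a, b⟩
    by_cases hi : b.1 = e0
    · exact (if_pos hi).trans ((hWs a b).trans (if_pos hi).symm)
    · exact (if_neg hi).trans (if_neg hi).symm
  obtain ⟨ω, hω, hno⟩ := lll hP A S (by
    intro i ω ω' hh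
    have h1 := hh i.1.1 (by simp [hS])
    have h2 := hh i.2.1 (by simp [hS])
    simp only [hA, h1, h2]) (by
    rintro ⟨⟨e, c⟩, ⟨f, d⟩⟩
    have h1 := hG e
    have h2 := hG f
    have h3 := hG' e
    have h4 := hG' f
    rw [Finset.sum_filter]
    refine le_trans (Finset.sum_le_sum
        (g := fun i : (E × C) × (E × C) => ((if i.1.1 = e then W i.1 i.2 else 0) +
          (if i.1.1 = f then W i.1 i.2 else 0) + (if i.2.1 = e then W i.1 i.2 else 0) +
          (if i.2.1 = f then W i.1 i.2 else 0))) fun j _ => ?_) ?_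
    · have p1 : 0 ≤ (if j.1.1 = e then W j.1 j.2 else 0) := by
        split_ifs
        · exact hW0 _ _
        · exact le_rfl
      have p2 : 0 ≤ (if j.1.1 = f then W j.1 j.2 else 0) := by
        split_ifs
        · exact hW0 _ _
        · exact le_rfl
      have p3 : 0 ≤ (if j.2.1 = e then W j.1 j.2 else 0) := by
        split_ifs
        · exact hW0 _ _
        · exact le_rfl
      have p4 : 0 ≤ (if j.2.1 = f then W j.1 j.2 else 0) := by
        split_ifs
        · exact hW0 _ _
        · exact le_rfl
      by_cases hcond : j = ((e, c), (f, d)) ∨ ¬ Disjoint (S ((e, c), (f, d))) (S j)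
      · rw [if_pos hcond]
        have hj : j.1.1 = e ∨ j.1.1 = f ∨ j.2.1 = e ∨ j.2.1 = f := by
          rcases hcond with rfl | hd
          · simp
          · rw [Finset.not_disjoint_iff] at hd
            obtain ⟨g, hg1, hg2⟩ := hd
            simp only [hS, mem_insert, mem_singleton] at hg1 hg2
            rcases hg1 with rfl | rfl <;> rcases hg2 with h | h <;> simp [h]
        have hp := hPr j
        rcases hj with hj | hj | hj | hj
        · rw [if_pos hj] at p1 ⊢; linarith
        · rw [if_pos hj] at p2 ⊢; linarith
        · rw [if_pos hj] at p3 ⊢; linarith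
        · rw [if_pos hj] at p4 ⊢; linarith
      · rw [if_neg hcond]; linarith
    rw [Finset.sum_add_distrib, Finset.sum_add_distrib, Finset.sum_add_distrib]
    linarith)
  refine ⟨ω, ?_, ?_⟩
  · intro e he h0
    have : wt μ ω = 0 := Finset.prod_eq_zero (Finset.mem_univ e) (by simp [hμ, he, h0])
    linarith
  · intro e he f hf hc
    exact hno ((e, ω e), (f, ω f)) ⟨he, hf, hc, rfl, rfl⟩

end
end NB


namespace NB
open Finset
open scoped Classical
set_option linter.unusedSectionVars false
set_option linter.unusedVariables false

section
variable {ι α : Type} [Fintype ι] [Fintype α] {μ : ι → α → ℝ}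

lemma Ex_single (hP : IsP μ) (i : ι) (G : α → ℝ) :
    Ex μ (fun ω => G (ω i)) = ∑ a, μ i a * G a := by
  have := Ex_prod μ (fun j a => if j = i then G a else 1)
  have e2 : ∀ ω : ι → α, (∏ j, if j = i then G (ω j) else 1) = G (ω i) := by
    intro ω
    rw [Finset.prod_ite_eq' univ i (fun j => G (ω j))]
    simp
  simp only [e2] at this
  rw [this, Finset.prod_eq_single i]
  · simp
  · intro j _ hj
    simp [hj, hP.one]
  · simp

lemma prod_ge {κ : Type*} (T : Finset κ) (a : κ → ℝ) (h0 : ∀ i ∈ T, 0 ≤ a i) (h1 : ∀ i ∈ T, a i ≤ 1) :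
    1 - ∑ i ∈ T, a i ≤ ∏ i ∈ T, (1 - a i) := by
  induction T using Finset.induction_on with
  | empty => simp
  | insert k T hk ih =>
    rw [Finset.sum_insert hk, Finset.prod_insert hk]
    have e1 := ih (fun i hi => h0 i (mem_insert_of_mem hi)) (fun i hi => h1 i (mem_insert_of_mem hi))
    have e2 := h0 k (mem_insert_self _ _)
    have e3 := h1 k (mem_insert_self _ _)
    have e4 : 0 ≤ ∑ i ∈ T, a i := Finset.sum_nonneg fun i hi => h0 i (mem_insert_of_mem hi)
    have := mul_le_mul_of_nonneg_left e1 (sub_nonneg.mpr e3)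
    nlinarith
end

section
variable {V E C : Type} [Fintype V] [Fintype E] [Fintype C] {h N : ℝ}

noncomputable def mu (p : ℝ) (x : E → C → ℝ) : E × C → Bool → ℝ :=
  fun i b => if b = true then p * x i.1 i.2 else 1 - p * x i.1 i.2

noncomputable def bt (ω : E × C → Bool) (e : E) (c : C) : ℝ := if ω (e, c) = true then 1 else 0

noncomputable def cl (T : Finset E) (c : C) (ω : E × C → Bool) : ℝ := ∏ f ∈ T, (1 - bt ω f c)

noncomputable def kp (p : ℝ) (x : E → C → ℝ) (T : Finset E) (c : C) : ℝ := ∏ f ∈ T, (1 - p * x f c)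

noncomputable def mt (s : Setup V E C h N) (e : E) (c : C) (ω : E × C → Bool) : ℝ :=
  bt ω e c * cl (s.nb e) c ω

noncomputable def FF (s : Setup V E C h N) (p : ℝ) (x : E → C → ℝ) (e : E) (ω : E × C → Bool) : ℝ :=
  ∑ c, x e c * (cl (s.nb e) c ω / kp p x (s.nb e) c)

noncomputable def tm (s : Setup V E C h N) (e : E) (v : V) (c : C) (ω : E × C → Bool) : ℝ :=
  cl (s.far v e) c ω * ∏ c' ∈ univ.erase c, (1 - mt s e c' ω)

noncomputable def HH (s : Setup V E C h N) (p : ℝ) (x : E → C → ℝ) (v : V) (c : C)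
    (ω : E × C → Bool) : ℝ :=
  ∑ e ∈ s.star v, x e c / kp p x (s.far v e) c * tm s e v c ω

def bad (s : Setup V E C h N) (v : V) (c : C) (ω : E × C → Bool) : Prop :=
  ∃ e, s.inc v e ∧ ω (e, c) = true ∧ ∃ f c', s.sp e c f c' ∧ ω (f, c') = true

noncomputable def ZZ (s : Setup V E C h N) (v : V) (ω : E × C → Bool) : ℝ :=
  (∑ c, if bad s v c ω then 1 else 0) / h ^ 8

lemma bt_nn (ω : E × C → Bool) (e : E) (c : C) : 0 ≤ bt ω e c := by
  unfold bt; split_ifs <;> norm_num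
lemma bt_le (ω : E × C → Bool) (e : E) (c : C) : bt ω e c ≤ 1 := by
  unfold bt; split_ifs <;> norm_num
lemma cl_nn (T : Finset E) (c : C) (ω : E × C → Bool) : 0 ≤ cl T c ω :=
  Finset.prod_nonneg fun f _ => by linarith [bt_le ω f c]
lemma cl_le (T : Finset E) (c : C) (ω : E × C → Bool) : cl T c ω ≤ 1 :=
  Finset.prod_le_one (fun f _ => by linarith [bt_le ω f c]) fun f _ => by linarith [bt_nn ω f c]
lemma mt_nn (s : Setup V E C h N) (e : E) (c : C) (ω : E × C → Bool) : 0 ≤ mt s e c ω :=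
  mul_nonneg (bt_nn _ _ _) (cl_nn _ _ _)
lemma mt_le (s : Setup V E C h N) (e : E) (c : C) (ω : E × C → Bool) : mt s e c ω ≤ 1 :=
  mul_le_one₀ (bt_le _ _ _) (cl_nn _ _ _) (cl_le _ _ _)

lemma cl_zero {T : Finset E} {c : C} {ω : E × C → Bool} {f : E} (hf : f ∈ T) (hω : ω (f, c) = true) :
    cl T c ω = 0 := Finset.prod_eq_zero hf (by simp [bt, hω])

lemma cl_dep (T : Finset E) (c : C) (ω ω' : E × C → Bool) (hh : ∀ f ∈ T, ω (f, c) = ω' (f, c)) :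
    cl T c ω = cl T c ω' := Finset.prod_congr rfl fun f hf => by simp [bt, hh f hf]

lemma mt_dep (s : Setup V E C h N) (e : E) (c : C) (ω ω' : E × C → Bool)
    (h0 : ω (e, c) = ω' (e, c)) (hh : ∀ f ∈ s.nb e, ω (f, c) = ω' (f, c)) :
    mt s e c ω = mt s e c ω' := by
  unfold mt
  rw [cl_dep _ c ω ω' hh]
  simp [bt, h0]

lemma mt_col (s : Setup V E C h N) (e : E) (c : C) (ω ω' : E × C → Bool)
    (hh : ∀ f, ω (f, c) = ω' (f, c)) : mt s e c ω = mt s e c ω' :=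
  mt_dep s e c ω ω' (hh e) fun f _ => hh f

lemma tm_nn (s : Setup V E C h N) (e : E) (v : V) (c : C) (ω : E × C → Bool) :
    0 ≤ tm s e v c ω :=
  mul_nonneg (cl_nn _ _ _) (Finset.prod_nonneg fun c' _ => by linarith [mt_le s e c' ω])
lemma tm_le (s : Setup V E C h N) (e : E) (v : V) (c : C) (ω : E × C → Bool) :
    tm s e v c ω ≤ 1 :=
  mul_le_one₀ (cl_le _ _ _) (Finset.prod_nonneg fun c' _ => by linarith [mt_le s e c' ω])
    (Finset.prod_le_one (fun c' _ => by linarith [mt_le s e c' ω])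
      fun c' _ => by linarith [mt_nn s e c' ω])

/-- matched edges at a vertex -/
lemma mt_one (s : Setup V E C h N) (e : E) (c : C) (ω : E × C → Bool) (hne : mt s e c ω ≠ 0) :
    ω (e, c) = true ∧ (∀ f ∈ s.nb e, ω (f, c) = false) ∧ mt s e c ω = 1 := by
  have h1 : ω (e, c) = true := by
    by_contra hcon
    exact hne (by simp [mt, bt, hcon])
  have h2 : ∀ f ∈ s.nb e, ω (f, c) = false := by
    intro f hf
    by_contra hcon
    exact hne (by rw [mt, cl_zero hf (by simpa using hcon), mul_zero])
  refine ⟨h1, h2, ?_⟩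
  have : cl (s.nb e) c ω = 1 := Finset.prod_eq_one fun f hf => by simp [bt, h2 f hf]
  rw [mt, this]; simp [bt, h1]

lemma mt_uniq (s : Setup V E C h N) {v : V} {e f : E} {c : C} {ω : E × C → Bool}
    (he : s.inc v e) (hf : s.inc v f) (h1 : mt s e c ω ≠ 0) (h2 : mt s f c ω ≠ 0) : e = f := by
  by_contra hne
  have a1 := (mt_one s e c ω h1).2.1 f (by
    simp only [Setup.nb, mem_filter, mem_univ, true_and]; exact ⟨hne, v, he, hf⟩)
  have a2 := (mt_one s f c ω h2).1
  rw [a1] at a2; exact absurd a2 (by simp)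

lemma mt_sum (s : Setup V E C h N) (v : V) (c : C) (ω : E × C → Bool) :
    ∑ e ∈ s.star v, mt s e c ω ≤ 1 := by
  by_cases hex : ∃ e ∈ s.star v, mt s e c ω ≠ 0
  · obtain ⟨e, he, hne⟩ := hex
    rw [Finset.sum_eq_single_of_mem e he]
    · exact mt_le s e c ω
    · intro f hf hfe
      by_contra hcon
      simp only [Setup.star, mem_filter, mem_univ, true_and] at he hf
      exact hfe (mt_uniq s hf he hcon hne)
  · push Not at hex
    rw [Finset.sum_eq_zero hex]; norm_num

variable {s : Setup V E C h N} {U : Finset E} {x : E → C → ℝ} {r B p : ℝ}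

structure Par (s : Setup V E C h N) (U : Finset E) (x : E → C → ℝ) (r B p : ℝ) : Prop where
  st : St s U x r B
  p0 : 0 ≤ p
  p4 : p ≤ 1 / 4
  r0 : 0 ≤ r
  r1 : r ≤ 1
  B1 : 1 ≤ B
  Bh : 4 * B ≤ h

lemma Par.h0 (P : Par s U x r B p) : 0 < h := lt_of_lt_of_le one_pos s.hh

lemma Par.px (P : Par s U x r B p) (e : E) (c : C) : 0 ≤ p * x e c ∧ p * x e c ≤ 1 := by
  have h1 := P.st.nn e c
  have h2 := P.st.le_one e c
  have := P.p0
  have := P.p4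
  constructor
  · positivity
  · nlinarith

lemma Par.isP (P : Par s U x r B p) : IsP (mu p x) := by
  constructor
  · intro i b
    have := P.px i.1 i.2
    unfold mu; split_ifs <;> linarith
  · intro i
    simp [mu]

lemma Par.kp_nb (P : Par s U x r B p) (e : E) (c : C) : 1 - 2 * p * r ≤ kp p x (s.nb e) c := by
  refine le_trans ?_ (prod_ge _ _ (fun f _ => (P.px f c).1) fun f _ => (P.px f c).2)
  rw [← Finset.mul_sum]
  nlinarith [P.st.nb_le e c, P.p0]

lemma Par.kp_nb2 (P : Par s U x r B p) (e : E) (c : C) : 1 / 2 ≤ kp p x (s.nb e) c := by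
  refine le_trans ?_ (P.kp_nb e c)
  nlinarith [P.p0, P.p4, P.r0, P.r1]

lemma kp_le_one (P : Par s U x r B p) (T : Finset E) (c : C) : kp p x T c ≤ 1 :=
  Finset.prod_le_one (fun f _ => by linarith [(P.px f c).2]) fun f _ => by linarith [(P.px f c).1]

lemma Par.kp_near (P : Par s U x r B p) (v : V) (e : E) (c : C) :
    1 - p * r ≤ kp p x (s.near v e) c := by
  refine le_trans ?_ (prod_ge _ _ (fun f _ => (P.px f c).1) fun f _ => (P.px f c).2)
  rw [← Finset.mul_sum]
  nlinarith [P.st.near_le v e c, P.p0]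

lemma Par.kp_far (P : Par s U x r B p) (v : V) (e : E) (c : C) :
    1 - p * r ≤ kp p x (s.far v e) c := P.kp_near (s.oth v e) e c

lemma Par.kp_far2 (P : Par s U x r B p) (v : V) (e : E) (c : C) :
    1 / 2 ≤ kp p x (s.far v e) c := by
  refine le_trans ?_ (P.kp_far v e c)
  nlinarith [P.p0, P.p4, P.r0, P.r1]

lemma Par.Ex_bt (P : Par s U x r B p) (e : E) (c : C) :
    Ex (mu p x) (fun ω => bt ω e c) = p * x e c := by
  have := Ex_single P.isP (e, c) (fun b => if b = true then (1:ℝ) else 0)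
  unfold bt
  rw [this]
  simp [mu]

lemma Par.Ex_cl (P : Par s U x r B p) (T : Finset E) (c : C) :
    Ex (mu p x) (cl T c) = kp p x T c := by
  have := Ex_indep_prod P.isP Prod.fst T (fun f ω => 1 - bt ω f c) (by
    intro f _ ω ω' hh
    have := hh (f, c) (by simp)
    simp [bt, this])
  unfold cl kp
  rw [this]
  refine Finset.prod_congr rfl fun f _ => ?_
  rw [Ex_sub, Ex_const P.isP, P.Ex_bt]

lemma nb_self (s : Setup V E C h N) (e : E) : e ∉ s.nb e := by
  simp [Setup.nb, Setup.adj]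

lemma Par.Ex_mt (P : Par s U x r B p) (e : E) (c : C) :
    Ex (mu p x) (mt s e c) = p * x e c * kp p x (s.nb e) c := by
  unfold mt
  rw [Ex_indep P.isP (S := univ.filter fun i => i.1 = e) (T := univ.filter fun i => i.1 ∈ s.nb e),
    P.Ex_bt, P.Ex_cl]
  · rw [Finset.disjoint_left]
    intro i hi hi'
    simp only [mem_filter, mem_univ, true_and] at hi hi'
    rw [hi] at hi'
    exact nb_self s e hi'
  · intro ω ω' hh
    have := hh (e, c) (by simp)
    simp [bt, this]
  · intro ω ω' hh
    exact cl_dep _ c _ _ fun f hf => hh (f, c) (by simpa using hf)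

lemma Par.Ex_FF (P : Par s U x r B p) (e : E) (he : e ∈ U) : Ex (mu p x) (FF s p x e) = 1 := by
  unfold FF
  rw [Ex_sum, ← P.st.sum e he]
  refine Finset.sum_congr rfl fun c _ => ?_
  have hk := P.kp_nb2 e c
  have : ∀ ω, x e c * (cl (s.nb e) c ω / kp p x (s.nb e) c) =
    x e c / kp p x (s.nb e) c * cl (s.nb e) c ω := fun ω => by ring
  simp only [this]
  rw [Ex_mul_left, P.Ex_cl]
  field_simp

lemma abs_sub_le01 {a b M : ℝ} (h1 : 0 ≤ a) (h2 : a ≤ M) (h3 : 0 ≤ b) (h4 : b ≤ M) :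
    |a - b| ≤ M := by
  rw [abs_le]; constructor <;> linarith

lemma Par.sum_sq (P : Par s U x r B p) (e : E) : ∑ c, (2 * x e c) ^ 2 ≤ 4 * B / h ^ 8 := by
  have h0 := P.h0
  calc ∑ c, (2 * x e c) ^ 2 ≤ ∑ c, 4 * B / h ^ 8 * x e c := by
        refine Finset.sum_le_sum fun c _ => ?_
        have h1 := P.st.le e c
        have h2 := P.st.nn e c
        have := mul_le_mul_of_nonneg_right h1 h2
        calc (2 * x e c) ^ 2 = 4 * (x e c * x e c) := by ring
          _ ≤ 4 * (B / h ^ 8 * x e c) := by linarith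
          _ = _ := by ring
    _ = 4 * B / h ^ 8 * ∑ c, x e c := by rw [Finset.mul_sum]
    _ ≤ _ := by
        have hB : 0 ≤ 4 * B / h ^ 8 := by have := P.B1; positivity
        exact mul_le_of_le_one_right hB (P.st.sum_le e)

/-- powers of `h` dominate -/
lemma Par.hpow (P : Par s U x r B p) (n : ℕ) (hn : 1 ≤ n) : 4 * B / h ^ n ≤ 1 := by
  have h0 := P.h0
  rw [div_le_one (by positivity)]
  exact P.Bh.trans (le_self_pow₀ s.hh (by omega))

lemma Par.tail_FF (P : Par s U x r B p) (e : E) (he : e ∈ U) (δ : ℝ) :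
    Pr (mu p x) (fun ω => FF s p x e ω < 1 - δ) ≤ Real.exp (1 - h * δ) := by
  have h0 := P.h0
  have hB := P.B1
  have hc : Conc (mu p x) Prod.snd (fun ω => - FF s p x e ω) (fun _ _ => False)
      (fun c => 2 * x e c) (fun _ => 1) := by
    refine ⟨fun c => by linarith [P.st.nn e c], ?_, ?_, ?_, ?_⟩
    · intro c ω ω' hh
      have e1 : -FF s p x e ω - -FF s p x e ω' = x e c * (cl (s.nb e) c ω' / kp p x (s.nb e) c) -
          x e c * (cl (s.nb e) c ω / kp p x (s.nb e) c) := by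
        rw [neg_sub_neg]
        unfold FF
        rw [← Finset.sum_sub_distrib]
        rw [Finset.sum_eq_single c]
        · intro c' _ hc'
          rw [cl_dep (s.nb e) c' ω' ω fun f _ => (hh (f, c') hc').symm, sub_self]
        · simp
      rw [e1]
      have hk := P.kp_nb2 e c
      have hb : ∀ ω, cl (s.nb e) c ω / kp p x (s.nb e) c ≤ 2 := by
        intro ω
        rw [div_le_iff₀ (by linarith)]
        linarith [cl_le (s.nb e) c ω]
      have hb0 : ∀ ω, 0 ≤ cl (s.nb e) c ω / kp p x (s.nb e) c := fun ω =>
        div_nonneg (cl_nn _ _ _) (by linarith)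
      have hx := P.st.nn e c
      apply abs_sub_le01
      · exact mul_nonneg hx (hb0 _)
      · nlinarith [hb ω']
      · exact mul_nonneg hx (hb0 _)
      · nlinarith [hb ω]
    · intro c ω ω' _ hF; exact hF.elim
    · intro c ω ω' _; rfl
    · intro c; simp [Pr, Ex_const P.isP]
  have := tail P.isP hc (t := h) (lam := δ) (K := 1) h0.le ?_ ?_
  · refine le_trans (Pr_mono P.isP fun ω hω => ?_) this
    rw [Ex_neg, P.Ex_FF e he]
    linarith
  · intro c
    have h1 := P.st.le e c
    have h2 : h * (2 * x e c) ≤ h * (2 * (B / h ^ 8)) := by gcongr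
    have h3 : h * (2 * (B / h ^ 8)) = (4 * B / h ^ 7) / 2 := by field_simp; ring
    have := P.hpow 7 (by norm_num)
    linarith
  · simp only [mul_one]
    have h1 := mul_le_mul_of_nonneg_left (P.sum_sq e) (sq_nonneg h)
    have h3 : h ^ 2 * (4 * B / h ^ 8) = (4 * B / h ^ 6) := by field_simp
    have := P.hpow 6 (by norm_num)
    linarith

end
end NB


namespace NB
open Finset
open scoped Classical
set_option linter.unusedSectionVars false
set_option linter.unusedVariables false

lemma mem_blk {ι κ : Type} [Fintype ι] {l : ι → κ} {k : κ} {i : ι} (hh : l i = k) :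
    i ∈ univ.filter (fun i => l i = k) := by
  rw [Finset.mem_filter]; exact ⟨mem_univ _, hh⟩

section
variable {V E C : Type} [Fintype V] [Fintype E] [Fintype C] {h N : ℝ}
variable {s : Setup V E C h N} {U : Finset E} {x : E → C → ℝ} {r B p : ℝ}

lemma Par.Pr_bt (P : Par s U x r B p) (e : E) (c : C) :
    Pr (mu p x) (fun ω => ω (e, c) = true) = p * x e c := by
  rw [← P.Ex_bt e c]
  unfold Pr
  congr 1
  funext ω
  by_cases hh : ω (e, c) = true <;> simp [bt, hh]

lemma Par.y_nn (P : Par s U x r B p) (v : V) (e : E) (c : C) :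
    0 ≤ x e c / kp p x (s.far v e) c :=
  div_nonneg (P.st.nn e c) (by linarith [P.kp_far2 v e c])

lemma Par.y_le (P : Par s U x r B p) (v : V) (e : E) (c : C) :
    x e c / kp p x (s.far v e) c ≤ 2 * B / h ^ 8 := by
  have := P.kp_far2 v e c
  rw [div_le_iff₀ (by linarith)]
  have h1 := P.st.le e c
  have h2 := P.st.nn e c
  have h3 : 2 * B / h ^ 8 = 2 * (B / h ^ 8) := by ring
  rw [h3]
  nlinarith

lemma Par.Ex_tm (P : Par s U x r B p) (v : V) (e : E) (c : C) :
    Ex (mu p x) (tm s e v c) = kp p x (s.far v e) c *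
      ∏ c' ∈ univ.erase c, (1 - p * x e c' * kp p x (s.nb e) c') := by
  have := Ex_indep_prod P.isP Prod.snd univ
    (fun c' ω => if c' = c then cl (s.far v e) c ω else 1 - mt s e c' ω) (by
      intro c' _ ω ω' hh
      have hh' : ∀ f, ω (f, c') = ω' (f, c') := fun f => hh (f, c') (by simp)
      by_cases hc : c' = c
      · subst hc
        simp only [if_true]
        exact cl_dep _ _ _ _ fun f _ => hh' f
      · simp only [hc, if_false]
        rw [mt_col s e c' ω ω' hh'])
  have e1 : ∀ ω, tm s e v c ω = ∏ c', if c' = c then cl (s.far v e) c ω else 1 - mt s e c' ω := by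
    intro ω
    rw [← Finset.mul_prod_erase univ _ (mem_univ c), if_pos rfl]
    unfold tm
    congr 1
    refine Finset.prod_congr rfl fun c' hc' => ?_
    rw [if_neg (Finset.ne_of_mem_erase hc')]
  have e2 : tm s e v c = fun ω => ∏ c', if c' = c then cl (s.far v e) c ω else 1 - mt s e c' ω :=
    funext e1
  rw [e2, this, ← Finset.mul_prod_erase univ _ (mem_univ c)]
  simp only [if_true]
  have e3 : Ex (mu p x) (fun ω => cl (s.far v e) c ω) = kp p x (s.far v e) c := P.Ex_cl _ _
  rw [e3]
  congr 1
  refine Finset.prod_congr rfl fun c' hc' => ?_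
  simp only [Finset.ne_of_mem_erase hc', if_false]
  rw [Ex_sub, Ex_const P.isP]
  have e4 : Ex (mu p x) (fun ω => mt s e c' ω) = _ := P.Ex_mt e c'
  rw [e4]

lemma exp_neg_le {S : ℝ} (h0 : 0 ≤ S) (h1 : S ≤ 1) : Real.exp (-S) ≤ 1 - S + S ^ 2 := by
  have := (abs_le.mp (Real.abs_exp_sub_one_sub_id_le (x := -S) (by rw [abs_neg, abs_of_nonneg h0]; exact h1))).2
  nlinarith

lemma Par.prod_le (P : Par s U x r B p) (e : E) (he : e ∈ U) (c : C) :
    ∏ c' ∈ univ.erase c, (1 - p * x e c' * kp p x (s.nb e) c') ≤ 1 - p + 3 * p ^ 2 + B / h ^ 8 := by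
  have h0 := P.h0
  set S := ∑ c' ∈ univ.erase c, p * x e c' * kp p x (s.nb e) c' with hS
  have e1 : ∏ c' ∈ univ.erase c, (1 - p * x e c' * kp p x (s.nb e) c') ≤ Real.exp (-S) := by
    rw [hS, ← Finset.sum_neg_distrib, Real.exp_sum]
    refine Finset.prod_le_prod (fun c' _ => ?_) fun c' _ => ?_
    · have := P.px e c'
      have := kp_le_one P (s.nb e) c'
      have := P.kp_nb2 e c'
      nlinarith
    · have := Real.add_one_le_exp (-(p * x e c' * kp p x (s.nb e) c'))
      linarith
  have hsum : ∑ c' ∈ univ.erase c, x e c' = 1 - x e c := by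
    rw [← P.st.sum e he, ← Finset.add_sum_erase univ _ (mem_univ c)]; ring
  have e2 : S ≤ p := by
    have : S ≤ ∑ c' ∈ univ.erase c, p * x e c' := by
      refine Finset.sum_le_sum fun c' _ => ?_
      exact mul_le_of_le_one_right (P.px e c').1 (kp_le_one P _ _)
    rw [← Finset.mul_sum, hsum] at this
    nlinarith [P.p0, P.st.nn e c]
  have e3 : (1 - 2 * p) * (p * (1 - x e c)) ≤ S := by
    rw [← hsum, Finset.mul_sum, Finset.mul_sum]
    refine Finset.sum_le_sum fun c' _ => ?_
    rw [mul_comm]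
    refine mul_le_mul_of_nonneg_left ?_ (P.px e c').1
    refine le_trans ?_ (P.kp_nb e c')
    nlinarith [P.p0, P.r1]
  have e4 : 0 ≤ S := Finset.sum_nonneg fun c' _ =>
    mul_nonneg (P.px e c').1 (by linarith [P.kp_nb2 e c'])
  have hp4 := P.p4
  have hp0 := P.p0
  have e5 := exp_neg_le e4 (by linarith)
  have hx := P.st.le e c
  have hx0 := P.st.nn e c
  have e6 : S ^ 2 ≤ p ^ 2 := by gcongr
  have e7 : (1 - 2 * p) * p * x e c ≤ x e c := by
    have : (1 - 2 * p) * p ≤ 1 := by nlinarith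
    nlinarith
  nlinarith

lemma Par.Ex_HH (P : Par s U x r B p) (v : V) (c : C) :
    Ex (mu p x) (HH s p x v c) ≤ r * (1 - p + 3 * p ^ 2 + B / h ^ 8) := by
  have h0 := P.h0
  unfold HH
  rw [Ex_sum]
  have hpos : 0 ≤ 1 - p + 3 * p ^ 2 + B / h ^ 8 := by
    have := P.B1
    have := P.p4
    have : 0 ≤ B / h ^ 8 := by positivity
    nlinarith [sq_nonneg p]
  refine le_trans (Finset.sum_le_sum (g := fun e => x e c * (1 - p + 3 * p ^ 2 + B / h ^ 8)) ?_) ?_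
  · intro e _
    rw [Ex_mul_left, P.Ex_tm]
    have := P.kp_far2 v e c
    rw [← mul_assoc, div_mul_cancel₀ _ (by linarith)]
    by_cases he : e ∈ U
    · exact mul_le_mul_of_nonneg_left (P.prod_le e he c) (P.st.nn e c)
    · simp [P.st.zero e he]
  · rw [← Finset.sum_mul]
    exact mul_le_mul_of_nonneg_right (P.st.deg v c) hpos

lemma tm_diff (s : Setup V E C h N) (e : E) (v : V) (c c' : C) (hc : c' ≠ c) (ω ω' : E × C → Bool)
    (hh : ∀ f d, d ≠ c' → ω (f, d) = ω' (f, d)) :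
    |tm s e v c ω - tm s e v c ω'| ≤ mt s e c' ω + mt s e c' ω' := by
  have hmem : c' ∈ univ.erase c := by simp [hc]
  have e1 : ∀ ω, tm s e v c ω = (cl (s.far v e) c ω * ∏ d ∈ (univ.erase c).erase c', (1 - mt s e d ω)) *
      (1 - mt s e c' ω) := by
    intro ω
    unfold tm
    rw [← Finset.mul_prod_erase _ _ hmem]
    ring
  have e2 : (cl (s.far v e) c ω * ∏ d ∈ (univ.erase c).erase c', (1 - mt s e d ω)) =
      (cl (s.far v e) c ω' * ∏ d ∈ (univ.erase c).erase c', (1 - mt s e d ω')) := by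
    congr 1
    · exact cl_dep _ _ _ _ fun f _ => hh f c hc.symm
    · refine Finset.prod_congr rfl fun d hd => ?_
      rw [mt_col s e d ω ω' fun f => hh f d (Finset.ne_of_mem_erase hd)]
  rw [e1 ω, e1 ω', e2]
  set K := (cl (s.far v e) c ω' * ∏ d ∈ (univ.erase c).erase c', (1 - mt s e d ω'))
  have hK0 : 0 ≤ K := mul_nonneg (cl_nn _ _ _) (Finset.prod_nonneg fun d _ => by linarith [mt_le s e d ω'])
  have hK1 : K ≤ 1 := mul_le_one₀ (cl_le _ _ _) (Finset.prod_nonneg fun d _ => by linarith [mt_le s e d ω'])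
    (Finset.prod_le_one (fun d _ => by linarith [mt_le s e d ω']) fun d _ => by linarith [mt_nn s e d ω'])
  have a1 := mt_nn s e c' ω
  have a2 := mt_nn s e c' ω'
  rw [abs_le]
  constructor <;> nlinarith

noncomputable def nf (s : Setup V E C h N) (v : V) (f : E) : ℝ :=
  ∑ e ∈ s.star v, if f ∈ s.far v e then 1 else 0

lemma nf_nn (s : Setup V E C h N) (v : V) (f : E) : 0 ≤ nf s v f :=
  Finset.sum_nonneg fun e _ => by split_ifs <;> norm_num

lemma nf_le (s : Setup V E C h N) (v : V) (f : E) : nf s v f ≤ 2 := by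
  unfold nf
  rw [← Finset.sum_filter, Finset.sum_const, nsmul_eq_mul, mul_one]
  obtain ⟨u, hu⟩ := s.inc_ex f
  have h1 : ((s.star v).filter fun e => f ∈ s.far v e).card ≤ ({u, s.oth u f} : Finset V).card := by
    refine Finset.card_le_card_of_injOn (fun e => s.oth v e) ?_ ?_
    · intro e he
      have he := (mem_filter.mp he).2
      simp only [Setup.far, mem_filter, mem_univ, true_and] at he
      have := s.inc_two u _ f hu he.2
      simpa using this
    · intro e he e' he' hee
      have he := (mem_filter.mp he).1
      have he' := (mem_filter.mp he').1
      simp only [Setup.star, mem_filter, mem_univ, true_and] at he he'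
      refine s.inc_lin v (s.oth v e) e e' (s.oth_ne v e he).symm he (s.inc_oth v e he) he' ?_
      simp only at hee
      rw [hee]
      exact s.inc_oth v e' he'
  have := h1.trans Finset.card_le_two
  exact_mod_cast this

lemma Par.nf_sum (P : Par s U x r B p) (v : V) (c : C) : ∑ f, nf s v f * x f c ≤ h ^ 8 := by
  unfold nf
  simp only [Finset.sum_mul]
  rw [Finset.sum_comm]
  calc _ ≤ ∑ e ∈ s.star v, (1:ℝ) := by
        refine Finset.sum_le_sum fun e _ => ?_
        simp only [ite_mul, one_mul, zero_mul]
        rw [← Finset.sum_filter]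
        refine le_trans (le_of_eq ?_) ((P.st.far_le v e c).trans P.r1)
        refine Finset.sum_congr ?_ fun _ _ => rfl
        ext f; simp
    _ ≤ _ := by
        rw [Finset.sum_const, nsmul_eq_mul, mul_one]
        exact s.deg v

noncomputable def lab (c : C) : E × C → E ⊕ C := fun i => if i.2 = c then Sum.inl i.1 else Sum.inr i.2

lemma Par.conc_HH (P : Par s U x r B p) (v : V) (c : C) :
    Conc (mu p x) (lab c) (HH s p x v c)
      (Sum.elim (fun f ω => ω (f, c) = false)
        (fun c' ω => c' ≠ c → ∀ e ∈ s.star v, ω (e, c') = false))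
      (Sum.elim (fun f => 2 * B / h ^ 8 * nf s v f) (fun _ => 4 * B / h ^ 8))
      (Sum.elim (fun f => p * x f c) (fun c' => ∑ e ∈ s.star v, p * x e c')) := by
  have h0 := P.h0
  have hB := P.B1
  have habs : ∀ ω ω', |HH s p x v c ω - HH s p x v c ω'| ≤
      ∑ e ∈ s.star v, 2 * B / h ^ 8 * |tm s e v c ω - tm s e v c ω'| := by
    intro ω ω'
    unfold HH
    rw [← Finset.sum_sub_distrib]
    refine (Finset.abs_sum_le_sum_abs _ _).trans (Finset.sum_le_sum fun e _ => ?_)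
    rw [← mul_sub, abs_mul, abs_of_nonneg (P.y_nn v e c)]
    exact mul_le_mul_of_nonneg_right (P.y_le v e c) (abs_nonneg _)
  have hl1 : ∀ (f : E) (ω ω' : E × C → Bool), (∀ i, lab c i ≠ Sum.inl f → ω i = ω' i) →
      ∀ g d, ¬ (g = f ∧ d = c) → ω (g, d) = ω' (g, d) := by
    intro f ω ω' hh g d hgd
    apply hh
    unfold lab
    by_cases hd : d = c
    · simp [hd]
      exact fun hg => hgd ⟨hg, hd⟩
    · simp [hd]
  have hl2 : ∀ (c' : C) (ω ω' : E × C → Bool), (∀ i, lab c i ≠ Sum.inr c' → ω i = ω' i) →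
      ∀ g d, ¬ (c' ≠ c ∧ d = c') → ω (g, d) = ω' (g, d) := by
    intro c' ω ω' hh g d hgd
    apply hh
    unfold lab
    by_cases hd : d = c
    · simp [hd]
    · simp [hd]
      rintro rfl
      exact hgd ⟨hd, rfl⟩
  refine ⟨?_, ?_, ?_, ?_, ?_⟩
  · rintro (f | c')
    · have := nf_nn s v f
      simp only [Sum.elim_inl]; positivity
    · simp only [Sum.elim_inr]; positivity
  · rintro (f | c') ω ω' hh
    · have hh' := hl1 f ω ω' hh
      refine (habs ω ω').trans ?_
      simp only [Sum.elim_inl, nf, Finset.mul_sum]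
      refine Finset.sum_le_sum fun e _ => mul_le_mul_of_nonneg_left ?_ (by positivity)
      split_ifs with hf
      · exact abs_sub_le01 (tm_nn _ _ _ _ _) (tm_le _ _ _ _ _) (tm_nn _ _ _ _ _) (tm_le _ _ _ _ _)
      · have : tm s e v c ω = tm s e v c ω' := by
          unfold tm
          congr 1
          · refine cl_dep _ _ _ _ fun g hg => hh' g c ?_
            rintro ⟨rfl, _⟩; exact hf hg
          · refine Finset.prod_congr rfl fun d hd => ?_
            rw [mt_col s e d ω ω' fun g => hh' g d ?_]
            rintro ⟨_, h2⟩; exact (Finset.ne_of_mem_erase hd) h2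
        rw [this]; simp
    · have hh' := hl2 c' ω ω' hh
      by_cases hc : c' = c
      · have : ω = ω' := funext fun i => hh' i.1 i.2 fun h => h.1 hc
        rw [this]; simp only [sub_self, abs_zero, Sum.elim_inr]; positivity
      · refine (habs ω ω').trans ?_
        rw [← Finset.mul_sum]
        have e1 : ∑ e ∈ s.star v, |tm s e v c ω - tm s e v c ω'| ≤ 2 := by
          refine (Finset.sum_le_sum fun e _ => tm_diff s e v c c' hc ω ω' fun f d hd =>
            hh' f d fun h => hd h.2).trans ?_
          rw [Finset.sum_add_distrib]
          linarith [mt_sum s v c' ω, mt_sum s v c' ω']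
        have e2 : 0 ≤ 2 * B / h ^ 8 := by positivity
        refine (mul_le_mul_of_nonneg_left e1 e2).trans (le_of_eq ?_)
        simp only [Sum.elim_inr]; ring
  · rintro (f | c') ω ω' hh hq hq'
    · have hh' := hl1 f ω ω' hh
      have : ω = ω' := by
        funext i
        by_cases hi : i.1 = f ∧ i.2 = c
        · have : i = (f, c) := Prod.ext hi.1 hi.2
          rw [this]
          simp only [Sum.elim_inl] at hq hq'
          rw [hq, hq']
        · exact hh' i.1 i.2 hi
      rw [this]
    · have hh' := hl2 c' ω ω' hh
      by_cases hc : c' = c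
      · have : ω = ω' := funext fun i => hh' i.1 i.2 fun h => h.1 hc
        rw [this]
      · have h1 := habs ω ω'
        have h2 : ∑ e ∈ s.star v, 2 * B / h ^ 8 * |tm s e v c ω - tm s e v c ω'| = 0 := by
          refine Finset.sum_eq_zero fun e he => ?_
          have h3 := tm_diff s e v c c' hc ω ω' fun f d hd => hh' f d fun h => hd h.2
          simp only [Sum.elim_inr] at hq hq'
          have m1 : mt s e c' ω = 0 := by simp [mt, bt, hq hc e he]
          have m2 : mt s e c' ω' = 0 := by simp [mt, bt, hq' hc e he]
          rw [m1, m2, add_zero] at h3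
          rw [le_antisymm h3 (abs_nonneg _), mul_zero]
        rw [h2] at h1
        exact sub_eq_zero.mp (abs_eq_zero.mp (le_antisymm h1 (abs_nonneg _)))
  · rintro (f | c') ω ω' hh
    · have := hh (f, c) (mem_blk (by simp [lab]))
      simp [this]
    · simp only [Sum.elim_inr, eq_iff_iff]
      refine forall_congr' fun hc => forall₂_congr fun e he => ?_
      rw [hh (e, c') (mem_blk (by simp [lab, hc]))]
  · rintro (f | c')
    · simp only [Sum.elim_inl, Bool.not_eq_false]
      exact (P.Pr_bt f c).le
    · simp only [Sum.elim_inr]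
      refine le_trans (Pr_mono P.isP (B := fun ω => ∃ e ∈ s.star v, ω (e, c') = true) ?_) ?_
      · intro ω hω
        push Not at hω
        obtain ⟨_, e, he, hw⟩ := hω
        exact ⟨e, he, by simpa using hw⟩
      · refine (Pr_exists P.isP _ _).trans (le_of_eq ?_)
        exact Finset.sum_congr rfl fun e _ => P.Pr_bt e c'

lemma Par.tail_HH (P : Par s U x r B p) (v : V) (c : C) (δ : ℝ) :
    Pr (mu p x) (fun ω => r * (1 - p + 3 * p ^ 2 + B / h ^ 8) + δ < HH s p x v c ω) ≤
      Real.exp (2 - h * δ) := by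
  have h0 := P.h0
  have hB := P.B1
  have hp0 := P.p0
  have hp4 := P.p4
  have := tail P.isP (P.conc_HH v c) (t := h) (lam := δ) (K := 2) h0.le ?_ ?_
  · refine le_trans (Pr_mono P.isP fun ω hω => ?_) this
    linarith [P.Ex_HH v c]
  · have h7 := P.hpow 7 (by norm_num)
    have h3 : h * (4 * B / h ^ 8) = (4 * B / h ^ 7) := by field_simp
    rintro (f | c')
    · simp only [Sum.elim_inl]
      have h1 := nf_le s v f
      have h2 : h * (2 * B / h ^ 8 * nf s v f) ≤ h * (2 * B / h ^ 8 * 2) := by gcongr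
      have h4 : h * (2 * B / h ^ 8 * 2) = h * (4 * B / h ^ 8) := by ring
      linarith
    · simp only [Sum.elim_inr]; linarith
  · rw [Fintype.sum_sum_type]
    simp only [Sum.elim_inl, Sum.elim_inr]
    have e1 : ∑ f, (2 * B / h ^ 8 * nf s v f) ^ 2 * (p * x f c) ≤ 8 * B ^ 2 / h ^ 8 := by
      calc _ ≤ ∑ f, (8 * B ^ 2 / h ^ 16) * (nf s v f * x f c) := by
            refine Finset.sum_le_sum fun f _ => ?_
            have a1 := nf_nn s v f
            have a2 := nf_le s v f
            have a3 := P.st.nn f c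
            have a4 : nf s v f * p ≤ 2 := by nlinarith
            have : (2 * B / h ^ 8 * nf s v f) ^ 2 * (p * x f c) =
              (4 * B ^ 2 / h ^ 16) * (nf s v f * p * (nf s v f * x f c)) := by ring
            rw [this]
            have a5 := mul_le_mul_of_nonneg_right a4 (mul_nonneg a1 a3)
            refine (mul_le_mul_of_nonneg_left a5 (by positivity)).trans (le_of_eq ?_)
            ring
        _ ≤ (8 * B ^ 2 / h ^ 16) * h ^ 8 := by
            rw [← Finset.mul_sum]
            exact mul_le_mul_of_nonneg_left (P.nf_sum v c) (by positivity)
        _ = _ := by field_simp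
    have e2 : ∑ c', (4 * B / h ^ 8) ^ 2 * (∑ e ∈ s.star v, p * x e c') ≤ 16 * B ^ 2 / h ^ 8 := by
      rw [← Finset.mul_sum, Finset.sum_comm]
      have : ∑ e ∈ s.star v, ∑ c', p * x e c' ≤ h ^ 8 := by
        calc _ ≤ ∑ e ∈ s.star v, (1:ℝ) := by
              refine Finset.sum_le_sum fun e _ => ?_
              rw [← Finset.mul_sum]
              have := P.st.sum_le e
              have : 0 ≤ ∑ c, x e c := Finset.sum_nonneg fun c _ => P.st.nn e c
              nlinarith
          _ ≤ _ := by
              rw [Finset.sum_const, nsmul_eq_mul, mul_one]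
              exact s.deg v
      refine (mul_le_mul_of_nonneg_left this (by positivity)).trans (le_of_eq ?_)
      field_simp
      ring
    have e3 := mul_le_mul_of_nonneg_left (add_le_add e1 e2) (sq_nonneg h)
    refine e3.trans ?_
    have e4 : h ^ 2 * (8 * B ^ 2 / h ^ 8 + 16 * B ^ 2 / h ^ 8) = 3 / 2 * (4 * B / h ^ 3) ^ 2 := by
      field_simp; ring
    rw [e4]
    have h3 := P.hpow 3 (by norm_num)
    have h4 : 0 ≤ 4 * B / h ^ 3 := by positivity
    nlinarith

end
end NB


namespace NB
open Finset
open scoped Classical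
set_option linter.unusedSectionVars false
set_option linter.unusedVariables false

section
variable {V E C : Type} [Fintype V] [Fintype E] [Fintype C] {h N : ℝ}
variable {s : Setup V E C h N} {U : Finset E} {x : E → C → ℝ} {r B p : ℝ}

noncomputable def n1 (s : Setup V E C h N) (v : V) (g : E) : ℝ :=
  if s.inc v g ∨ ∃ e, s.inc v e ∧ s.J1 e g then 1 else 0
noncomputable def n2 (s : Setup V E C h N) (v : V) (g : E) : ℝ :=
  if ∃ e, s.inc v e ∧ s.J2 e g then 1 else 0

lemma n1_nn (s : Setup V E C h N) (v : V) (g : E) : 0 ≤ n1 s v g := by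
  unfold n1; split_ifs <;> norm_num
lemma n2_nn (s : Setup V E C h N) (v : V) (g : E) : 0 ≤ n2 s v g := by
  unfold n2; split_ifs <;> norm_num
lemma n1_sq (s : Setup V E C h N) (v : V) (g : E) : n1 s v g ^ 2 = n1 s v g := by
  unfold n1; split_ifs <;> norm_num
lemma n2_sq (s : Setup V E C h N) (v : V) (g : E) : n2 s v g ^ 2 = n2 s v g := by
  unfold n2; split_ifs <;> norm_num
lemma n1_le (s : Setup V E C h N) (v : V) (g : E) : n1 s v g ≤ 1 := by
  unfold n1; split_ifs <;> norm_num
lemma n2_le (s : Setup V E C h N) (v : V) (g : E) : n2 s v g ≤ 1 := by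
  unfold n2; split_ifs <;> norm_num

lemma n2_sum (s : Setup V E C h N) (v : V) : ∑ g, n2 s v g ≤ h ^ 10 := by
  have h0 : 0 < h := lt_of_lt_of_le one_pos s.hh
  have e1 : ∀ g, n2 s v g ≤ ∑ e ∈ s.star v, if s.J2 e g then (1:ℝ) else 0 := by
    intro g
    unfold n2
    split_ifs with hh
    · obtain ⟨e, he, hj⟩ := hh
      refine le_trans ?_ (Finset.single_le_sum (fun e _ => by split_ifs <;> norm_num)
        (show e ∈ s.star v by simpa [Setup.star] using he))
      simp [hj]
    · exact Finset.sum_nonneg fun e _ => by split_ifs <;> norm_num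
  refine (Finset.sum_le_sum fun g _ => e1 g).trans ?_
  rw [Finset.sum_comm]
  calc _ ≤ ∑ e ∈ s.star v, h ^ 2 := by
        refine Finset.sum_le_sum fun e _ => ?_
        rw [← Finset.sum_filter, Finset.sum_const, nsmul_eq_mul, mul_one]
        exact s.J2d e
    _ = (s.star v).card * h ^ 2 := by rw [Finset.sum_const, nsmul_eq_mul]
    _ ≤ h ^ 8 * h ^ 2 := mul_le_mul_of_nonneg_right (s.deg v) (by positivity)
    _ = _ := by ring

lemma n1_sum (s : Setup V E C h N) (v : V) : ∑ g, n1 s v g ≤ h ^ 8 + h ^ 12 := by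
  have h0 : 0 < h := lt_of_lt_of_le one_pos s.hh
  have e1 : ∀ g, n1 s v g ≤ (if s.inc v g then 1 else 0) +
      ∑ e ∈ s.star v, if s.J1 e g then (1:ℝ) else 0 := by
    intro g
    have p1 : 0 ≤ (if s.inc v g then (1:ℝ) else 0) := by split_ifs <;> norm_num
    have p2 : 0 ≤ ∑ e ∈ s.star v, if s.J1 e g then (1:ℝ) else 0 :=
      Finset.sum_nonneg fun e _ => by split_ifs <;> norm_num
    by_cases hg : s.inc v g
    · rw [if_pos hg]; linarith [n1_le s v g]
    · by_cases hh : ∃ e, s.inc v e ∧ s.J1 e g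
      · obtain ⟨e, he, hj⟩ := hh
        have : (1:ℝ) ≤ ∑ e ∈ s.star v, if s.J1 e g then (1:ℝ) else 0 := by
          refine le_trans ?_ (Finset.single_le_sum (fun e _ => by split_ifs <;> norm_num)
            (show e ∈ s.star v by simpa [Setup.star] using he))
          simp [hj]
        linarith [n1_le s v g]
      · have : n1 s v g = 0 := if_neg (not_or.mpr ⟨hg, hh⟩)
        linarith
  refine (Finset.sum_le_sum fun g _ => e1 g).trans ?_
  rw [Finset.sum_add_distrib, Finset.sum_comm]
  refine add_le_add ?_ ?_
  · rw [← Finset.sum_filter, Finset.sum_const, nsmul_eq_mul, mul_one]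
    exact s.deg v
  · calc _ ≤ ∑ e ∈ s.star v, h ^ 4 := by
          refine Finset.sum_le_sum fun e _ => ?_
          rw [← Finset.sum_filter, Finset.sum_const, nsmul_eq_mul, mul_one]
          exact s.J1d e
      _ = (s.star v).card * h ^ 4 := by rw [Finset.sum_const, nsmul_eq_mul]
      _ ≤ h ^ 8 * h ^ 4 := mul_le_mul_of_nonneg_right (s.deg v) (by positivity)
      _ = _ := by ring

lemma bad_change (s : Setup V E C h N) (v : V) (c : C) (g : E) (γ : C) (ω ω' : E × C → Bool)
    (hh : ∀ i, id i ≠ (g, γ) → ω i = ω' i) (hb : bad s v c ω)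
    (k1 : ¬ (c = γ ∧ (s.inc v g ∨ ∃ e, s.inc v e ∧ s.J1 e g)))
    (k2 : ¬ (s.R γ c ∧ ∃ e, s.inc v e ∧ s.J2 e g)) : bad s v c ω' := by
  obtain ⟨e, he, hω, f, c', hsp, hω2⟩ := hb
  refine ⟨e, he, ?_, f, c', hsp, ?_⟩
  · rw [← hh (e, c) ?_]
    · exact hω
    · intro heq
      simp only [id, Prod.mk.injEq] at heq
      obtain ⟨rfl, rfl⟩ := heq
      exact k1 ⟨rfl, Or.inl he⟩
  · rw [← hh (f, c') ?_]
    · exact hω2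
    · intro heq
      simp only [id, Prod.mk.injEq] at heq
      obtain ⟨rfl, rfl⟩ := heq
      rcases hsp with ⟨a1, a2⟩ | ⟨a1, a2⟩
      · exact k1 ⟨a2, Or.inr ⟨e, he, a1⟩⟩
      · exact k2 ⟨s.Rs _ _ a2, e, he, a1⟩

lemma Par.conc_ZZ (P : Par s U x r B p) (v : V) :
    Conc (mu p x) id (ZZ s v) (fun i ω => ω i = false)
      (fun i => (n1 s v i.1 + 3 * h ^ 2 * n2 s v i.1) / h ^ 8) (fun i => p * x i.1 i.2) := by
  have h0 := P.h0
  refine ⟨?_, ?_, ?_, ?_, ?_⟩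
  · intro i
    have := n1_nn s v i.1
    have := n2_nn s v i.1
    positivity
  · rintro ⟨g, γ⟩ ω ω' hh
    unfold ZZ
    rw [← sub_div, abs_div, abs_of_pos (show 0 < h ^ 8 by positivity), ← Finset.sum_sub_distrib]
    refine div_le_div_of_nonneg_right ?_ (by positivity)
    refine (Finset.abs_sum_le_sum_abs _ _).trans ?_
    calc _ ≤ ∑ c, ((if c = γ then n1 s v g else 0) + (if s.R γ c then 1 else 0) * n2 s v g) := by
          refine Finset.sum_le_sum fun c _ => ?_
          have p1 : 0 ≤ (if c = γ then n1 s v g else 0) := by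
            split_ifs
            · exact n1_nn _ _ _
            · exact le_rfl
          have p2 : 0 ≤ (if s.R γ c then 1 else 0) * n2 s v g :=
            mul_nonneg (by split_ifs <;> norm_num) (n2_nn _ _ _)
          by_cases k1 : (c = γ ∧ (s.inc v g ∨ ∃ e, s.inc v e ∧ s.J1 e g))
          · have : (if c = γ then n1 s v g else 0) = 1 := by
              rw [if_pos k1.1, n1, if_pos k1.2]
            rw [this]
            refine le_trans (abs_sub_le01 (M := 1) ?_ ?_ ?_ ?_) (by linarith)
            all_goals split_ifs <;> norm_num
          · by_cases k2 : (s.R γ c ∧ ∃ e, s.inc v e ∧ s.J2 e g)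
            · have : (if s.R γ c then 1 else 0) * n2 s v g = 1 := by
                rw [if_pos k2.1, n2, if_pos k2.2, mul_one]
              rw [this]
              refine le_trans (abs_sub_le01 (M := 1) ?_ ?_ ?_ ?_) (by linarith)
              all_goals split_ifs <;> norm_num
            · have : bad s v c ω ↔ bad s v c ω' :=
                ⟨fun hb => bad_change s v c g γ ω ω' hh hb k1 k2,
                 fun hb => bad_change s v c g γ ω' ω (fun i hi => (hh i hi).symm) hb k1 k2⟩
              simp only [this, sub_self, abs_zero]
              linarith
      _ ≤ _ := by
          rw [Finset.sum_add_distrib, Finset.sum_ite_eq' univ γ, if_pos (mem_univ _), ← Finset.sum_mul]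
          rw [← Finset.sum_filter, Finset.sum_const, nsmul_eq_mul, mul_one]
          have := mul_le_mul_of_nonneg_right (s.Rd γ) (n2_nn s v g)
          linarith
  · rintro i ω ω' hh hq hq'
    have : ω = ω' := by
      funext j
      by_cases hj : j = i
      · rw [hj, hq, hq']
      · exact hh j hj
    rw [this]
  · intro i ω ω' hh
    have := hh i (by simp)
    simp [this]
  · rintro ⟨g, γ⟩
    simp only [Bool.not_eq_false]
    exact (P.Pr_bt g γ).le

lemma Par.Ex_ZZ (P : Par s U x r B p) (v : V) : Ex (mu p x) (ZZ s v) ≤ 4 * B / h ^ 4 := by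
  have h0 := P.h0
  have hB := P.B1
  have e0 : ∀ ω, ZZ s v ω = 1 / h ^ 8 * ∑ c, if bad s v c ω then 1 else 0 := by
    intro ω; unfold ZZ; ring
  simp only [funext e0]
  rw [Ex_mul_left, Ex_sum]
  have e1 : ∀ c, Ex (mu p x) (fun ω => if bad s v c ω then 1 else 0) ≤
      ∑ e ∈ s.star v, x e c * (4 * B / h ^ 4) := by
    intro c
    have e2 : Pr (mu p x) (bad s v c) ≤ ∑ e ∈ s.star v,
        ∑ q ∈ univ.filter (fun q : E × C => s.sp e c q.1 q.2),
          Pr (mu p x) (fun ω => ω (e, c) = true ∧ ω q = true) := by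
      refine le_trans (Pr_mono P.isP (B := fun ω => ∃ e ∈ s.star v,
        ∃ q ∈ univ.filter (fun q : E × C => s.sp e c q.1 q.2), ω (e, c) = true ∧ ω q = true) ?_) ?_
      · rintro ω ⟨e, he, hω, f, c', hsp, hω2⟩
        exact ⟨e, by simpa [Setup.star] using he, (f, c'), mem_filter.mpr ⟨mem_univ _, hsp⟩, hω, hω2⟩
      · refine (Pr_exists P.isP _ _).trans (Finset.sum_le_sum fun e _ => ?_)
        exact Pr_exists P.isP _ _
    refine le_trans e2 (Finset.sum_le_sum fun e _ => ?_)
    have e3 : ∀ q ∈ univ.filter (fun q : E × C => s.sp e c q.1 q.2),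
        Pr (mu p x) (fun ω => ω (e, c) = true ∧ ω q = true) ≤ x e c * x q.1 q.2 := by
      intro q hq
      have hsp := (mem_filter.mp hq).2
      rw [Pr_indep P.isP (S := {(e, c)}) (T := {q}), P.Pr_bt e c, P.Pr_bt q.1 q.2]
      · have a1 := P.px e c
        have a2 := P.px q.1 q.2
        have hp0 := P.p0
        have hp4 := P.p4
        have a3 := P.st.nn e c
        have a4 := P.st.nn q.1 q.2
        refine mul_le_mul ?_ ?_ a2.1 a3
        · nlinarith
        · nlinarith
      · rw [Finset.disjoint_singleton]
        intro heq
        exact s.sp_ne hsp (by rw [← heq])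
      · intro ω ω' hh; simp [hh (e, c) (by simp)]
      · intro ω ω' hh; simp [hh q (by simp)]
    refine (Finset.sum_le_sum e3).trans ?_
    rw [← Finset.mul_sum]
    exact mul_le_mul_of_nonneg_left (P.st.sp_le e c) (P.st.nn e c)
  have e4 : ∑ c, ∑ e ∈ s.star v, x e c * (4 * B / h ^ 4) ≤ h ^ 8 * (4 * B / h ^ 4) := by
    rw [Finset.sum_comm]
    have : ∀ e ∈ s.star v, ∑ c, x e c * (4 * B / h ^ 4) ≤ 4 * B / h ^ 4 := by
      intro e _
      rw [← Finset.sum_mul]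
      exact mul_le_of_le_one_left (by positivity) (P.st.sum_le e)
    refine (Finset.sum_le_sum this).trans ?_
    rw [Finset.sum_const, nsmul_eq_mul]
    exact mul_le_mul_of_nonneg_right (s.deg v) (by positivity)
  calc _ ≤ 1 / h ^ 8 * (h ^ 8 * (4 * B / h ^ 4)) :=
        mul_le_mul_of_nonneg_left ((Finset.sum_le_sum fun c _ => e1 c).trans e4) (by positivity)
    _ = _ := by field_simp

lemma Par.tail_ZZ (P : Par s U x r B p) (v : V) (δ : ℝ) :
    Pr (mu p x) (fun ω => 4 * B / h ^ 4 + δ < ZZ s v ω) ≤ Real.exp (22 - h * δ) := by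
  have h0 := P.h0
  have hB := P.B1
  have hp0 := P.p0
  have hp4 := P.p4
  have hh4 : 4 ≤ h := by linarith [P.Bh]
  have := tail P.isP (P.conc_ZZ v) (t := h) (lam := δ) (K := 22) h0.le ?_ ?_
  · refine le_trans (Pr_mono P.isP fun ω hω => ?_) this
    linarith [P.Ex_ZZ v]
  · intro i
    have a1 := n1_le s v i.1
    have a2 := n2_le s v i.1
    rw [← mul_div_assoc, div_le_one (by positivity)]
    calc h * (n1 s v i.1 + 3 * h ^ 2 * n2 s v i.1) ≤ h * (1 + 3 * h ^ 2 * 1) := by gcongr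
      _ ≤ h * (h ^ 2 + 3 * h ^ 2 * 1) := by gcongr; exact one_le_pow₀ s.hh
      _ = 4 * h ^ 3 := by ring
      _ ≤ h * h ^ 3 := by gcongr
      _ = h ^ 4 := by ring
      _ ≤ h ^ 8 := pow_le_pow_right₀ s.hh (by norm_num)
  · rw [Fintype.sum_prod_type]
    have e1 : ∀ g, ∑ γ, ((n1 s v g + 3 * h ^ 2 * n2 s v g) / h ^ 8) ^ 2 * (p * x g γ) ≤
        (2 * n1 s v g + 18 * h ^ 4 * n2 s v g) / h ^ 16 := by
      intro g
      rw [← Finset.mul_sum, ← Finset.mul_sum]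
      have b1 : p * ∑ γ, x g γ ≤ 1 := by
        have := P.st.sum_le g
        have : 0 ≤ ∑ c, x g c := Finset.sum_nonneg fun c _ => P.st.nn g c
        nlinarith
      have b2 : ((n1 s v g + 3 * h ^ 2 * n2 s v g) / h ^ 8) ^ 2 ≤
        (2 * n1 s v g + 18 * h ^ 4 * n2 s v g) / h ^ 16 := by
        rw [div_pow, ← pow_mul]
        refine div_le_div_of_nonneg_right ?_ (by positivity)
        nth_rewrite 2 [← n1_sq s v g]
        nth_rewrite 2 [← n2_sq s v g]
        nlinarith [sq_nonneg (n1 s v g - 3 * h ^ 2 * n2 s v g)]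
      exact (mul_le_of_le_one_right (by positivity) b1).trans b2
    have e2 : ∑ g, (2 * n1 s v g + 18 * h ^ 4 * n2 s v g) / h ^ 16 ≤ 22 / h ^ 2 := by
      rw [← Finset.sum_div, Finset.sum_add_distrib, ← Finset.mul_sum, ← Finset.mul_sum]
      have b1 := n1_sum s v
      have b2 := n2_sum s v
      have b3 : 18 * h ^ 4 * ∑ g, n2 s v g ≤ 18 * h ^ 4 * h ^ 10 := by gcongr
      have b4 : h ^ 8 ≤ h ^ 14 := pow_le_pow_right₀ s.hh (by norm_num)
      have b5 : h ^ 12 ≤ h ^ 14 := pow_le_pow_right₀ s.hh (by norm_num)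
      have b6 : 2 * ∑ g, n1 s v g + 18 * h ^ 4 * ∑ g, n2 s v g ≤ 22 * h ^ 14 := by
        have : 18 * h ^ 4 * h ^ 10 = 18 * h ^ 14 := by ring
        linarith
      refine (div_le_div_of_nonneg_right b6 (by positivity)).trans (le_of_eq ?_)
      field_simp
    have e3 := mul_le_mul_of_nonneg_left ((Finset.sum_le_sum fun g _ => e1 g).trans e2) (sq_nonneg h)
    refine e3.trans (le_of_eq ?_)
    field_simp

end
end NB


namespace NB
open Finset
open scoped Classical
set_option linter.unusedSectionVars false
set_option linter.unusedVariables false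

section
variable {V E C : Type} [Fintype V] [Fintype E] [Fintype C] {h N : ℝ}
variable {s : Setup V E C h N} {U : Finset E} {x : E → C → ℝ} {r B p : ℝ}

def close (s : Setup V E C h N) (e f : E) : Prop := e = f ∨ s.adj e f ∨ s.J1 e f ∨ s.J2 e f

lemma close_symm (s : Setup V E C h N) {e f : E} (hc : close s e f) : close s f e := by
  rcases hc with h | h | h | h
  · exact Or.inl h.symm
  · exact Or.inr (Or.inl (s.adj_symm h))
  · exact Or.inr (Or.inr (Or.inl (s.J1s _ _ h)))
  · exact Or.inr (Or.inr (Or.inr (s.J2s _ _ h)))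

lemma close_card (s : Setup V E C h N) (e : E) : ((univ.filter (close s e)).card : ℝ) ≤ 5 * h ^ 8 := by
  obtain ⟨v, hv⟩ := s.inc_ex e
  have hsub : univ.filter (close s e) ⊆ {e} ∪ (s.star v ∪ s.star (s.oth v e)) ∪
      (univ.filter (s.J1 e) ∪ univ.filter (s.J2 e)) := by
    intro f hf
    have hf := (mem_filter.mp hf).2
    simp only [mem_union, mem_singleton, Setup.star, mem_filter, mem_univ, true_and]
    rcases hf with h | ⟨_, w, hw, hwf⟩ | h | h
    · exact Or.inl (Or.inl h.symm)
    · rcases s.inc_two v w e hv hw with rfl | rfl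
      · exact Or.inl (Or.inr (Or.inl hwf))
      · exact Or.inl (Or.inr (Or.inr hwf))
    · exact Or.inr (Or.inl h)
    · exact Or.inr (Or.inr h)
  have h1 : (univ.filter (close s e)).card ≤ 1 + ((s.star v).card + (s.star (s.oth v e)).card) +
      ((univ.filter (s.J1 e)).card + (univ.filter (s.J2 e)).card) := by
    refine (Finset.card_le_card hsub).trans ?_
    refine (Finset.card_union_le _ _).trans (add_le_add ?_ (Finset.card_union_le _ _))
    refine (Finset.card_union_le _ _).trans (add_le_add ?_ (Finset.card_union_le _ _))
    simp
  have h2 : ((univ.filter (close s e)).card : ℝ) ≤ 1 + ((s.star v).card + (s.star (s.oth v e)).card) +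
      ((univ.filter (s.J1 e)).card + (univ.filter (s.J2 e)).card) := by exact_mod_cast h1
  have a1 := s.deg v
  have a2 := s.deg (s.oth v e)
  have a3 := s.J1d e
  have a4 := s.J2d e
  have b1 : 1 ≤ h ^ 8 := one_le_pow₀ s.hh
  have b2 : h ^ 4 ≤ h ^ 8 := pow_le_pow_right₀ s.hh (by norm_num)
  have b3 : h ^ 2 ≤ h ^ 8 := pow_le_pow_right₀ s.hh (by norm_num)
  unfold Setup.star at h2
  linarith

lemma ends_card (s : Setup V E C h N) (e : E) :
    ((univ.filter fun v => s.inc v e).card : ℝ) ≤ 2 := by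
  obtain ⟨v, hv⟩ := s.inc_ex e
  have : univ.filter (fun v => s.inc v e) ⊆ {v, s.oth v e} := by
    intro w hw
    have := s.inc_two v w e hv (mem_filter.mp hw).2
    simpa using this
  exact_mod_cast (Finset.card_le_card this).trans Finset.card_le_two

noncomputable def SS (s : Setup V E C h N) (v : V) : Finset (E × C) :=
  univ.filter fun i => ∃ e, s.inc v e ∧ close s e i.1

lemma biUnion_card {X Y : Type} (S : Finset X) (f : X → Finset Y) (a b : ℝ) (hb : 0 ≤ b)
    (hS : (S.card : ℝ) ≤ a) (hf : ∀ y, ((f y).card : ℝ) ≤ b) : ((S.biUnion f).card : ℝ) ≤ a * b := by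
  have h1 : ((S.biUnion f).card : ℝ) ≤ ∑ y ∈ S, ((f y).card : ℝ) := by
    exact_mod_cast Finset.card_biUnion_le
  refine h1.trans ((Finset.sum_le_sum fun y _ => hf y).trans ?_)
  rw [Finset.sum_const, nsmul_eq_mul]
  exact mul_le_mul_of_nonneg_right hS hb

lemma dep_card (s : Setup V E C h N) (v : V) :
    ((univ.filter fun w => w = v ∨ ¬ Disjoint (SS s v) (SS s w)).card : ℝ) ≤ 51 * h ^ 24 := by
  have h0 : 0 < h := lt_of_lt_of_le one_pos s.hh
  set T := (((s.star v).biUnion fun e => univ.filter (close s e)).biUnion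
    fun e => univ.filter (close s e)).biUnion fun e => univ.filter fun w => s.inc w e with hT
  have hsub : (univ.filter fun w => w = v ∨ ¬ Disjoint (SS s v) (SS s w)) ⊆ {v} ∪ T := by
    intro w hw
    have hw := (mem_filter.mp hw).2
    rw [mem_union, mem_singleton]
    rcases hw with h | h
    · exact Or.inl h
    · right
      rw [Finset.not_disjoint_iff] at h
      obtain ⟨i, hi1, hi2⟩ := h
      obtain ⟨e, he, hc⟩ := (mem_filter.mp hi1).2
      obtain ⟨e', he', hc'⟩ := (mem_filter.mp hi2).2
      rw [hT, mem_biUnion]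
      refine ⟨e', ?_, by simpa using he'⟩
      rw [mem_biUnion]
      refine ⟨i.1, ?_, by simpa using close_symm s hc'⟩
      rw [mem_biUnion]
      exact ⟨e, by simpa [Setup.star] using he, by simpa using hc⟩
  have hTc : (T.card : ℝ) ≤ h ^ 8 * (5 * h ^ 8) * (5 * h ^ 8) * 2 := by
    refine biUnion_card _ _ _ _ (by norm_num) ?_ (ends_card s)
    refine biUnion_card _ _ _ _ (by positivity) ?_ (close_card s)
    exact biUnion_card _ _ _ _ (by positivity) (s.deg v) (close_card s)
  have h1 := (Finset.card_le_card hsub).trans (Finset.card_union_le _ _)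
  rw [Finset.card_singleton] at h1
  have h2 : ((univ.filter fun w => w = v ∨ ¬ Disjoint (SS s v) (SS s w)).card : ℝ) ≤ 1 + T.card := by
    exact_mod_cast h1
  have b1 : 1 ≤ h ^ 24 := one_le_pow₀ s.hh
  have : h ^ 8 * (5 * h ^ 8) * (5 * h ^ 8) * 2 = 50 * h ^ 24 := by ring
  linarith

lemma filter_card_eq {ι : Type} [Fintype ι] (q : ι → Prop) (i1 i2 : DecidablePred q) :
    (@Finset.filter ι q i1 univ).card = (@Finset.filter ι q i2 univ).card := by
  rw [Subsingleton.elim i1 i2]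

lemma dep_card2 (s : Setup V E C h N) (v : V)
    (inst : DecidablePred fun w => w = v ∨ ¬ Disjoint (SS s v) (SS s w)) :
    ((@Finset.filter V (fun w => w = v ∨ ¬ Disjoint (SS s v) (SS s w)) inst univ).card : ℝ)
      ≤ 51 * h ^ 24 := by
  have := dep_card s v
  refine le_trans ?_ this
  exact le_of_eq (congrArg _ (filter_card_eq _ _ _))

lemma mem_SS (s : Setup V E C h N) {v : V} {e f : E} (c : C) (he : s.inc v e) (hc : close s e f) :
    (f, c) ∈ SS s v := mem_filter.mpr ⟨mem_univ _, e, he, hc⟩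

lemma nb_close (s : Setup V E C h N) {e f : E} (hf : f ∈ s.nb e) : close s e f := by
  simp only [Setup.nb, mem_filter, mem_univ, true_and] at hf
  exact Or.inr (Or.inl hf)

lemma sum_card_le {ι : Type} (T : Finset ι) (g : ι → ℝ) (M K : ℝ) (hM : 0 ≤ M) (hg : ∀ i, g i ≤ M)
    (hT : (T.card : ℝ) ≤ K) (hK : K * M ≤ 1 / 4) : ∑ i ∈ T, g i ≤ 1 / 4 := by
  refine (Finset.sum_le_sum fun w _ => hg w).trans ?_
  rw [Finset.sum_const, nsmul_eq_mul]
  exact (mul_le_mul_of_nonneg_right hT hM).trans hK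

set_option maxHeartbeats 1000000 in
lemma Par.exists_good (P : Par s U x r B p) (δ : ℝ) (hN : 0 ≤ N)
    (hbig : 51 * h ^ 24 * ((h ^ 8 + h ^ 8 * (N * h ^ 8) + 1) * Real.exp (22 - h * δ)) ≤ 1 / 4) :
    ∃ ω : E × C → Bool, (∀ e c, ω (e, c) = true → x e c ≠ 0) ∧
      (∀ e ∈ U, 1 - δ ≤ FF s p x e ω) ∧
      (∀ v, ∀ c ∈ (s.star v).biUnion s.L,
        HH s p x v c ω ≤ r * (1 - p + 3 * p ^ 2 + B / h ^ 8) + δ) ∧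
      (∀ v, ZZ s v ω ≤ 4 * B / h ^ 4 + δ) := by
  have h0 := P.h0
  set A : V → (E × C → Bool) → Prop := fun v ω =>
    ((∃ e ∈ (s.star v).filter (· ∈ U), FF s p x e ω < 1 - δ) ∨
    (∃ c ∈ (s.star v).biUnion s.L, r * (1 - p + 3 * p ^ 2 + B / h ^ 8) + δ < HH s p x v c ω)) ∨
    4 * B / h ^ 4 + δ < ZZ s v ω with hA
  have hPr : ∀ v, Pr (mu p x) (A v) ≤ (h ^ 8 + h ^ 8 * (N * h ^ 8) + 1) * Real.exp (22 - h * δ) := by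
    intro v
    refine (Pr_or P.isP _ _).trans ?_
    rw [add_mul, add_mul, one_mul]
    refine add_le_add ((Pr_or P.isP _ _).trans (add_le_add ?_ ?_)) (P.tail_ZZ v δ)
    · refine (Pr_exists P.isP _ _).trans ?_
      refine (Finset.sum_le_sum (g := fun _ => Real.exp (22 - h * δ)) fun e he => ?_).trans ?_
      · refine (P.tail_FF e (mem_filter.mp he).2 δ).trans (Real.exp_le_exp.mpr (by linarith))
      · rw [Finset.sum_const, nsmul_eq_mul]
        refine mul_le_mul_of_nonneg_right ?_ (Real.exp_pos _).le
        refine le_trans ?_ (s.deg v)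
        exact_mod_cast Finset.card_le_card (Finset.filter_subset _ _)
    · refine (Pr_exists P.isP _ _).trans ?_
      refine (Finset.sum_le_sum (g := fun _ => Real.exp (22 - h * δ)) fun c _ => ?_).trans ?_
      · refine (P.tail_HH v c δ).trans (Real.exp_le_exp.mpr (by linarith))
      · rw [Finset.sum_const, nsmul_eq_mul]
        refine mul_le_mul_of_nonneg_right ?_ (Real.exp_pos _).le
        exact biUnion_card _ _ _ _ (by positivity) (s.deg v) s.Ld
  have hM0 : 0 ≤ (h ^ 8 + h ^ 8 * (N * h ^ 8) + 1) * Real.exp (22 - h * δ) := by positivity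
  generalize (h ^ 8 + h ^ 8 * (N * h ^ 8) + 1) * Real.exp (22 - h * δ) = M at hM0 hPr hbig
  obtain ⟨ω, hw, hno⟩ := lll P.isP A (SS s) (by
    intro v ω ω' hh
    have hg : ∀ e, s.inc v e → ∀ f, close s e f → ∀ c, ω (f, c) = ω' (f, c) :=
      fun e he f hf c => hh _ (mem_SS s c he hf)
    have a1 : ∀ e ∈ (s.star v).filter (· ∈ U), FF s p x e ω = FF s p x e ω' := by
      intro e he
      have he : s.inc v e := by simpa [Setup.star] using (mem_filter.mp he).1
      unfold FF
      refine Finset.sum_congr rfl fun c _ => ?_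
      rw [cl_dep _ _ ω ω' fun f hf => hg e he f (nb_close s hf) c]
    have a2 : ∀ c, HH s p x v c ω = HH s p x v c ω' := by
      intro c
      unfold HH
      refine Finset.sum_congr rfl fun e he => ?_
      have he : s.inc v e := by simpa [Setup.star] using he
      congr 1
      unfold tm
      congr 1
      · refine cl_dep _ _ _ _ fun f hf => hg e he f (nb_close s ?_) c
        rw [s.nb_eq he]; exact mem_union_right _ hf
      · refine Finset.prod_congr rfl fun d _ => ?_
        rw [mt_dep s e d ω ω' (hg e he e (Or.inl rfl) d) fun f hf => hg e he f (nb_close s hf) d]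
    have a3 : ZZ s v ω = ZZ s v ω' := by
      unfold ZZ
      congr 1
      refine Finset.sum_congr rfl fun c _ => ?_
      have : bad s v c ω ↔ bad s v c ω' := by
        unfold bad
        refine exists_congr fun e => and_congr_right fun he => ?_
        rw [hg e he e (Or.inl rfl) c]
        refine and_congr_right fun _ => exists_congr fun f => exists_congr fun d =>
          and_congr_right fun hsp => ?_
        rw [hg e he f ?_ d]
        rcases hsp with ⟨k, _⟩ | ⟨k, _⟩
        · exact Or.inr (Or.inr (Or.inl k))
        · exact Or.inr (Or.inr (Or.inr k))
      simp only [this]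
    simp only [hA, eq_iff_iff]
    rw [a3]
    refine or_congr (or_congr ?_ ?_) Iff.rfl
    · exact exists_congr fun e => and_congr_right fun he => by rw [a1 e he]
    · exact exists_congr fun c => and_congr_right fun hc => by rw [a2 c]) (by
    intro v
    refine sum_card_le _ _ _ (51 * h ^ 24) hM0 hPr ?_ hbig
    exact dep_card2 s v _)
  refine ⟨ω, ?_, ?_, ?_, ?_⟩
  · intro e c hω hx
    have : wt (mu p x) ω = 0 := Finset.prod_eq_zero (Finset.mem_univ (e, c)) (by simp [mu, hω, hx])
    linarith
  · intro e he
    obtain ⟨v, hv⟩ := s.inc_ex e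
    by_contra hcon
    push Not at hcon
    exact hno v (Or.inl (Or.inl ⟨e, mem_filter.mpr ⟨by simpa [Setup.star] using hv, he⟩, hcon⟩))
  · intro v c hc
    by_contra hcon
    push Not at hcon
    exact hno v (Or.inl (Or.inr ⟨c, hc, hcon⟩))
  · intro v
    by_contra hcon
    push Not at hcon
    exact hno v (Or.inr hcon)

end
end NB


namespace NB
open Finset
open scoped Classical
set_option linter.unusedSectionVars false
set_option linter.unusedVariables false

section
variable {V E C : Type} [Fintype V] [Fintype E] [Fintype C] {h N : ℝ}
variable {s : Setup V E C h N} {U : Finset E} {x : E → C → ℝ} {r B p : ℝ}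

def good (s : Setup V E C h N) (ω : E × C → Bool) (e : E) (c : C) : Prop :=
  mt s e c ω ≠ 0 ∧ ∀ f c', s.sp e c f c' → ω (f, c') ≠ true

noncomputable def Col (s : Setup V E C h N) (ω : E × C → Bool) : Finset E :=
  univ.filter fun e => ∃ c, good s ω e c

noncomputable def ph [Nonempty C] (s : Setup V E C h N) (ω : E × C → Bool) (e : E) : C :=
  Classical.epsilon (good s ω e)

def rem [Nonempty C] (s : Setup V E C h N) (ω : E × C → Bool) (e : E) (c : C) : Prop :=
  ∃ f ∈ Col s ω, s.sp e c f (ph s ω f)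

noncomputable def nu [Nonempty C] (s : Setup V E C h N) (U : Finset E) (p : ℝ) (x : E → C → ℝ)
    (ω : E × C → Bool) (e : E) (c : C) : ℝ :=
  if e ∈ U \ Col s ω ∧ ¬ rem s ω e c then x e c * (cl (s.nb e) c ω / kp p x (s.nb e) c) else 0

noncomputable def xn [Nonempty C] (s : Setup V E C h N) (U : Finset E) (p : ℝ) (x : E → C → ℝ)
    (ω : E × C → Bool) (e : E) (c : C) : ℝ :=
  nu s U p x ω e c / ∑ d, nu s U p x ω e d

variable [Nonempty C] {ω : E × C → Bool}

lemma ph_spec {e : E} (he : e ∈ Col s ω) : good s ω e (ph s ω e) :=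
  Classical.epsilon_spec (mem_filter.mp he).2

lemma rem_card (s : Setup V E C h N) (ω : E × C → Bool) (e : E) :
    ((univ.filter (rem s ω e)).card : ℝ) ≤ 4 * h ^ 4 := by
  have h0 : 0 < h := lt_of_lt_of_le one_pos s.hh
  have hsub : univ.filter (rem s ω e) ⊆ (univ.filter (s.J1 e)).image (ph s ω) ∪
      (univ.filter (s.J2 e)).biUnion fun f => univ.filter (s.R (ph s ω f)) := by
    intro c hc
    obtain ⟨f, hf, hsp⟩ := (mem_filter.mp hc).2
    rw [mem_union, mem_image, mem_biUnion]
    rcases hsp with ⟨h1, h2⟩ | ⟨h1, h2⟩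
    · exact Or.inl ⟨f, mem_filter.mpr ⟨mem_univ _, h1⟩, h2.symm⟩
    · exact Or.inr ⟨f, mem_filter.mpr ⟨mem_univ _, h1⟩, mem_filter.mpr ⟨mem_univ _, s.Rs _ _ h2⟩⟩
  have h1 := (Finset.card_le_card hsub).trans (Finset.card_union_le _ _)
  have h2 : ((univ.filter (rem s ω e)).card : ℝ) ≤ ((univ.filter (s.J1 e)).image (ph s ω)).card +
    ((univ.filter (s.J2 e)).biUnion fun f => univ.filter (s.R (ph s ω f))).card := by
    exact_mod_cast h1
  have h3 : (((univ.filter (s.J1 e)).image (ph s ω)).card : ℝ) ≤ h ^ 4 :=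
    le_trans (by exact_mod_cast Finset.card_image_le) (s.J1d e)
  have h4 : (((univ.filter (s.J2 e)).biUnion fun f => univ.filter (s.R (ph s ω f))).card : ℝ) ≤
      h ^ 2 * (3 * h ^ 2) :=
    biUnion_card _ _ _ _ (by positivity) (s.J2d e) fun f => s.Rd _
  nlinarith

lemma Par.z_le (P : Par s U x r B p) (e : E) (c : C) :
    0 ≤ x e c * (cl (s.nb e) c ω / kp p x (s.nb e) c) ∧
    x e c * (cl (s.nb e) c ω / kp p x (s.nb e) c) ≤ 2 * B / h ^ 8 := by
  have h0 := P.h0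
  have hk := P.kp_nb2 e c
  have h1 := P.st.nn e c
  have h2 := P.st.le e c
  have h3 := cl_nn (s.nb e) c ω
  have h4 := cl_le (s.nb e) c ω
  have h5 : cl (s.nb e) c ω / kp p x (s.nb e) c ≤ 2 := by
    rw [div_le_iff₀ (by linarith)]; linarith
  have h6 : 0 ≤ cl (s.nb e) c ω / kp p x (s.nb e) c := div_nonneg h3 (by linarith)
  refine ⟨mul_nonneg h1 h6, ?_⟩
  refine (mul_le_mul h2 h5 h6 (h1.trans h2)).trans (le_of_eq ?_)
  ring

lemma Par.nu_nn (P : Par s U x r B p) (e : E) (c : C) : 0 ≤ nu s U p x ω e c := by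
  unfold nu
  split_ifs
  · exact (P.z_le e c).1
  · exact le_rfl

lemma Par.nu_le (P : Par s U x r B p) (e : E) (c : C) : nu s U p x ω e c ≤ 2 * B / h ^ 8 := by
  unfold nu
  split_ifs
  · exact (P.z_le e c).2
  · exact (P.z_le (ω := ω) e c).1.trans (P.z_le e c).2

lemma Par.nu_sum (P : Par s U x r B p) (e : E) (he : e ∈ U \ Col s ω) {δ : ℝ}
    (hF : 1 - δ ≤ FF s p x e ω) (hδ : 8 * B / h ^ 4 ≤ δ) :
    1 - 2 * δ ≤ ∑ d, nu s U p x ω e d := by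
  have h0 := P.h0
  have h1 : FF s p x e ω ≤ ∑ d, (nu s U p x ω e d + if rem s ω e d then 2 * B / h ^ 8 else 0) := by
    unfold FF
    refine Finset.sum_le_sum fun c _ => ?_
    by_cases hr : rem s ω e c
    · rw [if_pos hr]
      linarith [P.nu_nn (ω := ω) e c, (P.z_le (ω := ω) e c).2]
    · rw [if_neg hr, add_zero]
      unfold nu
      rw [if_pos ⟨he, hr⟩]
  rw [Finset.sum_add_distrib, ← Finset.sum_filter, Finset.sum_const, nsmul_eq_mul] at h1
  have hB := P.B1
  have h2 := mul_le_mul_of_nonneg_right (rem_card s ω e) (show 0 ≤ 2 * B / h ^ 8 by positivity)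
  have h3 : 4 * h ^ 4 * (2 * B / h ^ 8) = 8 * B / h ^ 4 := by field_simp; ring
  linarith

lemma Par.bad_card (P : Par s U x r B p) (v : V) :
    (((s.star v).filter fun e => e ∉ Col s ω ∧ ∃ c, mt s e c ω ≠ 0).card : ℝ) ≤ ZZ s v ω * h ^ 8 := by
  have h0 := P.h0
  unfold ZZ
  rw [div_mul_cancel₀ _ (by positivity), Finset.sum_boole]
  norm_cast
  refine Finset.card_le_card_of_injOn (fun e => Classical.epsilon fun c => mt s e c ω ≠ 0) ?_ ?_
  · intro e he
    obtain ⟨h1, h2, h3⟩ := mem_filter.mp he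
    have h4 : mt s e (Classical.epsilon fun c => mt s e c ω ≠ 0) ω ≠ 0 := Classical.epsilon_spec h3
    refine mem_filter.mpr ⟨mem_univ _, e, (mem_filter.mp h1).2, (mt_one s e _ ω h4).1, ?_⟩
    by_contra hcon
    push Not at hcon
    exact h2 (mem_filter.mpr ⟨mem_univ _, _, h4, hcon⟩)
  · intro e he f hf hef
    obtain ⟨h1, h2, h3⟩ := mem_filter.mp he
    obtain ⟨k1, k2, k3⟩ := mem_filter.mp hf
    have h4 : mt s e (Classical.epsilon fun c => mt s e c ω ≠ 0) ω ≠ 0 := Classical.epsilon_spec h3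
    have k4 : mt s f (Classical.epsilon fun c => mt s f c ω ≠ 0) ω ≠ 0 := Classical.epsilon_spec k3
    simp only at hef
    rw [← hef] at k4
    exact mt_uniq s (mem_filter.mp h1).2 (mem_filter.mp k1).2 h4 k4

lemma Par.nu_deg (P : Par s U x r B p) (v : V) (c : C) :
    ∑ e ∈ s.star v, nu s U p x ω e c ≤ HH s p x v c ω / (1 - p * r) + 2 * B * ZZ s v ω := by
  have h0 := P.h0
  have hB := P.B1
  have hpr : 1 / 2 ≤ 1 - p * r := by nlinarith [P.p0, P.p4, P.r0, P.r1]
  have h1 : ∀ e ∈ s.star v, nu s U p x ω e c ≤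
      x e c / kp p x (s.far v e) c * tm s e v c ω / (1 - p * r) +
      if e ∉ Col s ω ∧ ∃ c, mt s e c ω ≠ 0 then 2 * B / h ^ 8 else 0 := by
    intro e he
    have hv : s.inc v e := (mem_filter.mp he).2
    have hx := P.st.nn e c
    have hf := P.kp_far2 v e c
    have hn := P.kp_near v e c
    have hT := tm_nn s e v c ω
    have hpos : 0 ≤ x e c / kp p x (s.far v e) c * tm s e v c ω / (1 - p * r) :=
      div_nonneg (mul_nonneg (div_nonneg hx (by linarith)) hT) (by linarith)
    by_cases hc : e ∉ Col s ω ∧ ∃ c, mt s e c ω ≠ 0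
    · rw [if_pos hc]
      linarith [P.nu_le (ω := ω) e c]
    · rw [if_neg hc, add_zero]
      by_cases hu : e ∈ U \ Col s ω ∧ ¬ rem s ω e c
      · have hm : ∀ c, mt s e c ω = 0 := by
          intro d
          by_contra hd
          exact hc ⟨(mem_sdiff.mp hu.1).2, d, hd⟩
        have e1 : nu s U p x ω e c = x e c * (cl (s.nb e) c ω / kp p x (s.nb e) c) := by
          unfold nu; rw [if_pos hu]
        have e2 : tm s e v c ω = cl (s.far v e) c ω := by
          unfold tm; simp [hm]
        have e3 : kp p x (s.nb e) c = kp p x (s.near v e) c * kp p x (s.far v e) c := by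
          unfold kp; rw [s.nb_eq hv, Finset.prod_union (s.near_far hv)]
        have e4 : cl (s.nb e) c ω = cl (s.near v e) c ω * cl (s.far v e) c ω := by
          unfold cl; rw [s.nb_eq hv, Finset.prod_union (s.near_far hv)]
        have c1 := cl_le (s.near v e) c ω
        have c2 := cl_nn (s.far v e) c ω
        rw [e1, e2, e3, e4]
        have e5 : x e c / kp p x (s.far v e) c * cl (s.far v e) c ω / (1 - p * r) =
          x e c * (cl (s.far v e) c ω / ((1 - p * r) * kp p x (s.far v e) c)) := by
          field_simp
        rw [e5]
        refine mul_le_mul_of_nonneg_left ?_ hx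
        refine div_le_div₀ c2 (by nlinarith) (by nlinarith) ?_
        exact mul_le_mul_of_nonneg_right hn (by linarith)
      · have e1 : nu s U p x ω e c = 0 := by
          unfold nu; rw [if_neg hu]
        rw [e1]; exact hpos
  refine (Finset.sum_le_sum h1).trans ?_
  rw [Finset.sum_add_distrib, ← Finset.sum_div, ← Finset.sum_filter, Finset.sum_const, nsmul_eq_mul]
  refine add_le_add (le_of_eq rfl) ?_
  refine (mul_le_mul_of_nonneg_right (P.bad_card v) (show 0 ≤ 2 * B / h ^ 8 by positivity)).trans
    (le_of_eq ?_)
  field_simp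

lemma Par.step_claim (P : Par s U x r B p) (hω : ∀ e c, ω (e, c) = true → x e c ≠ 0)
    (hc : Claim s (U \ Col s ω) (xn s U p x ω)) : Claim s U x := by
  obtain ⟨φ, h1, h2⟩ := hc
  have hnu : ∀ e ∈ U \ Col s ω, nu s U p x ω e (φ e) ≠ 0 := by
    intro e he h0
    exact h1 e he (by unfold xn; rw [h0, zero_div])
  have hx : ∀ e ∈ U \ Col s ω, x e (φ e) ≠ 0 ∧ ¬ rem s ω e (φ e) ∧ cl (s.nb e) (φ e) ω ≠ 0 := by
    intro e he
    have := hnu e he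
    unfold nu at this
    split_ifs at this with hh
    · refine ⟨fun h0 => this (by rw [h0, zero_mul]), hh.2, fun h0 => this (by rw [h0]; simp)⟩
    · exact absurd rfl this
  have hact : ∀ e ∈ Col s ω, ω (e, ph s ω e) = true := fun e he =>
    (mt_one s e _ ω (ph_spec he).1).1
  have hmix : ∀ e ∈ Col s ω, ∀ f ∈ U \ Col s ω, ¬ s.conf f (φ f) e (ph s ω e) := by
    intro e he f hf hcf
    rcases hcf with ⟨k1, k2⟩ | k1
    · refine (hx f hf).2.2 (cl_zero (f := e) ?_ ?_)
      · simp only [Setup.nb, mem_filter, mem_univ, true_and]; exact k1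
      · rw [k2]; exact hact e he
    · exact (hx f hf).2.1 ⟨e, he, k1⟩
  refine ⟨fun e => if e ∈ Col s ω then ph s ω e else φ e, ?_, ?_⟩
  · intro e he
    by_cases hC : e ∈ Col s ω
    · simp only [if_pos hC]
      exact hω _ _ (hact e hC)
    · simp only [if_neg hC]
      exact (hx e (mem_sdiff.mpr ⟨he, hC⟩)).1
  · intro e he f hf hcf
    by_cases hC : e ∈ Col s ω <;> by_cases hD : f ∈ Col s ω
    · simp only [if_pos hC, if_pos hD] at hcf
      rcases hcf with ⟨k1, k2⟩ | k1
      · have := (mt_one s e _ ω (ph_spec hC).1).2.1 f (by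
          simp only [Setup.nb, mem_filter, mem_univ, true_and]; exact k1)
        rw [k2, hact f hD] at this
        exact absurd this (by simp)
      · exact (ph_spec hC).2 _ _ k1 (hact f hD)
    · simp only [if_pos hC, if_neg hD] at hcf
      exact hmix e hC f (mem_sdiff.mpr ⟨hf, hD⟩) (s.conf_symm hcf)
    · simp only [if_neg hC, if_pos hD] at hcf
      exact hmix f hD e (mem_sdiff.mpr ⟨he, hC⟩) hcf
    · simp only [if_neg hC, if_neg hD] at hcf
      exact h2 e (mem_sdiff.mpr ⟨he, hC⟩) f (mem_sdiff.mpr ⟨hf, hD⟩) hcf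

lemma Par.step (P : Par s U x r B p) (δ r' : ℝ) (hN : 0 ≤ N) (hδ0 : 0 ≤ δ) (hδ1 : δ ≤ 1 / 4)
    (hδ : 8 * B / h ^ 4 ≤ δ)
    (hbig : 51 * h ^ 24 * ((h ^ 8 + h ^ 8 * (N * h ^ 8) + 1) * Real.exp (22 - h * δ)) ≤ 1 / 4)
    (hr : (r * (1 - p + 3 * p ^ 2 + B / h ^ 8) + δ) / (1 - p * r) + 2 * B * (4 * B / h ^ 4 + δ)
      ≤ (1 - 2 * δ) * r') (hr0 : 0 ≤ r') :
    ∃ U' x', St s U' x' r' (4 * B) ∧ (Claim s U' x' → Claim s U x) := by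
  obtain ⟨ω, w1, w2, w3, w4⟩ := P.exists_good δ hN hbig
  have h0 := P.h0
  have hB := P.B1
  have hpr : 1 / 2 ≤ 1 - p * r := by nlinarith [P.p0, P.p4, P.r0, P.r1]
  have hS : ∀ e ∈ U \ Col s ω, 1 - 2 * δ ≤ ∑ d, nu s U p x ω e d := fun e he =>
    P.nu_sum e he (w2 e (mem_sdiff.mp he).1) hδ
  have hz : ∀ e ∉ U \ Col s ω, ∀ c, nu s U p x ω e c = 0 := by
    intro e he c
    unfold nu
    rw [if_neg fun hh => he hh.1]
  have hS0 : ∀ e, 0 ≤ ∑ d, nu s U p x ω e d := fun e => Finset.sum_nonneg fun d _ => P.nu_nn e d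
  have hsupp : ∀ e c, nu s U p x ω e c ≠ 0 → c ∈ s.L e := by
    intro e c hne
    refine P.st.supp e c fun hx => hne ?_
    unfold nu
    split_ifs
    · rw [hx, zero_mul]
    · rfl
  have hle : ∀ e c, xn s U p x ω e c ≤ nu s U p x ω e c / (1 - 2 * δ) := by
    intro e c
    unfold xn
    by_cases he : e ∈ U \ Col s ω
    · exact div_le_div_of_nonneg_left (P.nu_nn e c) (by linarith) (hS e he)
    · rw [hz e he c]; simp
  refine ⟨U \ Col s ω, xn s U p x ω, ⟨?_, ?_, ?_, ?_, ?_, ?_⟩, P.step_claim w1⟩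
  · intro e c
    exact div_nonneg (P.nu_nn e c) (hS0 e)
  · intro e c
    refine (hle e c).trans ?_
    rw [div_le_iff₀ (by linarith)]
    have h1 := P.nu_le (ω := ω) e c
    have h2 : 4 * B / h ^ 8 = 2 * (2 * B / h ^ 8) := by ring
    have h3 : 0 ≤ 2 * B / h ^ 8 := by positivity
    rw [h2]
    nlinarith
  · intro e he
    unfold xn
    rw [← Finset.sum_div]
    exact div_self (by linarith [hS e he])
  · intro e he c
    unfold xn
    rw [hz e he c, zero_div]
  · intro e c hne
    refine hsupp e c fun h1 => hne ?_
    unfold xn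
    rw [h1, zero_div]
  · intro v c
    by_cases hc : c ∈ (s.star v).biUnion s.L
    · refine (Finset.sum_le_sum fun e _ => hle e c).trans ?_
      rw [← Finset.sum_div, div_le_iff₀ (by linarith), mul_comm r']
      refine (P.nu_deg v c).trans (le_trans ?_ hr)
      refine add_le_add ?_ ?_
      · exact div_le_div_of_nonneg_right (w3 v c hc) (by linarith)
      · exact mul_le_mul_of_nonneg_left (w4 v) (by linarith)
    · rw [Finset.sum_eq_zero]
      · exact hr0
      · intro e he
        by_contra hne
        refine hc (mem_biUnion.mpr ⟨e, he, hsupp e c fun h1 => hne ?_⟩)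
        unfold xn
        rw [h1, zero_div]

end
end NB


namespace NB
open Finset
open scoped Classical
set_option linter.unusedSectionVars false
set_option linter.unusedVariables false

section

lemma ev_big (N δ : ℝ) (hN : 0 ≤ N) (hδ : 0 < δ) : ∀ᶠ h : ℝ in Filter.atTop,
    51 * h ^ 24 * ((h ^ 8 + h ^ 8 * (N * h ^ 8) + 1) * Real.exp (22 - h * δ)) ≤ 1 / 4 := by
  have hK : 0 < 51 * (N + 2) * Real.exp 22 := by positivity
  have hl := (isLittleO_pow_exp_pos_mul_atTop 40 hδ).def
    (show 0 < 1 / (4 * (51 * (N + 2) * Real.exp 22)) by positivity)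
  filter_upwards [hl, Filter.eventually_ge_atTop 1] with h h1 h2
  have h0 : 0 < h := by linarith
  rw [Real.norm_of_nonneg (by positivity), Real.norm_of_nonneg (by positivity)] at h1
  have a1 : h ^ 8 ≤ h ^ 16 := pow_le_pow_right₀ h2 (by norm_num)
  have a2 : 1 ≤ h ^ 16 := one_le_pow₀ h2
  have a3 : h ^ 8 + h ^ 8 * (N * h ^ 8) + 1 ≤ (N + 2) * h ^ 16 := by
    have : h ^ 8 * (N * h ^ 8) = N * h ^ 16 := by ring
    rw [this]; linarith
  have a4 : Real.exp (22 - h * δ) = Real.exp 22 * Real.exp (-(δ * h)) := by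
    rw [← Real.exp_add]; congr 1; ring
  have a5 : Real.exp (δ * h) * Real.exp (-(δ * h)) = 1 := by rw [← Real.exp_add]; simp
  calc _ ≤ 51 * h ^ 24 * (((N + 2) * h ^ 16) * Real.exp (22 - h * δ)) := by gcongr
    _ = (51 * (N + 2) * Real.exp 22) * Real.exp (-(δ * h)) * h ^ 40 := by rw [a4]; ring
    _ ≤ (51 * (N + 2) * Real.exp 22) * Real.exp (-(δ * h)) *
        (1 / (4 * (51 * (N + 2) * Real.exp 22)) * Real.exp (δ * h)) := by gcongr
    _ = (51 * (N + 2) * Real.exp 22) * (1 / (4 * (51 * (N + 2) * Real.exp 22))) *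
        (Real.exp (δ * h) * Real.exp (-(δ * h))) := by ring
    _ = 1 / 4 := by rw [a5]; field_simp

lemma ev_div (a b : ℝ) (n : ℕ) (hn : n ≠ 0) (hb : 0 < b) : ∀ᶠ h : ℝ in Filter.atTop,
    a / h ^ n ≤ b := by
  have := (Filter.tendsto_pow_atTop (α := ℝ) hn).const_div_atTop a
  filter_upwards [this.eventually_le_const hb] with h hh using hh

lemma arith {r η p γ δ B h : ℝ} (hη : 0 < η) (hη1 : η ≤ 1) (hp : p = η / 12) (hγ : γ = p * η / 400)
    (hδ : δ = γ / (5 * B)) (hB : 1 ≤ B) (hh : 1 ≤ h) (h8 : 8 * B / h ^ 4 ≤ δ)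
    (r1 : 1 / 100 ≤ r) (r2 : r ≤ 1 - η) :
    (r * (1 - p + 3 * p ^ 2 + B / h ^ 8) + δ) / (1 - p * r) + 2 * B * (4 * B / h ^ 4 + δ)
      ≤ (1 - 2 * δ) * (r - γ) := by
  have p0 : 0 < p := by rw [hp]; positivity
  have p1 : p ≤ 1 / 12 := by rw [hp]; linarith
  have g0 : 0 < γ := by rw [hγ]; positivity
  have d0 : 0 < δ := by rw [hδ]; positivity
  have hBd : 5 * (B * δ) = γ := by rw [hδ]; field_simp
  have hb : B / h ^ 8 ≤ δ := by
    refine le_trans ?_ h8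
    refine div_le_div₀ (by linarith) (by linarith) (by positivity) (pow_le_pow_right₀ hh (by norm_num))
  have hb4 : 4 * B / h ^ 4 ≤ δ / 2 := by
    have : 8 * B / h ^ 4 = 2 * (4 * B / h ^ 4) := by ring
    linarith
  have hpr : 1 / 2 ≤ 1 - p * r := by nlinarith
  have key : (r * (1 - p + 3 * p ^ 2 + B / h ^ 8) + δ) / (1 - p * r) ≤ r - 3 * γ + 4 * δ := by
    rw [div_le_iff₀ (by linarith)]
    have k1 : r * (B / h ^ 8) ≤ δ := by nlinarith [show 0 ≤ B / h ^ 8 by positivity]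
    have k2 : 3 * γ ≤ r * p * (1 - r - 3 * p) := by
      have : 3 * γ = 1 / 100 * p * (3 / 4 * η) := by rw [hγ]; ring
      rw [this]
      refine mul_le_mul (by nlinarith) (by linarith) (by positivity) (by positivity)
    have k3 : 2 * δ ≤ 4 * δ * (1 - p * r) := by nlinarith
    have k4 : 3 * γ * (1 - p * r) ≤ 3 * γ := by nlinarith [mul_pos p0 (show 0 < r by linarith)]
    nlinarith
  have m1 : 2 * B * (4 * B / h ^ 4 + δ) ≤ 3 * (B * δ) := by nlinarith
  have m2 : 2 * δ * (r - γ) ≤ 2 * δ := by nlinarith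
  have m3 : δ ≤ B * δ := by nlinarith
  nlinarith

lemma iter (N η : ℝ) (hN : 0 ≤ N) (hη : 0 < η) (hη1 : η ≤ 1) (k : ℕ) : ∀ B : ℝ, 1 ≤ B →
    ∀ᶠ h : ℝ in Filter.atTop, ∀ (V E C : Type) [Fintype V] [Fintype E] [Fintype C] [Nonempty C]
      (s : Setup V E C h N) (U : Finset E) (x : E → C → ℝ) (r : ℝ),
      r ≤ 1 - η → r ≤ 1 / 100 + k * (η / 12 * η / 400) → St s U x r B → Claim s U x := by
  induction k with
  | zero =>
    intro B hB
    filter_upwards [ev_div (4 * B) (1 / 100) 4 (by norm_num) (by norm_num)] with h h1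
    intro V E C _ _ _ _ s U x r _ hr st
    exact final st (by simpa using hr) h1
  | succ k ih =>
    intro B hB
    obtain ⟨p, hp⟩ : ∃ p, p = η / 12 := ⟨_, rfl⟩
    rw [← hp] at ih ⊢
    obtain ⟨γ, hγ⟩ : ∃ γ, γ = p * η / 400 := ⟨_, rfl⟩
    rw [← hγ] at ih ⊢
    obtain ⟨δ, hδ⟩ : ∃ δ, δ = γ / (5 * B) := ⟨_, rfl⟩
    have p0 : 0 < p := by rw [hp]; positivity
    have g0 : 0 < γ := by rw [hγ]; positivity
    have d0 : 0 < δ := by rw [hδ]; positivity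
    have p1 : p ≤ 1 / 12 := by rw [hp]; linarith
    have g1 : γ ≤ 1 / 400 := by rw [hγ]; nlinarith
    have d1 : δ ≤ 1 / 4 := by
      rw [hδ, div_le_iff₀ (by positivity)]; nlinarith
    filter_upwards [ev_div (4 * B) (1 / 100) 4 (by norm_num) (by norm_num),
      ev_div (8 * B) δ 4 (by norm_num) d0, ev_big N δ hN d0, Filter.eventually_ge_atTop (4 * B),
      ih (4 * B) (by linarith)] with h h1 h2 h3 h4 h5
    intro V E C _ _ _ _ s U x r hr hr2 st
    by_cases hr3 : r ≤ 1 / 100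
    · exact final st hr3 h1
    · push Not at hr3
      have P : Par s U x r B p := ⟨st, p0.le, by linarith, by linarith, by linarith, hB, h4⟩
      obtain ⟨U', x', st', hc⟩ := P.step δ (r - γ) hN d0.le d1 h2 h3
        (arith hη hη1 hp hγ hδ hB s.hh h2 hr3.le hr) (by linarith)
      refine hc (h5 V E C s U' x' (r - γ) (by linarith) ?_ st')
      push_cast at hr2
      linarith

lemma iter_all (N η B : ℝ) (hN : 0 ≤ N) (hη : 0 < η) (hη1 : η ≤ 1) (hB : 1 ≤ B) :
    ∀ᶠ h : ℝ in Filter.atTop, ∀ (V E C : Type) [Fintype V] [Fintype E] [Fintype C] [Nonempty C]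
      (s : Setup V E C h N) (U : Finset E) (x : E → C → ℝ),
      St s U x (1 - η) B → Claim s U x := by
  obtain ⟨k, hk⟩ := exists_nat_ge (1 / (η / 12 * η / 400))
  filter_upwards [iter N η hN hη hη1 k B hB] with h hh
  intro V E C _ _ _ _ s U x st
  refine hh V E C s U x (1 - η) le_rfl ?_ st
  rw [div_le_iff₀ (by positivity)] at hk
  linarith

end
end NB


namespace NB
open Finset
open scoped Classical
set_option linter.unusedSectionVars false
set_option linter.unusedVariables false

section

lemma mem_f {ι : Type} [Fintype ι] (q : ι → Prop) (inst : DecidablePred q) {i : ι}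
    (hi : i ∈ @Finset.filter ι q inst univ) : q i := (mem_filter.mp hi).2

lemma R_card (Z : Finset ℤ) (h : ℝ) (hh : 1 ≤ h) (c : Z) :
    ((univ.filter fun d : Z => |((c : ℤ) : ℝ) - ((d : ℤ) : ℝ)| < h ^ 2).card : ℝ) ≤ 3 * h ^ 2 := by
  have h1 : (univ.filter fun d : Z => |((c : ℤ) : ℝ) - ((d : ℤ) : ℝ)| < h ^ 2).card ≤
      (Finset.Icc ((c : ℤ) - ⌊h ^ 2⌋) ((c : ℤ) + ⌊h ^ 2⌋)).card := by
    refine Finset.card_le_card_of_injOn Subtype.val ?_ (Subtype.val_injective.injOn)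
    intro d hd
    have hd := (mem_filter.mp hd).2
    have h2 : |(c : ℤ) - (d : ℤ)| ≤ ⌊h ^ 2⌋ := by
      rw [Int.le_floor]
      push_cast
      exact hd.le
    rw [abs_le] at h2
    simp only [Finset.coe_Icc, Set.mem_Icc]
    constructor <;> linarith [h2.1, h2.2]
  rw [Int.card_Icc] at h1
  have hf : 0 ≤ ⌊h ^ 2⌋ := Int.floor_nonneg.mpr (by positivity)
  have h3 : ((univ.filter fun d : Z => |((c : ℤ) : ℝ) - ((d : ℤ) : ℝ)| < h ^ 2).card : ℤ) ≤
      2 * ⌊h ^ 2⌋ + 1 := by omega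
  have h4 : ((univ.filter fun d : Z => |((c : ℤ) : ℝ) - ((d : ℤ) : ℝ)| < h ^ 2).card : ℝ) ≤
      2 * (⌊h ^ 2⌋ : ℝ) + 1 := by exact_mod_cast h3
  have := Int.floor_le (h ^ 2)
  have : 1 ≤ h ^ 2 := one_le_pow₀ hh
  linarith

variable {V : Type} [Fintype V] [DecidableEq V] (H : SimpleGraph V) [DecidableRel H.Adj]

noncomputable def mkS (L : Sym2 V → Finset ℤ) (Z : Finset ℤ)
    (J₁ J₂ : SimpleGraph (Sym2 V)) [DecidableRel J₁.Adj] [DecidableRel J₂.Adj]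
    (h N : ℝ) (hh : 1 ≤ h) (hd : ∀ v, (H.degree v : ℝ) ≤ h ^ 8)
    (h1 : ∀ e, (J₁.degree e : ℝ) ≤ h ^ 4) (h2 : ∀ e, (J₂.degree e : ℝ) ≤ h ^ 2)
    (hL : ∀ e ∈ H.edgeSet, ((L e).card : ℝ) ≤ N * h ^ 8) :
    Setup V H.edgeSet Z h N where
  inc v e := v ∈ (e : Sym2 V)
  oth v e := if hv : v ∈ (e : Sym2 V) then Sym2.Mem.other hv else v
  J1 e f := J₁.Adj e f
  J2 e f := J₂.Adj e f
  R c d := |((c : ℤ) : ℝ) - ((d : ℤ) : ℝ)| < h ^ 2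
  L e := univ.filter fun z : Z => (z : ℤ) ∈ L e
  hh := hh
  inc_ex e := ⟨_, Sym2.out_fst_mem (e : Sym2 V)⟩
  inc_oth v e hv := by
    rw [dif_pos hv]; exact Sym2.other_mem hv
  oth_ne v e hv := by
    rw [dif_pos hv]; exact Sym2.other_ne (H.not_isDiag_of_mem_edgeSet e.2) hv
  inc_two v w e hv hw := by
    rw [dif_pos hv]
    rw [← Sym2.other_spec hv, Sym2.mem_iff] at hw
    exact hw
  inc_lin v w e f hne a b c d := by
    apply Subtype.ext
    rw [(Sym2.mem_and_mem_iff hne).mp ⟨a, b⟩, (Sym2.mem_and_mem_iff hne).mp ⟨c, d⟩]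
  J1s e f := fun a => a.symm
  J2s e f := fun a => a.symm
  J1i e := J₁.irrefl
  J2i e := J₂.irrefl
  Rs c d := by
    intro a; rw [abs_sub_comm]; exact a
  deg v := by
    refine le_trans ?_ (hd v)
    rw [← H.card_incidenceFinset_eq_degree]
    refine Nat.cast_le.mpr (Finset.card_le_card_of_injOn Subtype.val ?_ Subtype.val_injective.injOn)
    intro e he
    have he := mem_f _ _ (Finset.mem_coe.mp he)
    simp only [SimpleGraph.coe_incidenceFinset]
    exact ⟨e.2, he⟩
  J1d e := by
    refine le_trans ?_ (h1 e)
    rw [← SimpleGraph.card_neighborFinset_eq_degree]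
    refine Nat.cast_le.mpr (Finset.card_le_card_of_injOn Subtype.val ?_ Subtype.val_injective.injOn)
    intro f hf
    have hf := mem_f _ _ (Finset.mem_coe.mp hf)
    simpa using hf
  J2d e := by
    refine le_trans ?_ (h2 e)
    rw [← SimpleGraph.card_neighborFinset_eq_degree]
    refine Nat.cast_le.mpr (Finset.card_le_card_of_injOn Subtype.val ?_ Subtype.val_injective.injOn)
    intro f hf
    have hf := mem_f _ _ (Finset.mem_coe.mp hf)
    simpa using hf
  Rd c := R_card Z h hh c
  Ld e := by
    refine le_trans ?_ (hL e e.2)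
    refine Nat.cast_le.mpr (Finset.card_le_card_of_injOn Subtype.val ?_ Subtype.val_injective.injOn)
    intro z hz
    exact (mem_filter.mp hz).2

lemma degX (Δ : ℕ) (ε : ℝ) (hX : ∀ X : Finset V, Odd X.card →
      (∑ v ∈ X, ((Δ : ℝ) - (H.degree v : ℝ))) -
        ((H.edgeFinset.filter (fun e => (X.filter (fun v => v ∈ e)).card = 1)).card : ℝ)
        ≤ ε * (Δ : ℝ) * (X.card : ℝ) / 10) (v : V) :
    (Δ : ℝ) - 2 * H.degree v ≤ ε * Δ / 10 := by
  have h1 := hX {v} (by simp)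
  rw [Finset.sum_singleton, Finset.card_singleton] at h1
  have h2 : (H.edgeFinset.filter (fun e => (({v} : Finset V).filter (fun v => v ∈ e)).card = 1)).card
      ≤ H.degree v := by
    rw [← H.card_incidenceFinset_eq_degree]
    refine Finset.card_le_card ?_
    intro e he
    obtain ⟨a, b⟩ := mem_filter.mp he
    obtain ⟨w, hw⟩ := Finset.card_eq_one.mp b
    have hw' : w ∈ ({v} : Finset V).filter (fun v => v ∈ e) := by rw [hw]; simp
    obtain ⟨c, d⟩ := mem_filter.mp hw'
    rw [mem_singleton] at c
    subst c
    rw [SimpleGraph.mem_incidenceFinset]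
    exact ⟨SimpleGraph.mem_edgeFinset.mp a, d⟩
  have h3 : ((H.edgeFinset.filter (fun e => (({v} : Finset V).filter (fun v => v ∈ e)).card = 1)).card : ℝ)
      ≤ H.degree v := Nat.cast_le.mpr h2
  push_cast at h1
  linarith

lemma core (L : Sym2 V → Finset ℤ) (J₁ J₂ : SimpleGraph (Sym2 V)) [DecidableRel J₁.Adj]
    [DecidableRel J₂.Adj] (h N a : ℝ) (ha : 0 < a) (hh : 1 ≤ h) (hd : ∀ v, (H.degree v : ℝ) ≤ h ^ 8)
    (h1 : ∀ e, (J₁.degree e : ℝ) ≤ h ^ 4) (h2 : ∀ e, (J₂.degree e : ℝ) ≤ h ^ 2)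
    (hL : ∀ e ∈ H.edgeSet, ((L e).card : ℝ) ≤ N * h ^ 8)
    (hL2 : ∀ e ∈ H.edgeSet, ∀ v ∈ e, (H.degree v : ℝ) + a * h ^ 8 ≤ (L e).card)
    (hE1 : ∀ e f, J₁.Adj e f → e ∈ H.edgeSet ∧ f ∈ H.edgeSet)
    (hE2 : ∀ e f, J₂.Adj e f → e ∈ H.edgeSet ∧ f ∈ H.edgeSet)
    (it : ∀ (V E C : Type) [Fintype V] [Fintype E] [Fintype C] [Nonempty C]
      (s : Setup V E C h N) (U : Finset E) (x : E → C → ℝ),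
      St s U x (1 - a / (1 + a)) (1 / a + 1) → Claim s U x) :
    ∃ c : Sym2 V → ℤ,
      (∀ e ∈ H.edgeSet, c e ∈ L e) ∧
      (∀ e ∈ H.edgeSet, ∀ f ∈ H.edgeSet, e ≠ f → (∃ v, v ∈ e ∧ v ∈ f) → c e ≠ c f) ∧
      (∀ e f, J₁.Adj e f → c e ≠ c f) ∧
      (∀ e f, J₂.Adj e f → h ^ 2 ≤ |(c e : ℝ) - (c f : ℝ)|) := by
  have h0 : 0 < h := by linarith
  set Z : Finset ℤ := insert 0 (univ.biUnion L) with hZ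
  have hsub : ∀ e, L e ⊆ Z := fun e z hz =>
    mem_insert_of_mem (mem_biUnion.mpr ⟨e, mem_univ _, hz⟩)
  have : Nonempty Z := ⟨⟨0, mem_insert_self _ _⟩⟩
  let s := mkS H L Z J₁ J₂ h N hh hd h1 h2 hL
  have hcard : ∀ e, (s.L e).card = (L e).card := by
    intro e
    refine Finset.card_bij (fun z _ => (z : ℤ)) (fun z hz => (mem_filter.mp hz).2)
      (fun z _ w _ => Subtype.ext) ?_
    intro z hz
    exact ⟨⟨z, hsub _ hz⟩, mem_filter.mpr ⟨mem_univ _, hz⟩, rfl⟩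
  have hpos : ∀ e : H.edgeSet, a * h ^ 8 ≤ ((L e).card : ℝ) := by
    intro e
    obtain ⟨v, hv⟩ := s.inc_ex e
    have := hL2 e e.2 v hv
    have : (0 : ℝ) ≤ H.degree v := by positivity
    linarith
  have hah : 0 < a * h ^ 8 := by positivity
  let x : H.edgeSet → Z → ℝ := fun e c => if c ∈ s.L e then 1 / ((L e).card : ℝ) else 0
  have hx0 : ∀ e c, 0 ≤ x e c := by
    intro e c
    simp only [x]
    split_ifs
    · positivity
    · exact le_rfl
  have hxle : ∀ e c, x e c ≤ 1 / ((L e).card : ℝ) := by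
    intro e c
    simp only [x]
    split_ifs
    · exact le_rfl
    · positivity
  have st : St s univ x (1 - a / (1 + a)) (1 / a + 1) := by
    refine ⟨hx0, ?_, ?_, ?_, ?_, ?_⟩
    · intro e c
      refine (hxle e c).trans ((one_div_le_one_div_of_le hah (hpos e)).trans ?_)
      have : 1 / (a * h ^ 8) = 1 / a / h ^ 8 := by field_simp
      rw [this]
      gcongr
      linarith
    · intro e _
      simp only [x]
      rw [← Finset.sum_filter, Finset.sum_const, nsmul_eq_mul]
      have : (univ.filter fun c => c ∈ s.L e) = s.L e := by ext; simp
      rw [this, hcard]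
      have := hpos e
      exact mul_one_div_cancel (by linarith)
    · intro e he
      exact absurd (mem_univ e) he
    · intro e c hne
      by_contra hcon
      exact hne (if_neg hcon)
    · intro v c
      have hdv : (0 : ℝ) ≤ H.degree v := by positivity
      have hcs : ((s.star v).card : ℝ) ≤ H.degree v := by
        rw [← H.card_incidenceFinset_eq_degree]
        refine Nat.cast_le.mpr
          (Finset.card_le_card_of_injOn Subtype.val ?_ Subtype.val_injective.injOn)
        intro e he
        have he := (mem_filter.mp he).2
        simp only [SimpleGraph.coe_incidenceFinset]
        exact ⟨e.2, he⟩
      have hb : ∀ e ∈ s.star v, x e c ≤ 1 / ((H.degree v : ℝ) + a * h ^ 8) := by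
        intro e he
        refine (hxle e c).trans (one_div_le_one_div_of_le (by linarith) ?_)
        exact hL2 e e.2 v (mem_filter.mp he).2
      refine (Finset.sum_le_card_nsmul _ _ _ hb).trans ?_
      rw [nsmul_eq_mul]
      refine (mul_le_mul_of_nonneg_right hcs (by positivity)).trans ?_
      have : 1 - a / (1 + a) = 1 / (1 + a) := by field_simp; ring
      rw [this, mul_one_div, div_le_div_iff₀ (by linarith) (by linarith)]
      nlinarith [hd v]
  obtain ⟨φ, p1, p2⟩ := it V H.edgeSet Z s univ x st
  refine ⟨fun e => if he : e ∈ H.edgeSet then (φ ⟨e, he⟩ : ℤ) else 0, ?_, ?_, ?_, ?_⟩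
  · intro e he
    simp only [dif_pos he]
    have := st.supp _ _ (p1 ⟨e, he⟩ (mem_univ _))
    exact (mem_filter.mp this).2
  · rintro e he f hf hne ⟨v, hv, hw⟩ heq
    simp only [dif_pos he, dif_pos hf] at heq
    refine p2 ⟨e, he⟩ (mem_univ _) ⟨f, hf⟩ (mem_univ _) (Or.inl ⟨⟨?_, v, hv, hw⟩, Subtype.ext heq⟩)
    intro h
    exact hne (congrArg Subtype.val h)
  · intro e f hJ heq
    obtain ⟨he, hf⟩ := hE1 e f hJ
    simp only [dif_pos he, dif_pos hf] at heq
    exact p2 ⟨e, he⟩ (mem_univ _) ⟨f, hf⟩ (mem_univ _) (Or.inr (Or.inl ⟨hJ, Subtype.ext heq⟩))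
  · intro e f hJ
    obtain ⟨he, hf⟩ := hE2 e f hJ
    simp only [dif_pos he, dif_pos hf]
    by_contra hcon
    push Not at hcon
    exact p2 ⟨e, he⟩ (mem_univ _) ⟨f, hf⟩ (mem_univ _) (Or.inr (Or.inr ⟨hJ, hcon⟩))

end
end NB

theorem stmt_0 (ε : ℝ) (hε : 0 < ε) :
    ∃ Δ₀ : ℕ, ∀ Δ : ℕ, Δ₀ ≤ Δ →
    ∀ (V : Type) [Fintype V] [DecidableEq V] (H : SimpleGraph V) [DecidableRel H.Adj],
    (∀ v, H.degree v ≤ Δ) →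
    ∀ L : Sym2 V → Finset ℤ,
    (∀ v w, H.Adj v w → ((L s(v, w)).card : ℤ) =
      ⌈(3 / 2 + ε) * (Δ : ℝ) - ((Δ : ℝ) - (H.degree v : ℝ))
        - ((Δ : ℝ) - (H.degree w : ℝ)) - 3 * (Δ : ℝ) ^ ((1 : ℝ) / 2)⌉) →
    ∀ (J₁ J₂ : SimpleGraph (Sym2 V)) [DecidableRel J₁.Adj] [DecidableRel J₂.Adj],
    (∀ e f, J₁.Adj e f → e ∈ H.edgeSet ∧ f ∈ H.edgeSet) →
    (∀ e f, J₂.Adj e f → e ∈ H.edgeSet ∧ f ∈ H.edgeSet) →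
    (∀ e, (J₁.degree e : ℝ) ≤ (Δ : ℝ) ^ ((1 : ℝ) / 2)) →
    (∀ e, (J₂.degree e : ℝ) ≤ (Δ : ℝ) ^ ((1 : ℝ) / 4)) →
    (∀ X : Finset V, Odd X.card →
      (∑ v ∈ X, ((Δ : ℝ) - (H.degree v : ℝ))) -
        ((H.edgeFinset.filter (fun e => (X.filter (fun v => v ∈ e)).card = 1)).card : ℝ)
        ≤ ε * (Δ : ℝ) * (X.card : ℝ) / 10) →
    ∃ c : Sym2 V → ℤ,
      (∀ e ∈ H.edgeSet, c e ∈ L e) ∧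
      (∀ e ∈ H.edgeSet, ∀ f ∈ H.edgeSet, e ≠ f → (∃ v, v ∈ e ∧ v ∈ f) → c e ≠ c f) ∧
      (∀ e f, J₁.Adj e f → c e ≠ c f) ∧
      (∀ e f, J₂.Adj e f → (Δ : ℝ) ^ ((1 : ℝ) / 4) ≤ |(c e : ℝ) - (c f : ℝ)|) := by
  obtain ⟨a, hadef⟩ : ∃ a, a = 4 / 5 * ε := ⟨_, rfl⟩
  have ha : 0 < a := by rw [hadef]; positivity
  have hev := (NB.iter_all (5 / 2 + ε) (a / (1 + a)) (1 / a + 1) (by positivity) (by positivity)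
    (by rw [div_le_one (by positivity)]; linarith)
    (by have : 0 < 1 / a := by positivity
        linarith)).and
    ((Filter.eventually_ge_atTop (1 : ℝ)).and (NB.ev_div 20 ε 4 (by norm_num) hε))
  have ht : Filter.Tendsto (fun n : ℕ => (n : ℝ) ^ ((1 : ℝ) / 8)) Filter.atTop Filter.atTop :=
    (tendsto_rpow_atTop (by norm_num)).comp tendsto_natCast_atTop_atTop
  obtain ⟨Δ₀, hΔ₀⟩ := Filter.eventually_atTop.mp (ht.eventually hev)
  refine ⟨Δ₀, fun Δ hΔ V _ _ H _ hdeg L hL J₁ J₂ _ _ hE1 hE2 hd1 hd2 hX => ?_⟩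
  obtain ⟨it, hh, hs⟩ := hΔ₀ Δ hΔ
  obtain ⟨h, hhdef⟩ : ∃ h, h = (Δ : ℝ) ^ ((1 : ℝ) / 8) := ⟨_, rfl⟩
  rw [← hhdef] at it hh hs
  have hD : (0 : ℝ) ≤ Δ := by positivity
  have e8 : h ^ 8 = Δ := by
    rw [hhdef, ← Real.rpow_natCast, ← Real.rpow_mul hD]; norm_num
  have e4 : (Δ : ℝ) ^ ((1 : ℝ) / 2) = h ^ 4 := by
    rw [hhdef, ← Real.rpow_natCast, ← Real.rpow_mul hD]; norm_num
  have e2 : (Δ : ℝ) ^ ((1 : ℝ) / 4) = h ^ 2 := by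
    rw [hhdef, ← Real.rpow_natCast, ← Real.rpow_mul hD]; norm_num
  rw [e4] at hL hd1
  rw [e2] at hd2 ⊢
  have hdeg' : ∀ v, (H.degree v : ℝ) ≤ Δ := fun v => Nat.cast_le.mpr (hdeg v)
  have hXX := NB.degX H Δ ε hX
  have h0 : 0 < h := by linarith
  have hs4 : 20 * h ^ 4 ≤ ε * Δ := by
    rw [div_le_iff₀ (by positivity)] at hs
    have : (Δ : ℝ) = h ^ 4 * h ^ 4 := by rw [← e8]; ring
    rw [this]
    nlinarith [show 0 < h ^ 4 by positivity]
  have hD1 : (1 : ℝ) ≤ Δ := by rw [← e8]; exact one_le_pow₀ hh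
  refine NB.core H L J₁ J₂ h (5 / 2 + ε) a ha hh (by rw [e8]; exact hdeg') hd1 hd2 ?_ ?_ hE1 hE2 it
  · intro e he
    induction e using Sym2.ind with
    | _ v w =>
      have h1 := hL v w he
      have h2 := Int.ceil_lt_add_one ((3 / 2 + ε) * (Δ : ℝ) - ((Δ : ℝ) - (H.degree v : ℝ))
        - ((Δ : ℝ) - (H.degree w : ℝ)) - 3 * h ^ 4)
      rw [← h1] at h2
      push_cast at h2
      rw [e8]
      have := hdeg' v
      have := hdeg' w
      have : 0 < h ^ 4 := by positivity
      linarith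
  · intro e he u hu
    induction e using Sym2.ind with
    | _ v w =>
      have h1 := hL v w he
      have h2 := Int.le_ceil ((3 / 2 + ε) * (Δ : ℝ) - ((Δ : ℝ) - (H.degree v : ℝ))
        - ((Δ : ℝ) - (H.degree w : ℝ)) - 3 * h ^ 4)
      rw [← h1] at h2
      push_cast at h2
      rw [e8, hadef]
      have := hXX v
      have := hXX w
      rcases Sym2.mem_iff.mp hu with rfl | rfl <;> linarith
end

section
/- For every real ε with 0 < ε ≤ 1/4 there exists Δ_ε such that the following holds for every integer Δ ≥ Δ_ε. Let H be a finite simple graph with vertex set V and maximum degree at most Δ, and let each edge e be assigned a finite nonempty list L(e) of colours such that for every edge e with endpoints v and w, |L(e)| ≥ (3/2 + ε)Δ − (Δ − d(v)) − (Δ − d(w)) − 3Δ^{1/2}. Suppose that for every set X ⊆ V with |X| odd, ∑_{v∈X}(Δ − d(v)) − e(X, V∖X) ≤ εΔ|X|/10. For each edge e set x_e = (1 + ε/2)/|L(e)|. Then: (i) for every vertex v, the sum of x_e over all edges e incident to v is at most 1; and (ii) for every X ⊆ V with |X| odd and |X| ≥ 3, the sum of x_e over all edges e with both endpoints in X is at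 most (|X| − 1)/2. (By Edmonds' characterisation of the matching polytope, these two families of inequalities say exactly that the vector (x_e) lies in the matching polytope of H.) -/
/-- Lemma: under the list-size and odd-set conditions, the vector
`x_e = (1 + ε/2)/|L(e)|` satisfies Edmonds' matching-polytope inequalities. -/
theorem stmt_2 (ε : ℝ) (hε : 0 < ε) (hε' : ε ≤ 1 / 4) :
    ∃ Δ₀ : ℕ, ∀ Δ : ℕ, Δ₀ ≤ Δ →
    ∀ (V : Type) [Fintype V] [DecidableEq V] (H : SimpleGraph V) [DecidableRel H.Adj],
    (∀ v, H.degree v ≤ Δ) →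
    ∀ L : Sym2 V → Finset ℤ,
    (∀ e ∈ H.edgeSet, (L e).Nonempty) →
    (∀ v w, H.Adj v w →
      (3 / 2 + ε) * (Δ : ℝ) - ((Δ : ℝ) - (H.degree v : ℝ))
        - ((Δ : ℝ) - (H.degree w : ℝ)) - 3 * (Δ : ℝ) ^ ((1 : ℝ) / 2)
        ≤ ((L s(v, w)).card : ℝ)) →
    (∀ X : Finset V, Odd X.card →
      (∑ v ∈ X, ((Δ : ℝ) - (H.degree v : ℝ))) -
        ((H.edgeFinset.filter (fun e => (X.filter (fun v => v ∈ e)).card = 1)).card : ℝ)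
        ≤ ε * (Δ : ℝ) * (X.card : ℝ) / 10) →
    (∀ v : V, ∑ e ∈ H.edgeFinset.filter (fun e => v ∈ e),
        (1 + ε / 2) / ((L e).card : ℝ) ≤ 1) ∧
    (∀ X : Finset V, Odd X.card → 3 ≤ X.card →
      ∑ e ∈ H.edgeFinset.filter (fun e => (X.filter (fun v => v ∈ e)).card = 2),
        (1 + ε / 2) / ((L e).card : ℝ) ≤ ((X.card : ℝ) - 1) / 2) := by
  classical
  obtain ⟨Δ₀, hΔ₀⟩ := exists_nat_ge (3600 / ε ^ 2)
  refine ⟨Δ₀ + 1, ?_⟩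
  intro Δ hΔ V _ _ H _ hdeg L hL hlist hodd
  have hΔ' : (Δ₀ : ℝ) + 1 ≤ (Δ : ℝ) := by exact_mod_cast hΔ
  generalize hD : (Δ : ℝ) = D at *
  have hD0 : 0 < D := by
    have : (0 : ℝ) ≤ Δ₀ := Nat.cast_nonneg _
    linarith
  have hsq : 3 * D ^ ((1 : ℝ) / 2) ≤ ε * D / 20 := by
    rw [← Real.sqrt_eq_rpow]
    have h1 : 3600 / ε ^ 2 ≤ D := by linarith
    rw [div_le_iff₀ (by positivity)] at h1
    have h2 : Real.sqrt D ≤ ε * D / 60 := by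
      apply Real.sqrt_le_iff.mpr
      refine ⟨by positivity, ?_⟩
      nlinarith
    linarith
  generalize D ^ ((1 : ℝ) / 2) = R at *
  have hA0 : ∀ v, 0 ≤ D - (H.degree v : ℝ) := by
    intro v
    have : (H.degree v : ℝ) ≤ (Δ : ℝ) := by exact_mod_cast hdeg v
    linarith
  have hdegE : ∀ v, (H.edgeFinset.filter (fun e => v ∈ e)).card = H.degree v := by
    intro v
    rw [← H.incidenceFinset_eq_filter v, H.card_incidenceFinset_eq_degree]
  have hA1 : ∀ v, D - (H.degree v : ℝ) ≤ D / 2 + ε * D / 20 := by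
    intro v
    have h := hodd {v} (by simp)
    have h2 : H.edgeFinset.filter (fun e => (({v} : Finset V).filter (fun u => u ∈ e)).card = 1)
        = H.edgeFinset.filter (fun e => v ∈ e) := by
      apply Finset.filter_congr
      intro e _
      rw [Finset.filter_singleton]
      split_ifs with h <;> simp [h]
    rw [h2, hdegE] at h
    simp at h
    linarith
  constructor
  · intro v
    have key : ∀ e ∈ H.edgeFinset.filter (fun e => v ∈ e),
        (1 + ε / 2) / ((L e).card : ℝ) ≤ (1 + ε / 2) / ((H.degree v : ℝ) + ε * D * (9 / 10)) := by
      intro e he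
      rw [Finset.mem_filter, SimpleGraph.mem_edgeFinset] at he
      obtain ⟨he, hv⟩ := he
      obtain ⟨w, rfl⟩ := hv
      have h1 := hlist v w he
      have h2 := hA1 w
      apply div_le_div_of_nonneg_left (by positivity) (by positivity)
      linarith
    refine (Finset.sum_le_sum key).trans ?_
    rw [Finset.sum_const, hdegE, nsmul_eq_mul, ← mul_div_assoc, div_le_one (by positivity)]
    nlinarith [hA0 v]
  · intro X hX hX3
    set E1 := H.edgeFinset.filter (fun e => (X.filter (fun v => v ∈ e)).card = 1) with hE1
    set E2 := H.edgeFinset.filter (fun e => (X.filter (fun v => v ∈ e)).card = 2) with hE2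
    set A : V → ℝ := fun v => D - (H.degree v : ℝ) with hA
    set c : ℝ := 3 / 2 + ε * (19 / 20) with hc
    set g : V → ℝ := fun v => (1 + ε / 2) / (c * D - 2 * A v) with hg
    have hpos : ∀ v, 0 < c * D - 2 * A v := by
      intro v
      have := hA1 v
      have h3 : 0 < ε * D := by positivity
      simp only [hA, hc]
      linarith
    have hedge : ∀ e ∈ E2, (1 + ε / 2) / ((L e).card : ℝ) ≤
        ∑ v ∈ X, if v ∈ e then g v / 2 else 0 := by
      intro e he
      rw [hE2, Finset.mem_filter, SimpleGraph.mem_edgeFinset] at he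
      obtain ⟨he, hv⟩ := he
      rw [← Finset.sum_filter]
      induction e using Sym2.ind with
      | _ v w =>
      have hadj : H.Adj v w := he
      have hne := hadj.ne
      have hf : X.filter (fun u => u ∈ s(v, w)) = {v, w} := by
        apply Finset.eq_of_subset_of_card_le
        · intro u hu
          simpa using (Finset.mem_filter.mp hu).2
        · rw [hv, Finset.card_pair hne]
      rw [hf, Finset.sum_pair hne]
      have h1 := hlist v w hadj
      have hv := hpos v
      have hw := hpos w
      have h3 : (c * D - 2 * A v + (c * D - 2 * A w)) / 2 ≤ ((L s(v, w)).card : ℝ) := by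
        simp only [hA, hc]
        linarith
      simp only [hg]
      generalize c * D - 2 * A v = p at *
      generalize c * D - 2 * A w = q at *
      calc _ ≤ (1 + ε / 2) / ((p + q) / 2) :=
            div_le_div_of_nonneg_left (by positivity) (by positivity) h3
        _ ≤ _ := by
          have : (1 + ε / 2) / p / 2 + (1 + ε / 2) / q / 2 - (1 + ε / 2) / ((p + q) / 2)
              = (1 + ε / 2) * (p - q) ^ 2 / (2 * p * q * (p + q)) := by
            field_simp
            ring
          have h5 : 0 ≤ (1 + ε / 2) * (p - q) ^ 2 / (2 * p * q * (p + q)) := by positivity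
          linarith
    have hsplit : ∀ v ∈ X, ((E2.filter (fun e => v ∈ e)).card : ℝ)
        + ((E1.filter (fun e => v ∈ e)).card : ℝ) = (H.degree v : ℝ) := by
      intro v hvX
      rw [← hdegE v]
      norm_cast
      rw [← Finset.card_union_of_disjoint]
      · congr 1
        ext e
        simp only [hE1, hE2, Finset.mem_union, Finset.mem_filter]
        constructor
        · rintro (⟨⟨h, _⟩, h'⟩ | ⟨⟨h, _⟩, h'⟩) <;> exact ⟨h, h'⟩
        · rintro ⟨h, hve⟩
          have h1 : 1 ≤ (X.filter (fun u => u ∈ e)).card :=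
            Finset.card_pos.mpr ⟨v, Finset.mem_filter.mpr ⟨hvX, hve⟩⟩
          have h2 : (X.filter (fun u => u ∈ e)).card ≤ 2 := by
            induction e using Sym2.ind with
            | _ a b =>
            refine (Finset.card_le_card (t := {a, b}) ?_).trans Finset.card_le_two
            intro u hu
            simpa using (Finset.mem_filter.mp hu).2
          have h3 : (X.filter (fun u => u ∈ e)).card = 2 ∨
              (X.filter (fun u => u ∈ e)).card = 1 := by omega
          rcases h3 with h3 | h3
          · exact Or.inl ⟨⟨h, h3⟩, hve⟩
          · exact Or.inr ⟨⟨h, h3⟩, hve⟩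
      · rw [Finset.disjoint_left]
        intro e he he'
        simp only [hE1, hE2, Finset.mem_filter] at he he'
        omega
    have hE1sum : (E1.card : ℝ) = ∑ v ∈ X, ((E1.filter (fun e => v ∈ e)).card : ℝ) := by
      have : E1.card = ∑ v ∈ X, (E1.filter (fun e => v ∈ e)).card := by
        simp_rw [Finset.card_filter]
        rw [Finset.sum_comm, Finset.card_eq_sum_ones]
        apply Finset.sum_congr rfl
        intro e he
        rw [← Finset.card_filter]
        exact (Finset.mem_filter.mp he).2.symm
      exact_mod_cast this
    have hvert : ∀ v ∈ X, (∑ e ∈ E2, if v ∈ e then g v / 2 else 0) ≤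
        (1 + ε / 2) / (c * D) / 2 * (D + (A v - ((E1.filter (fun e => v ∈ e)).card : ℝ))) := by
      intro v hvX
      rw [← Finset.sum_filter, Finset.sum_const, nsmul_eq_mul]
      have h1 := hsplit v hvX
      have h2 := hpos v
      have h3 := hA0 v
      have h4 := hA1 v
      have h5 : (0 : ℝ) ≤ ((E1.filter (fun e => v ∈ e)).card : ℝ) := Nat.cast_nonneg _
      have h6 : (H.degree v : ℝ) = D - A v := by simp [hA]
      have hc0 : 0 < c := by positivity
      have h7 : 0 ≤ c * D - D - A v := by
        have h3 : 0 < ε * D := by positivity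
        simp only [hA, hc]
        linarith
      change 0 ≤ A v at h3
      simp only [hg]
      generalize ((E1.filter (fun e => v ∈ e)).card : ℝ) = n1 at *
      have h8 : ((E2.filter (fun e => v ∈ e)).card : ℝ) = D - A v - n1 := by linarith
      rw [h8]
      generalize A v = a at *
      have : (1 + ε / 2) / (c * D) / 2 * (D + (a - n1))
          - (D - a - n1) * ((1 + ε / 2) / (c * D - 2 * a) / 2)
          = (1 + ε / 2) * (a * (c * D - D - a + n1)) / (c * D * (c * D - 2 * a)) := by
        have := h2.ne'
        field_simp
        ring
      have h9 : 0 ≤ (1 + ε / 2) * (a * (c * D - D - a + n1)) / (c * D * (c * D - 2 * a)) := by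
        have : 0 ≤ c * D - D - a + n1 := by linarith
        positivity
      linarith
    have hfin := hodd X hX
    rw [hE1sum, ← Finset.sum_sub_distrib] at hfin
    have hc0 : 0 < c := by positivity
    calc _ ≤ ∑ e ∈ E2, ∑ v ∈ X, (if v ∈ e then g v / 2 else 0) := Finset.sum_le_sum hedge
      _ = ∑ v ∈ X, ∑ e ∈ E2, (if v ∈ e then g v / 2 else 0) := Finset.sum_comm
      _ ≤ _ := Finset.sum_le_sum hvert
      _ = (1 + ε / 2) / (c * D) / 2 *
          (X.card * D + ∑ v ∈ X, (A v - ((E1.filter (fun e => v ∈ e)).card : ℝ))) := by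
        rw [← Finset.mul_sum, Finset.sum_add_distrib, Finset.sum_const, nsmul_eq_mul]
      _ ≤ (1 + ε / 2) / (c * D) / 2 * (X.card * D + ε * D * X.card / 10) := by
        gcongr
      _ = (1 + ε / 2) * (1 + ε / 10) / c / 2 * X.card := by
        field_simp
      _ ≤ 2 / 3 / 2 * X.card := by
        have : (1 + ε / 2) * (1 + ε / 10) / c ≤ 2 / 3 := by
          rw [div_le_iff₀ hc0]
          simp only [hc]
          nlinarith
        gcongr
      _ ≤ _ := by
        have : (3 : ℝ) ≤ X.card := by exact_mod_cast hX3
        linarith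
end

section
/- Let G be a finite simple graph, let p, q, k be positive integers, and set t = ⌈(p−1)/q⌉ + 1. Suppose that for every assignment of finite lists L̃(v) ⊆ ℤ with |L̃(v)| ≥ k to the vertices of G there exists an L(t,1)-labelling f̃ of G with f̃(v) ∈ L̃(v) for every vertex v. Then for every assignment of finite lists L(v) ⊆ ℤ with |L(v)| ≥ q·k to the vertices of G there exists a map f with f(v) ∈ L(v) for every vertex v such that |f(u) − f(v)| ≥ p whenever u and v are adjacent in G and f(u) ≠ f(v) whenever u and v are at distance exactly two in G (i.e., f is an L(p,1)-labelling of G chosen from the lists L). This is the content of the paper's Proposition that λ^l_{p,q}(G) ≤ q·λ^l_{t,1}(G): its proof, which compresses each list L(v) to {⌈c/q⌉ : c ∈ L(v)}, applies the hypothesis, and lifts the resulting labelling back, yields exactly the stated separation of at least p on adjacent pairs and distinct labels on distance-two pairs. -/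
/-- Proposition: `λ^l_{p,q}(G) ≤ q·λ^l_{t,1}(G)` where `t = ⌈(p-1)/q⌉ + 1`,
stated in expanded form for list `L(p,1)`-type labellings chosen from lists. -/
theorem stmt_3 {V : Type*} [Fintype V] (G : SimpleGraph V)
    (p q k : ℕ) (hp : 1 ≤ p) (hq : 1 ≤ q) (hpq : q ≤ p) (hk : 1 ≤ k)
    (t : ℕ) (ht : (t : ℤ) = ⌈((p : ℚ) - 1) / (q : ℚ)⌉ + 1)
    (hyp : ∀ L' : V → Finset ℤ, (∀ v, k ≤ (L' v).card) →
      ∃ f : V → ℤ, (∀ v, f v ∈ L' v) ∧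
        (∀ u v, G.Adj u v → (t : ℤ) ≤ |f u - f v|) ∧
        (∀ u v, G.dist u v = 2 → f u ≠ f v)) :
    ∀ L : V → Finset ℤ, (∀ v, q * k ≤ (L v).card) →
      ∃ f : V → ℤ, (∀ v, f v ∈ L v) ∧
        (∀ u v, G.Adj u v → (p : ℤ) ≤ |f u - f v|) ∧
        (∀ u v, G.dist u v = 2 → f u ≠ f v) := by
  intro L hL
  have hq0 : (0 : ℤ) < q := by exact_mod_cast hq
  have htq : (p : ℤ) - 1 ≤ q * ((t : ℤ) - 1) := by
    have h1 : ((p : ℚ) - 1) / (q : ℚ) ≤ (⌈((p : ℚ) - 1) / (q : ℚ)⌉ : ℤ) := Int.le_ceil _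
    have h2 : ⌈((p : ℚ) - 1) / (q : ℚ)⌉ = (t : ℤ) - 1 := by omega
    rw [h2, div_le_iff₀ (by exact_mod_cast hq)] at h1
    have h3 : (p : ℤ) - 1 ≤ ((t : ℤ) - 1) * q := by exact_mod_cast h1
    linarith
  have key : ∀ a b : ℤ, (t : ℤ) ≤ a / q - b / q → (p : ℤ) ≤ a - b := by
    intro a b h
    have ha := Int.mul_ediv_add_emod a q
    have hb := Int.mul_ediv_add_emod b q
    have ha1 := Int.emod_nonneg a hq0.ne'
    have hb1 := Int.emod_lt_of_pos b hq0
    have h4 : (q : ℤ) * t ≤ q * (a / q - b / q) := mul_le_mul_of_nonneg_left h hq0.le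
    rw [mul_sub] at h4 htq
    omega
  obtain ⟨g, hg, hadj, hdist⟩ := hyp (fun v => (L v).image (fun c => c / (q : ℤ))) (by
    intro v
    have h := Finset.card_le_mul_card_image (f := fun c : ℤ => c / (q : ℤ)) (L v) q (by
      intro b _
      have hsub : ({x ∈ L v | x / (q : ℤ) = b} : Finset ℤ) ⊆ Finset.Ico (q * b) (q * b + q) := by
        intro x hx
        obtain ⟨_, hx⟩ := Finset.mem_filter.mp hx
        have h1 := Int.mul_ediv_add_emod x q
        have h2 := Int.emod_nonneg x hq0.ne'
        have h3 := Int.emod_lt_of_pos x hq0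
        rw [hx] at h1
        rw [Finset.mem_Ico]
        constructor <;> linarith
      refine (Finset.card_le_card hsub).trans ?_
      simp)
    exact Nat.le_of_mul_le_mul_left ((hL v).trans h) hq)
  have hg' : ∀ v, ∃ c ∈ L v, c / (q : ℤ) = g v := fun v => Finset.mem_image.mp (hg v)
  choose f hf hfg using hg'
  refine ⟨f, hf, ?_, ?_⟩
  · intro u v huv
    have h := hadj u v huv
    rw [← hfg u, ← hfg v] at h
    rcases le_abs.mp h with h | h
    · exact (key _ _ h).trans (le_abs_self _)
    · rw [neg_sub] at h
      rw [abs_sub_comm]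
      exact (key _ _ h).trans (le_abs_self _)
  · intro u v huv h
    apply hdist u v huv
    rw [← hfg u, ← hfg v, h]
end

section
/- For every integer k ≥ 1 define the graph G_k as follows: its vertices are x, y, z together with vertices u_1,…,u_k, v_1,…,v_k and w_1,…,w_{k−1}; each u_i is adjacent exactly to z and x, each v_i is adjacent exactly to z and y, each w_i is adjacent exactly to x and y, and in addition x and y are adjacent (there are no other edges). Then G_k has maximum degree exactly 2k, and the 3k+1 vertices other than z are pairwise at distance at most 2 in G_k; consequently the square G_k² contains a clique on 3k+1 = (3/2)·Δ(G_k) + 1 vertices, and hence χ(G_k²) ≥ (3/2)·Δ(G_k) + 1. -/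
open scoped Classical

/-- Wegner's example `G_k`: vertices `x = inl 0`, `y = inl 1`, `z = inl 2`,
`u_i`, `v_i` (`i < k`) and `w_i` (`i < k-1`); each `u_i` is adjacent exactly to
`z` and `x`, each `v_i` to `z` and `y`, each `w_i` to `x` and `y`, and `x` is
adjacent to `y`. -/
noncomputable def Gk (k : ℕ) :
    SimpleGraph (Fin 3 ⊕ Fin k ⊕ Fin k ⊕ Fin (k - 1)) :=
  SimpleGraph.fromRel (fun a b =>
    (a = Sum.inl 0 ∧ b = Sum.inl 1) ∨
    (∃ i : Fin k, a = Sum.inr (Sum.inl i) ∧ (b = Sum.inl 2 ∨ b = Sum.inl 0)) ∨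
    (∃ i : Fin k, a = Sum.inr (Sum.inr (Sum.inl i)) ∧ (b = Sum.inl 2 ∨ b = Sum.inl 1)) ∨
    (∃ i : Fin (k - 1), a = Sum.inr (Sum.inr (Sum.inr i)) ∧ (b = Sum.inl 0 ∨ b = Sum.inl 1)))

/-- The square of a graph: two distinct vertices are adjacent whenever they are
at distance at most two. -/
noncomputable def square {V : Type*} (G : SimpleGraph V) : SimpleGraph V :=
  SimpleGraph.fromRel (fun u v => G.Adj u v ∨ ∃ w, G.Adj u w ∧ G.Adj w v)


lemma deg_aux (k : ℕ) (hk : 1 ≤ k) (v : Fin 3 ⊕ Fin k ⊕ Fin k ⊕ Fin (k - 1)) :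
    (Gk k).degree v = match v with
      | Sum.inl _ => 2 * k
      | Sum.inr _ => 2 := by
  rw [← SimpleGraph.card_neighborFinset_eq_degree, SimpleGraph.neighborFinset_eq_filter,
    Finset.card_filter, Fintype.sum_sum_type, Fintype.sum_sum_type, Fintype.sum_sum_type,
    Fin.sum_univ_three]
  rcases v with a | a | a | a
  · fin_cases a <;> simp [Gk] <;> omega
  all_goals simp [Gk]

lemma clique_aux (k : ℕ) (hk : 1 ≤ k) :
    (square (Gk k)).IsClique {v | v ≠ Sum.inl 2} := by
  intro a ha b hb hab
  simp only [Set.mem_setOf_eq] at ha hb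
  refine (SimpleGraph.fromRel_adj _ _ _).2 ⟨hab, Or.inl ?_⟩
  rcases a with a | a | a | a <;> rcases b with b | b | b | b <;>
    (try fin_cases a) <;> (try fin_cases b) <;>
    simp [Gk] at ha hb hab ⊢ <;> try tauto

lemma card_aux (k : ℕ) (hk : 1 ≤ k) : (Finset.univ.filter
      (fun v : Fin 3 ⊕ Fin k ⊕ Fin k ⊕ Fin (k - 1) => v ≠ Sum.inl 2)).card = 3 * k + 1 := by
  rw [Finset.filter_ne', Finset.card_erase_of_mem (Finset.mem_univ _), Finset.card_univ]
  simp
  omega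

theorem stmt_7 (k : ℕ) (hk : 1 ≤ k) :
    (Gk k).maxDegree = 2 * k ∧
    (square (Gk k)).IsClique {v | v ≠ Sum.inl 2} ∧
    (Finset.univ.filter
      (fun v : Fin 3 ⊕ Fin k ⊕ Fin k ⊕ Fin (k - 1) => v ≠ Sum.inl 2)).card = 3 * k + 1 ∧
    ((3 * k + 1 : ℕ) : ℕ∞) ≤ (square (Gk k)).chromaticNumber := by
  refine ⟨?_, clique_aux k hk, card_aux k hk, ?_⟩
  · apply le_antisymm
    · apply SimpleGraph.maxDegree_le_of_forall_degree_le
      intro v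
      have := deg_aux k hk v
      rcases v with v | v <;> simp only at this <;> omega
    · have h := (Gk k).degree_le_maxDegree (Sum.inl 0)
      rw [deg_aux k hk] at h
      exact h
  · rw [← card_aux k hk]
    apply SimpleGraph.IsClique.card_le_chromaticNumber
    simpa using clique_aux k hk
end

section
/- For an integer m ≥ 2 define the graph G_m as follows: its vertices are four pairwise disjoint sets V_1, V_2, V_3, V_4 of m vertices each, together with six further vertices x_{ij} for 1 ≤ i < j ≤ 4, and its edges are exactly those joining x_{ij} to every vertex of V_i ∪ V_j. Then G_m has maximum degree exactly 2m, and the 4m vertices of V_1 ∪ V_2 ∪ V_3 ∪ V_4 are pairwise at distance at most 2 in G_m; consequently the square G_m² contains a clique on 4m vertices and χ(G_m²) ≥ 4m = 2·Δ(G_m). -/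
open scoped Classical

/-- The graph `G_m`: four disjoint sets `V_i = {i} × Fin m` of `m` vertices and
six further vertices `x_{ij}` (`i < j`), with `x_{ij}` joined to every vertex of
`V_i ∪ V_j` and no other edges. -/
noncomputable def Gm (m : ℕ) :
    SimpleGraph ((Fin 4 × Fin m) ⊕ {p : Fin 4 × Fin 4 // p.1 < p.2}) :=
  SimpleGraph.fromRel (fun a b =>
    ∃ (i : Fin 4) (x : Fin m) (p : {p : Fin 4 × Fin 4 // p.1 < p.2}),
      a = Sum.inl (i, x) ∧ b = Sum.inr p ∧ (i = p.1.1 ∨ i = p.1.2))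

theorem Gm_adj_lr (m : ℕ) (v : Fin 4 × Fin m) (p : {p : Fin 4 × Fin 4 // p.1 < p.2}) :
    (Gm m).Adj (Sum.inl v) (Sum.inr p) ↔ (v.1 = p.1.1 ∨ v.1 = p.1.2) := by
  obtain ⟨i, x⟩ := v
  rw [Gm, SimpleGraph.fromRel_adj]
  constructor
  · rintro ⟨-, ⟨j, y, q, h1, h2, h3⟩ | ⟨j, y, q, h1, h2, h3⟩⟩
    · cases h1
      cases h2
      exact h3
    · cases h1
  · intro h
    exact ⟨by simp, Or.inl ⟨i, x, p, rfl, rfl, h⟩⟩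

theorem Gm_adj_ll (m : ℕ) (v w : Fin 4 × Fin m) :
    ¬ (Gm m).Adj (Sum.inl v) (Sum.inl w) := by
  simp [Gm]

theorem Gm_adj_rr (m : ℕ) (p q : {p : Fin 4 × Fin 4 // p.1 < p.2}) :
    ¬ (Gm m).Adj (Sum.inr p) (Sum.inr q) := by
  simp [Gm]

theorem Gm_deg_r (m : ℕ) (p : {p : Fin 4 × Fin 4 // p.1 < p.2}) :
    (Gm m).degree (Sum.inr p) = 2 * m := by
  have h : (Gm m).neighborFinset (Sum.inr p) =
      (({p.1.1, p.1.2} : Finset (Fin 4)) ×ˢ (Finset.univ : Finset (Fin m))).map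
        Function.Embedding.inl := by
    ext v
    rcases v with v | q
    · rw [SimpleGraph.mem_neighborFinset, SimpleGraph.adj_comm, Gm_adj_lr]
      simp
    · rw [SimpleGraph.mem_neighborFinset]
      simp [Gm_adj_rr]
  rw [← SimpleGraph.card_neighborFinset_eq_degree, h, Finset.card_map, Finset.card_product,
    Finset.card_pair (ne_of_lt p.2)]
  simp

theorem Gm_deg_l (m : ℕ) (v : Fin 4 × Fin m) :
    (Gm m).degree (Sum.inl v) ≤ 3 := by
  have h : ((Gm m).neighborFinset (Sum.inl v)) ⊆
      ((Finset.univ : Finset (Fin 4)).erase v.1).image (fun j =>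
        if h : v.1 < j then Sum.inr ⟨(v.1, j), h⟩ else
        if h : j < v.1 then Sum.inr ⟨(j, v.1), h⟩ else Sum.inl v) := by
    intro w hw
    rw [SimpleGraph.mem_neighborFinset] at hw
    rcases w with w | ⟨⟨a, b⟩, hab⟩
    · exact absurd hw (Gm_adj_ll m v w)
    · rw [Gm_adj_lr] at hw
      obtain ⟨i, x⟩ := v
      simp only at hw hab
      rw [Finset.mem_image]
      rcases hw with rfl | rfl
      · exact ⟨b, by simp [hab.ne'], by simp [hab]⟩
      · exact ⟨a, by simp [hab.ne], by simp [hab, hab.not_gt]⟩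
  rw [← SimpleGraph.card_neighborFinset_eq_degree]
  refine (Finset.card_le_card h).trans (Finset.card_image_le.trans ?_)
  simp

theorem pair_cover (i j : Fin 4) : ∃ p : {p : Fin 4 × Fin 4 // p.1 < p.2},
    (i = p.1.1 ∨ i = p.1.2) ∧ (j = p.1.1 ∨ j = p.1.2) := by
  rcases lt_trichotomy i j with h | rfl | h
  · exact ⟨⟨(i, j), h⟩, by simp⟩
  · by_cases h0 : i = 0
    · subst h0
      exact ⟨⟨(0, 1), by decide⟩, by simp⟩
    · exact ⟨⟨(0, i), Fin.pos_of_ne_zero h0⟩, by simp⟩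
  · exact ⟨⟨(j, i), h⟩, by simp⟩

theorem Gm_clique (m : ℕ) : (square (Gm m)).IsClique {v | v.isLeft = true} := by
  rintro (v | p) hv (w | q) hw hne
  · obtain ⟨p, h1, h2⟩ := pair_cover v.1 w.1
    rw [square, SimpleGraph.fromRel_adj]
    exact ⟨hne, Or.inl (Or.inr ⟨Sum.inr p, (Gm_adj_lr m v p).2 h1,
      ((Gm_adj_lr m w p).2 h2).symm⟩)⟩
  · simp at hw
  · simp at hv
  · simp at hv

theorem left_card (m : ℕ) : (Finset.univ.filter
      (fun v : (Fin 4 × Fin m) ⊕ {p : Fin 4 × Fin 4 // p.1 < p.2} =>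
        v.isLeft = true)).card = 4 * m := by
  have h : (Finset.univ.filter
      (fun v : (Fin 4 × Fin m) ⊕ {p : Fin 4 × Fin 4 // p.1 < p.2} =>
        v.isLeft = true)) = (Finset.univ : Finset (Fin 4 × Fin m)).map
          Function.Embedding.inl := by
    ext v
    rcases v with v | q <;> simp
  rw [h]
  simp

theorem stmt_8 (m : ℕ) (hm : 2 ≤ m) :
    (Gm m).maxDegree = 2 * m ∧
    (square (Gm m)).IsClique {v | v.isLeft = true} ∧
    (Finset.univ.filter
      (fun v : (Fin 4 × Fin m) ⊕ {p : Fin 4 × Fin 4 // p.1 < p.2} =>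
        v.isLeft = true)).card = 4 * m ∧
    ((4 * m : ℕ) : ℕ∞) ≤ (square (Gm m)).chromaticNumber := by
  refine ⟨le_antisymm ?_ ?_, Gm_clique m, left_card m, ?_⟩
  · apply SimpleGraph.maxDegree_le_of_forall_degree_le
    rintro (v | p)
    · exact (Gm_deg_l m v).trans (by omega)
    · exact (Gm_deg_r m p).le
  · rw [← Gm_deg_r m ⟨(0, 1), by decide⟩]
    exact SimpleGraph.degree_le_maxDegree _ _
  · rw [← left_card m]
    apply SimpleGraph.IsClique.card_le_chromaticNumber
    simpa using Gm_clique m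
end

section
/- Let q ≥ 1 and D ≥ 1 be integers and let G be a finite simple graph with maximum degree at most D that admits an ordering v_1, …, v_n of its vertices in which every v_i has at most q neighbours among v_1, …, v_{i−1}. Then in the square G², every v_i has at most (2q−1)·D neighbours among v_1, …, v_{i−1}. Consequently G² is ((2q−1)D)-degenerate, and for every assignment of finite lists of at least (2q−1)D + 1 colours to the vertices there is a proper colouring of G² choosing each colour from the corresponding list; in particular ch(G²) ≤ (2q−1)D + 1. -/
theorem greedy_aux {V : Type*} [Fintype V] [DecidableEq V] (R : V → V → Prop) [DecidableRel R]
    (hs : ∀ u v, R u v → R v u) (k m : ℕ) (ord : V ≃ Fin m)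
    (h : ∀ v, (Finset.univ.filter (fun u => (u ≠ v ∧ R v u) ∧ ord u < ord v)).card ≤ k)
    (L : V → Finset ℤ) (hL : ∀ v, k + 1 ≤ (L v).card) :
    ∃ c : V → ℤ, (∀ v, c v ∈ L v) ∧ ∀ u v, u ≠ v → R u v → c u ≠ c v := by
  have key : ∀ n : ℕ, ∃ c : V → ℤ, (∀ v, c v ∈ L v) ∧
      ∀ u v, ord u < ord v → (ord v : ℕ) < n → R v u → c u ≠ c v := by
    intro n
    induction n with
    | zero =>
      have hne : ∀ v, ∃ x, x ∈ L v := fun v =>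
        Finset.card_pos.mp (by have := hL v; omega)
      choose c hc using hne
      exact ⟨c, hc, fun u v _ hv => absurd hv (by omega)⟩
    | succ n ih =>
      obtain ⟨c, hc, hp⟩ := ih
      by_cases hn : n < m
      · obtain ⟨x, hx⟩ : ∃ x, x = ord.symm ⟨n, hn⟩ := ⟨_, rfl⟩
        have hxo : (ord x : ℕ) = n := by simp [hx]
        let S := (Finset.univ.filter (fun u => (u ≠ x ∧ R x u) ∧ ord u < ord x)).image c
        have hS : S.card < (L x).card :=
          lt_of_le_of_lt (Finset.card_image_le.trans (h x)) (hL x)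
        obtain ⟨a, haL, haS⟩ := Finset.exists_mem_notMem_of_card_lt_card hS
        refine ⟨Function.update c x a, ?_, ?_⟩
        · intro v
          by_cases hv : v = x
          · subst hv; simpa using haL
          · simpa [hv] using hc v
        · intro u v huv hvn hR
          have hux : u ≠ x := by
            rintro rfl
            have : (ord u : ℕ) < ord v := huv
            omega
          by_cases hv : v = x
          · subst hv
            simp only [Function.update_self, Function.update_of_ne hux]
            intro he
            exact haS (Finset.mem_image.mpr ⟨u, by simp [hux, hR, huv], he⟩)
          · simp only [Function.update_of_ne hux, Function.update_of_ne hv]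
            refine hp u v huv ?_ hR
            have : (ord v : ℕ) ≠ n := by
              intro h1
              exact hv (ord.injective (Fin.ext (h1.trans hxo.symm)))
            omega
      · exact ⟨c, hc, fun u v huv _ hR => hp u v huv (by have := (ord v).2; omega) hR⟩
  obtain ⟨c, hc, hp⟩ := key m
  refine ⟨c, hc, fun u v huv hR => ?_⟩
  rcases lt_or_gt_of_ne (fun e => huv (ord.injective e)) with hlt | hlt
  · exact hp u v hlt (ord v).2 (hs _ _ hR)
  · exact (hp v u hlt (ord u).2 hR).symm


/-- Krumke–Marathe–Ravi: if `G` is `q`-degenerate (witnessed by an ordering)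
and has maximum degree at most `D`, then in `G²` every vertex has at most
`(2q-1)D` earlier neighbours; hence `G²` is `(2q-1)D`-degenerate and is
list-colourable from lists of size `(2q-1)D + 1`. -/
theorem stmt_9 {V : Type*} [Fintype V] [DecidableEq V] (G : SimpleGraph V)
    [DecidableRel G.Adj] (q D : ℕ) (hq : 1 ≤ q) (hD : 1 ≤ D)
    (hmax : ∀ v, G.degree v ≤ D)
    (ord : V ≃ Fin (Fintype.card V))
    (hord : ∀ v, (Finset.univ.filter (fun u => G.Adj v u ∧ ord u < ord v)).card ≤ q) :
    (∀ v, (Finset.univ.filter (fun u =>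
        (u ≠ v ∧ (G.Adj v u ∨ ∃ w, G.Adj v w ∧ G.Adj w u)) ∧ ord u < ord v)).card
        ≤ (2 * q - 1) * D) ∧
    (∀ L : V → Finset ℤ, (∀ v, (2 * q - 1) * D + 1 ≤ (L v).card) →
      ∃ c : V → ℤ, (∀ v, c v ∈ L v) ∧
        ∀ u v, u ≠ v → (G.Adj u v ∨ ∃ w, G.Adj u w ∧ G.Adj w v) → c u ≠ c v) := by
  have h1 : ∀ v, (Finset.univ.filter (fun u =>
        (u ≠ v ∧ (G.Adj v u ∨ ∃ w, G.Adj v w ∧ G.Adj w u)) ∧ ord u < ord v)).card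
        ≤ (2 * q - 1) * D := by
    intro v
    let B := Finset.univ.filter (fun u => G.Adj v u ∧ ord u < ord v)
    let F := Finset.univ.filter (fun u => G.Adj v u ∧ ord v < ord u)
    let f : V → Finset V := fun w => insert w ((G.neighborFinset w).erase v)
    let g : V → Finset V := fun w =>
      (Finset.univ.filter (fun u => G.Adj w u ∧ ord u < ord w)).erase v
    have hsub : Finset.univ.filter (fun u =>
        (u ≠ v ∧ (G.Adj v u ∨ ∃ w, G.Adj v w ∧ G.Adj w u)) ∧ ord u < ord v)
        ⊆ B.biUnion f ∪ F.biUnion g := by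
      intro u hu
      simp only [Finset.mem_filter, Finset.mem_univ, true_and] at hu
      obtain ⟨⟨hne, hadj⟩, hlt⟩ := hu
      rw [Finset.mem_union, Finset.mem_biUnion, Finset.mem_biUnion]
      rcases hadj with ha | ⟨w, hvw, hwu⟩
      · exact Or.inl ⟨u, by simp [B, ha, hlt], by simp [f]⟩
      · rcases lt_trichotomy (ord w) (ord v) with h | h | h
        · exact Or.inl ⟨w, by simp [B, hvw, h], by simp [f, hne, hwu]⟩
        · exact absurd (ord.injective h).symm hvw.ne
        · exact Or.inr ⟨w, by simp [F, hvw, h], by simp [g, hne, hwu, hlt.trans h]⟩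
    have hf : (B.biUnion f).card ≤ B.card * D := by
      apply Finset.card_biUnion_le_card_mul
      intro w hw
      have hw' : G.Adj v w ∧ ord w < ord v := by simpa [B] using hw
      have hm : v ∈ G.neighborFinset w := by simpa using hw'.1.symm
      have e1 := Finset.card_erase_add_one hm
      have e2 := hmax w
      rw [← G.card_neighborFinset_eq_degree] at e2
      exact (Finset.card_insert_le _ _).trans (by omega)
    have hg : (F.biUnion g).card ≤ F.card * (q - 1) := by
      apply Finset.card_biUnion_le_card_mul
      intro w hw
      have hw' : G.Adj v w ∧ ord v < ord w := by simpa [F] using hw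
      have hm : v ∈ Finset.univ.filter (fun u => G.Adj w u ∧ ord u < ord w) := by
        simpa using ⟨hw'.1.symm, hw'.2⟩
      have e1 := Finset.card_erase_add_one hm
      have e2 := hord w
      show (Finset.erase _ v).card ≤ _
      omega
    have hF : F.card ≤ D := by
      refine le_trans (Finset.card_le_card ?_) (hmax v)
      intro u hu
      have hu' : G.Adj v u ∧ ord v < ord u := by simpa [F] using hu
      simpa using hu'.1
    calc _ ≤ _ := Finset.card_le_card hsub
      _ ≤ _ := Finset.card_union_le _ _
      _ ≤ B.card * D + F.card * (q - 1) := Nat.add_le_add hf hg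
      _ ≤ q * D + D * (q - 1) :=
        Nat.add_le_add (Nat.mul_le_mul_right _ (hord v)) (Nat.mul_le_mul_right _ hF)
      _ = (2 * q - 1) * D := by
        obtain ⟨p, rfl⟩ := Nat.exists_eq_add_of_le hq
        have e1 : 2 * (1 + p) - 1 = 2 * p + 1 := by omega
        have e2 : 1 + p - 1 = p := by omega
        rw [e1, e2]; ring
  refine ⟨h1, fun L hL => ?_⟩
  refine greedy_aux (fun u v => G.Adj u v ∨ ∃ w, G.Adj u w ∧ G.Adj w v) ?_ _ _ ord h1 L hL
  rintro u v (h | ⟨w, h, h'⟩)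
  · exact Or.inl h.symm
  · exact Or.inr ⟨w, h'.symm, h.symm⟩
end
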